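/- arXiv:math/0604124 — 2 statements merged into one kernel-verified Lean document; each statement's English description precedes it below -/
import Mathlib

section
/- Fix an integer d ≥ 1 and δ ∈ (0,1). Let a^{jk} : ℝ → ℝ (1 ≤ j,k ≤ d) be measurable functions of x¹ only, with a^{jk} = a^{kj} and δ|θ|² ≤ Σ_{j,k=1}^d a^{jk}(x¹) θ^j θ^k ≤ δ⁻¹|θ|² for all x¹ and θ ∈ ℝ^d. Set L₀u = u_t + Σ_{j,k} a^{jk}(x¹) u_{x^j x^k}. Let 0 < r < R, let γ = (γ¹,…,γ^d) be a multi-index with γ¹ ∈ {0,1,2}, and let m be a nonnegative integer. If h is smooth on Q_R, h ∈ L²(Q_R), and L₀h = 0 in Q_R, then ∫_{Q_r} |D_t^m D_x^γ h|² dx dt ≤ N ∫_{Q_R} |h|² dx dt, where N = N(d,δ,γ,m,R,r) and D_t^m D_x^γ h = ∂_t^m ∂_{x¹}^{γ¹} ⋯ ∂_{x^d}^{γ^d} h. -/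
open MeasureTheory

/-- Partial derivative in `t`, as an operator. -/
noncomputable def pdt {d : ℕ} (u : ℝ × (Fin d → ℝ) → ℝ) : ℝ × (Fin d → ℝ) → ℝ :=
  fun p => fderiv ℝ u p (1, 0)

/-- Partial derivative in `x^j`, as an operator. -/
noncomputable def pdx {d : ℕ} (j : Fin d) (u : ℝ × (Fin d → ℝ) → ℝ) :
    ℝ × (Fin d → ℝ) → ℝ :=
  fun p => fderiv ℝ u p (0, Pi.single j 1)

/-- Second partial derivative in `x^j, x^k`. -/
noncomputable def pdxx {d : ℕ} (j k : Fin d) (u : ℝ × (Fin d → ℝ) → ℝ) :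
    ℝ × (Fin d → ℝ) → ℝ :=
  pdx j (pdx k u)

/-- The mixed spatial derivative `D_x^γ = ∂_{x¹}^{γ¹} ⋯ ∂_{x^d}^{γ^d}`. -/
noncomputable def pdxMulti {d : ℕ} (γ : Fin d → ℕ) (u : ℝ × (Fin d → ℝ) → ℝ) :
    ℝ × (Fin d → ℝ) → ℝ :=
  Fin.foldr d (fun j v => (pdx j)^[γ j] v) u

/-- Open Euclidean ball `B_r ⊂ ℝ^d` centered at the origin. -/
def ballE (d : ℕ) (r : ℝ) : Set (Fin d → ℝ) := {x | ∑ j, (x j) ^ 2 < r ^ 2}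

/-- Parabolic cylinder `Q_r = (0,r²) × B_r`. -/
def Qc (d : ℕ) (r : ℝ) : Set (ℝ × (Fin d → ℝ)) := Set.Ioo 0 (r ^ 2) ×ˢ ballE d r

/-!
Divide the equation by `a¹¹` so that the coefficient of `u_{11}` is one. Since the coefficients
depend only on `x¹`, derivatives of a solution in `t` and in the tangential variables are again
solutions, and every term `a^{jk} u_{jk}` can be integrated by parts without differentiating a
coefficient. Caccioppoli's inequality thus bounds the gradient of a solution, and, applied to
tangential derivatives, all second derivatives except `u_{11}`. Testing the equation with `η² u_t`
then bounds `u_t`, and the equation itself gives `u_{11}`. All derivatives in `t` and `x'` follow by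
iterating these estimates on nested cylinders, and up to two derivatives in `x¹` come last.
-/

open Set Filter Topology
open scoped ContDiff

section DirectionalDerivative

variable {E : Type*} [NormedAddCommGroup E] [NormedSpace ℝ E]

/-- The derivative of `f` in the direction `v`, as an operator on functions. By definition
`pdt = dirDeriv (1, 0)` and `pdx j = dirDeriv (0, Pi.single j 1)`. -/
noncomputable def dirDeriv (v : E) (f : E → ℝ) : E → ℝ :=
  fun p => fderiv ℝ f p v

variable {U : Set E} {f g : E → ℝ} {p : E}

lemma differentiableAt_of_contDiffOn (hU : IsOpen U) (hf : ContDiffOn ℝ ∞ f U) (hp : p ∈ U) :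
    DifferentiableAt ℝ f p :=
  (hf.contDiffAt (hU.mem_nhds hp)).differentiableAt (by simp)

lemma contDiffOn_dirDeriv (hU : IsOpen U) (hf : ContDiffOn ℝ ∞ f U) (v : E) :
    ContDiffOn ℝ ∞ (dirDeriv v f) U :=
  (hf.fderiv_of_isOpen hU (by simp)).clm_apply contDiffOn_const

lemma dirDeriv_eqOn (hU : IsOpen U) (h : EqOn f g U) (v : E) :
    EqOn (dirDeriv v f) (dirDeriv v g) U := fun p hp => by
  simp only [dirDeriv, (h.eventuallyEq_of_mem (hU.mem_nhds hp)).fderiv_eq]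

lemma dirDeriv_comm_eqOn (hU : IsOpen U) (hf : ContDiffOn ℝ ∞ f U) (v w : E) :
    EqOn (dirDeriv v (dirDeriv w f)) (dirDeriv w (dirDeriv v f)) U := by
  intro p hp
  have hsymm : IsSymmSndFDerivAt ℝ f p :=
    (hf.contDiffAt (hU.mem_nhds hp)).isSymmSndFDerivAt <| by
      rw [minSmoothness_of_isRCLikeNormedField]
      exact WithTop.coe_le_coe.2 le_top
  have hdiff : DifferentiableAt ℝ (fderiv ℝ f) p :=
    ((hf.fderiv_of_isOpen hU (m := ∞) (by simp)).contDiffAt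
      (hU.mem_nhds hp)).differentiableAt (by simp)
  have second_deriv (v w : E) :
      dirDeriv v (dirDeriv w f) p = fderiv ℝ (fderiv ℝ f) p v w := by
    change fderiv ℝ (fun q => fderiv ℝ f q w) p v = _
    rw [fderiv_clm_apply hdiff (differentiableAt_const w)]
    simp
  rw [second_deriv, second_deriv, hsymm.eq]

lemma iterate_dirDeriv_eqOn (hU : IsOpen U) (h : EqOn f g U) (v : E) (n : ℕ) :
    EqOn ((dirDeriv v)^[n] f) ((dirDeriv v)^[n] g) U := by
  induction n generalizing f g with
  | zero => exact h
  | succ _ ih => exact ih (dirDeriv_eqOn hU h v)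

lemma iterate_dirDeriv_dirDeriv_comm_eqOn (hU : IsOpen U) (hf : ContDiffOn ℝ ∞ f U) (v w : E)
    (n : ℕ) :
    EqOn ((dirDeriv v)^[n] (dirDeriv w f)) (dirDeriv w ((dirDeriv v)^[n] f)) U := by
  induction n generalizing f with
  | zero => exact eqOn_refl _ _
  | succ n ih =>
    exact (iterate_dirDeriv_eqOn hU (dirDeriv_comm_eqOn hU hf v w) v n).trans
      (ih (contDiffOn_dirDeriv hU hf v))

lemma iterate_dirDeriv_comm_eqOn (hU : IsOpen U) (hf : ContDiffOn ℝ ∞ f U) (v w : E)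
    (m n : ℕ) :
    EqOn ((dirDeriv v)^[m] ((dirDeriv w)^[n] f)) ((dirDeriv w)^[n] ((dirDeriv v)^[m] f)) U := by
  induction n generalizing f with
  | zero => exact eqOn_refl _ _
  | succ n ih =>
    exact (ih (contDiffOn_dirDeriv hU hf w)).trans
      (iterate_dirDeriv_eqOn hU (iterate_dirDeriv_dirDeriv_comm_eqOn hU hf v w m) w n)

lemma dirDeriv_mul (hf : DifferentiableAt ℝ f p) (hg : DifferentiableAt ℝ g p) (v : E) :
    dirDeriv v (fun q => f q * g q) p = dirDeriv v f p * g p + f p * dirDeriv v g p := by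
  simp only [dirDeriv, fderiv_fun_mul hf hg, add_apply, smul_apply, smul_eq_mul]
  ring

lemma dirDeriv_sq_mul {η : E → ℝ} (hη : DifferentiableAt ℝ η p) (hf : DifferentiableAt ℝ f p)
    (v : E) :
    dirDeriv v (fun q => η q ^ 2 * f q) p =
      2 * η p * dirDeriv v η p * f p + η p ^ 2 * dirDeriv v f p := by
  simp only [pow_two]
  rw [dirDeriv_mul (hη.fun_mul hη) hf, dirDeriv_mul hη hη]
  ring

lemma contDiff_mul_of_tsupport_subset {η : E → ℝ} (hU : IsOpen U) (hη : ContDiff ℝ ∞ η)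
    (hηU : tsupport η ⊆ U) (hf : ContDiffOn ℝ ∞ f U) : ContDiff ℝ ∞ (fun p => η p * f p) := by
  refine contDiff_iff_contDiffAt.2 fun p => ?_
  by_cases hp : p ∈ tsupport η
  · exact hη.contDiffAt.mul (hf.contDiffAt (hU.mem_nhds (hηU hp)))
  · have vanishes : (fun q => η q * f q) =ᶠ[𝓝 p] fun _ => 0 := by
      filter_upwards [notMem_tsupport_iff_eventuallyEq.1 hp] with q hq
      simp [hq]
    exact contDiffAt_const.congr_of_eventuallyEq vanishes

end DirectionalDerivative

section IntegrationByParts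

/-- `f` is integrable with vanishing integral. Divergence terms of integrations by parts have this
property, and unlike the bare equation `∫ f = 0` it is stable under sums. -/
def HasZeroIntegral {X : Type*} [MeasurableSpace X] (f : X → ℝ) (μ : Measure X) : Prop :=
  Integrable f μ ∧ ∫ x, f x ∂μ = 0

namespace HasZeroIntegral

variable {X : Type*} [MeasurableSpace X] {μ : Measure X} {f g : X → ℝ}

lemma add (hf : HasZeroIntegral f μ) (hg : HasZeroIntegral g μ) :
    HasZeroIntegral (fun x => f x + g x) μ :=
  ⟨hf.1.add hg.1, by rw [integral_add hf.1 hg.1, hf.2, hg.2, add_zero]⟩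

lemma sub (hf : HasZeroIntegral f μ) (hg : HasZeroIntegral g μ) :
    HasZeroIntegral (fun x => f x - g x) μ :=
  ⟨hf.1.sub hg.1, by rw [integral_sub hf.1 hg.1, hf.2, hg.2, sub_zero]⟩

lemma const_mul (hf : HasZeroIntegral f μ) (a : ℝ) : HasZeroIntegral (fun x => a * f x) μ :=
  ⟨hf.1.const_mul a, by rw [integral_const_mul, hf.2, mul_zero]⟩

lemma sum {ι : Type*} {s : Finset ι} {f : ι → X → ℝ}
    (hf : ∀ i ∈ s, HasZeroIntegral (f i) μ) : HasZeroIntegral (fun x => ∑ i ∈ s, f i x) μ :=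
  ⟨integrable_finsetSum _ fun i hi => (hf i hi).1, by
    rw [integral_finsetSum _ fun i hi => (hf i hi).1]
    exact Finset.sum_eq_zero fun i hi => (hf i hi).2⟩

lemma congr_ae (hf : HasZeroIntegral f μ) (h : f =ᵐ[μ] g) : HasZeroIntegral g μ :=
  ⟨hf.1.congr h, by rw [← integral_congr_ae h, hf.2]⟩

lemma restrict {s : Set X} (hf : HasZeroIntegral f μ) (hs : ∀ x ∉ s, f x = 0) :
    HasZeroIntegral f (μ.restrict s) :=
  ⟨hf.1.restrict, by rw [setIntegral_eq_integral_of_forall_compl_eq_zero hs, hf.2]⟩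

lemma integral_le_of_mul_le_add (hf : HasZeroIntegral f μ) {h : X → ℝ} (hg : Integrable g μ)
    (hh : 0 ≤ h) {A K : ℝ} (hA : 0 < A) (hle : ∀ᵐ x ∂μ, A * h x ≤ f x + K * g x) :
    ∫ x, h x ∂μ ≤ K / A * ∫ x, g x ∂μ := by
  have mul_integral_le : A * ∫ x, h x ∂μ ≤ K * ∫ x, g x ∂μ := calc
    A * ∫ x, h x ∂μ = ∫ x, A * h x ∂μ := (integral_const_mul A h).symm
    _ ≤ ∫ x, (f x + K * g x) ∂μ :=
      integral_mono_of_nonneg (Eventually.of_forall fun x => mul_nonneg hA.le (hh x))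
        (hf.1.add (hg.const_mul K)) hle
    _ = K * ∫ x, g x ∂μ := by
      rw [integral_add hf.1 (hg.const_mul K), hf.2, zero_add, integral_const_mul]
  rwa [div_mul_eq_mul_div, le_div_iff₀' hA]

end HasZeroIntegral

variable {E : Type*} [NormedAddCommGroup E] [NormedSpace ℝ E] [FiniteDimensional ℝ E]
  [MeasurableSpace E] [BorelSpace E] {μ : Measure E} [μ.IsAddHaarMeasure]
  {c f g η : E → ℝ} {v : E} {B : ℝ} {U : Set E}

lemma hasZeroIntegral_mul_dirDeriv (hc : Measurable c) (hB : ∀ p, |c p| ≤ B)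
    (hcv : ∀ p (t : ℝ), c (p + t • v) = c p) (hf : ContDiff ℝ 1 f) (hfs : HasCompactSupport f) :
    HasZeroIntegral (fun p => c p * dirDeriv v f p) μ := by
  have hf' : Integrable (dirDeriv v f) μ :=
    ((hf.continuous_fderiv (by simp)).clm_apply continuous_const).integrable_of_hasCompactSupport
      (hfs.fderiv_apply ℝ v)
  have hcf : Integrable (fun p => c p * f p) μ :=
    (hf.continuous.integrable_of_hasCompactSupport hfs).bdd_mul hc.aestronglyMeasurable
      (Eventually.of_forall hB)
  have hcf' : Integrable (fun p => c p * dirDeriv v f p) μ :=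
    hf'.bdd_mul hc.aestronglyMeasurable (Eventually.of_forall hB)
  have by_parts := integral_bilinear_hasLineDerivAt_right_eq_neg_left_of_integrable (μ := μ)
    (f := c) (f' := 0) (g := f) (g' := dirDeriv v f) (v := v) (B := ContinuousLinearMap.mul ℝ ℝ)
    (by simp) (by simpa using hcf') (by simpa using hcf)
    (fun p _ => by
      simpa only [HasLineDerivAt, hcv, Pi.zero_apply] using hasDerivAt_const (0 : ℝ) (c p))
    (fun p _ => (hf.differentiable (by simp) p).hasFDerivAt.hasLineDerivAt v)
  exact ⟨hcf', by simpa using by_parts⟩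

lemma hasZeroIntegral_mul_dirDeriv_cutoff (hU : IsOpen U) (hη : ContDiff ℝ ∞ η)
    (hηs : HasCompactSupport η) (hηU : tsupport η ⊆ U) (hc : Measurable c) (hB : ∀ p, |c p| ≤ B)
    (hcv : ∀ p (t : ℝ), c (p + t • v) = c p) (hf : ContDiffOn ℝ ∞ f U)
    (hg : ContDiffOn ℝ ∞ g U) :
    HasZeroIntegral (fun p => c p * (2 * η p * dirDeriv v η p * (f p * g p) +
      η p ^ 2 * (dirDeriv v f p * g p + f p * dirDeriv v g p))) (μ.restrict U) := by
  have hFU : ContDiffOn ℝ ∞ (fun p => η p * (f p * g p)) U := hη.contDiffOn.mul (hf.mul hg)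
  have hF : ContDiff ℝ ∞ (fun p => η p * (η p * (f p * g p))) :=
    contDiff_mul_of_tsupport_subset hU hη hηU hFU
  have zero_integral := hasZeroIntegral_mul_dirDeriv (μ := μ) hc hB hcv
    (hF.of_le (by exact_mod_cast le_top)) hηs.mul_right
  refine (zero_integral.restrict fun p hp => ?_).congr_ae ?_
  · have hp' : p ∉ tsupport (fun q => η q * (η q * (f q * g q))) :=
      fun h => hp (hηU (tsupport_mul_subset_left h))
    simp [dirDeriv, (notMem_tsupport_iff_eventuallyEq.1 hp').fderiv_eq]
  · filter_upwards [ae_restrict_mem hU.measurableSet] with p hp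
    have hfp := differentiableAt_of_contDiffOn hU hf hp
    have hgp := differentiableAt_of_contDiffOn hU hg hp
    have sq_form : (fun q => η q * (η q * (f q * g q))) = fun q => η q ^ 2 * (f q * g q) := by
      ext q; ring
    rw [sq_form, dirDeriv_sq_mul (hη.differentiable (by simp) p) (hfp.fun_mul hgp),
      dirDeriv_mul hfp hgp]

end IntegrationByParts

section Cutoffs

lemma exists_contDiff_cutoff_of_isCompact {E : Type*} [NormedAddCommGroup E] [NormedSpace ℝ E]
    [FiniteDimensional ℝ E] {K U : Set E} (hK : IsCompact K) (hU : IsOpen U) (hKU : K ⊆ U) :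
    ∃ η : E → ℝ, ContDiff ℝ ∞ η ∧ HasCompactSupport η ∧ tsupport η ⊆ U ∧
      (∀ p, η p ∈ Icc 0 1) ∧ ∀ p ∈ K, η p = 1 := by
  obtain ⟨L, hL, hKL, hLU⟩ := exists_compact_between hK hU hKU
  obtain ⟨η, hη, hη01, hηsupp, hη1⟩ := exists_contMDiff_support_eq_eq_one_iff
    (modelWithCornersSelf ℝ E) (n := ⊤) isOpen_interior hK.isClosed hKL
  have hηL : tsupport η ⊆ L := by
    rw [tsupport, hηsupp]
    exact hL.isClosed.closure_interior_subset
  exact ⟨η, hη.contDiff, hL.of_isClosed_subset (isClosed_tsupport η) hηL, hηL.trans hLU,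
    fun p => hη01 (mem_range_self p), fun p hp => (hη1 p).1 hp⟩

lemma exists_abs_dirDeriv_le {E : Type*} [NormedAddCommGroup E] [NormedSpace ℝ E] {η : E → ℝ}
    (hη : ContDiff ℝ ∞ η) (hηs : HasCompactSupport η) :
    ∃ C, ∀ p v, ‖v‖ ≤ 1 → |dirDeriv v η p| ≤ C := by
  obtain ⟨C, hC⟩ := (hηs.fderiv (𝕜 := ℝ)).exists_bound_of_continuous
    (hη.continuous_fderiv (by simp))
  exact ⟨C, fun p v hv => ((fderiv ℝ η p).le_of_opNorm_le_of_le (hC p) hv).trans_eq (mul_one C)⟩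

lemma exists_contDiff_monotone_switch {ε : ℝ} (hε : 0 < ε) :
    ∃ α : ℝ → ℝ, ContDiff ℝ ∞ α ∧ Monotone α ∧ (∀ t, α t ∈ Icc 0 1) ∧
      (∀ t, α t ≠ 0 → ε / 2 ≤ t) ∧ ∀ t, ε ≤ t → α t = 1 := by
  refine ⟨fun t => Real.smoothTransition (2 * t / ε - 1),
    Real.smoothTransition.contDiff.comp (by fun_prop),
    Real.smoothTransition.monotone.comp fun s t hst => by gcongr,
    fun t => ⟨Real.smoothTransition.nonneg _, Real.smoothTransition.le_one _⟩,
    fun t ht => ?_, fun t ht => Real.smoothTransition.one_of_one_le ?_⟩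
  · rw [Ne, Real.smoothTransition.zero_iff_nonpos, not_le, sub_pos, lt_div_iff₀ hε] at ht
    linarith
  · rw [le_sub_iff_add_le, le_div_iff₀ hε]
    linarith

lemma dirDeriv_comp_fst_mul {F : Type*} [NormedAddCommGroup F] [NormedSpace ℝ F] {α : ℝ → ℝ}
    {η : ℝ × F → ℝ} {p : ℝ × F} (hα : DifferentiableAt ℝ α p.1) (hη : DifferentiableAt ℝ η p)
    (v : ℝ × F) :
    dirDeriv v (fun q => α q.1 * η q) p =
      deriv α p.1 * v.1 * η p + α p.1 * dirDeriv v η p := by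
  have hαp : HasFDerivAt (fun q : ℝ × F => α q.1) (deriv α p.1 • ContinuousLinearMap.fst ℝ ℝ F) p :=
    hα.hasDerivAt.comp_hasFDerivAt p hasFDerivAt_fst
  rw [dirDeriv_mul hαp.differentiableAt hη]
  simp [dirDeriv, hαp.fderiv]

variable {d : ℕ} {r s : ℝ}

lemma mem_ballE {x : Fin d → ℝ} : x ∈ ballE d r ↔ ∑ j, x j ^ 2 < r ^ 2 :=
  Iff.rfl

lemma isOpen_ballE : IsOpen (ballE d r) :=
  isOpen_lt (by fun_prop) continuous_const

lemma isOpen_Qc : IsOpen (Qc d r) :=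
  isOpen_Ioo.prod isOpen_ballE

lemma measurableSet_Qc : MeasurableSet (Qc d r) :=
  isOpen_Qc.measurableSet

lemma Qc_subset_Qc (hr : 0 < r) (hrs : r ≤ s) : Qc d r ⊆ Qc d s := by
  have hsq : r ^ 2 ≤ s ^ 2 := by gcongr
  exact prod_mono (Ioo_subset_Ioo_right hsq) fun x hx => (mem_ballE.1 hx).trans_le hsq

lemma isCompact_sum_sq_le (d : ℕ) (s : ℝ) : IsCompact {x : Fin d → ℝ | ∑ j, x j ^ 2 ≤ s} := by
  refine Metric.isCompact_of_isClosed_isBounded (isClosed_le (by fun_prop) continuous_const) ?_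
  refine isBounded_iff_forall_norm_le.2 ⟨√s, fun x hx => ?_⟩
  refine (pi_norm_le_iff_of_nonneg (Real.sqrt_nonneg s)).2 fun j => Real.abs_le_sqrt ?_
  exact (Finset.single_le_sum (f := fun j => x j ^ 2) (fun i _ => sq_nonneg _)
    (Finset.mem_univ j)).trans hx

/-- `η` is a cutoff function for `Q_ρ ⊂ Q_ρ'`, equal to one on the part of `Q_ρ` above time `ε`.
The two cylinders share their bottom `t = 0`, so `∂ₜη` is unbounded as `ε → 0`; only the one-sided
bound on `η ∂ₜη = ∂ₜ(η²)/2` survives with a constant `C` independent of `ε`. -/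
structure IsCutoff (d : ℕ) (ρ ρ' C ε : ℝ) (η : ℝ × (Fin d → ℝ) → ℝ) : Prop where
  contDiff : ContDiff ℝ ∞ η
  hasCompactSupport : HasCompactSupport η
  tsupport_subset : tsupport η ⊆ Qc d ρ'
  mem_Icc : ∀ p, η p ∈ Icc 0 1
  eq_one : ∀ p ∈ Qc d ρ, ε < p.1 → η p = 1
  neg_le_mul_pdt : ∀ p, -C ≤ η p * pdt η p
  abs_pdx_le : ∀ j p, |pdx j η p| ≤ C

lemma exists_lateral_cutoff (d : ℕ) {ρ ρ' : ℝ} (hρ : 0 < ρ) (hρ' : ρ < ρ') :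
    ∃ η : ℝ × (Fin d → ℝ) → ℝ, ContDiff ℝ ∞ η ∧ HasCompactSupport η ∧
      tsupport η ⊆ Ioo (-1) (ρ' ^ 2) ×ˢ ballE d ρ' ∧ (∀ p, η p ∈ Icc 0 1) ∧
      ∀ p ∈ Qc d ρ, η p = 1 := by
  have hsq : ρ ^ 2 < ρ' ^ 2 := by gcongr
  obtain ⟨η, hη, hηs, hηU, hη01, hη1⟩ := exists_contDiff_cutoff_of_isCompact
    ((isCompact_Icc (a := 0) (b := ρ ^ 2)).prod (isCompact_sum_sq_le d (ρ ^ 2)))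
    ((isOpen_Ioo (a := -1) (b := ρ' ^ 2)).prod (isOpen_ballE (d := d) (r := ρ')))
    (prod_mono (Icc_subset_Ioo (by norm_num) hsq) fun x (hx : _ ≤ _) => hx.trans_lt hsq)
  exact ⟨η, hη, hηs, hηU, hη01, fun p hp =>
    hη1 p ⟨Ioo_subset_Icc_self hp.1, (mem_ballE.1 hp.2).le⟩⟩

lemma exists_isCutoff (d : ℕ) {ρ ρ' : ℝ} (hρ : 0 < ρ) (hρ' : ρ < ρ') :
    ∃ C, 0 ≤ C ∧ ∀ ε, 0 < ε → ∃ η, IsCutoff d ρ ρ' C ε η := by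
  obtain ⟨η, hη, hηs, hηU, hη01, hη1⟩ := exists_lateral_cutoff d hρ hρ'
  obtain ⟨C, hC⟩ := exists_abs_dirDeriv_le hη hηs
  have hC0 : 0 ≤ C := (abs_nonneg _).trans (hC 0 0 (by simp))
  refine ⟨C, hC0, fun ε hε => ?_⟩
  obtain ⟨α, hα, hαmono, hα01, hα0, hα1⟩ := exists_contDiff_monotone_switch hε
  have product_rule (p v) := dirDeriv_comp_fst_mul (hα.differentiable (by simp) p.1)
    (hη.differentiable (by simp) p) v
  refine ⟨fun p => α p.1 * η p,
    { contDiff := (hα.comp contDiff_fst).mul hη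
      hasCompactSupport := hηs.mul_left
      tsupport_subset := fun p hp => ?_
      mem_Icc := fun p => unitInterval.mul_mem (hα01 p.1) (hη01 p)
      eq_one := fun p hp hεp => by rw [hα1 _ hεp.le, hη1 p hp, mul_one]
      neg_le_mul_pdt := fun p => ?_
      abs_pdx_le := fun j p => ?_ }⟩
  · have hpε : ε / 2 ≤ p.1 :=
      closure_minimal (fun q hq => hα0 q.1 (left_ne_zero_of_mul hq))
        (isClosed_le continuous_const continuous_fst) hp
    have hpU := hηU (tsupport_mul_subset_right hp)
    exact ⟨⟨by linarith, hpU.1.2⟩, hpU.2⟩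
  · change _ ≤ _ * dirDeriv (1, 0) _ p
    have hαp := hα01 p.1
    have hηp := hη01 p
    have hCp := abs_le.1 (hC p (1, 0) (by simp [Prod.norm_def]))
    have switch_term : 0 ≤ α p.1 * η p * (deriv α p.1 * 1 * η p) :=
      mul_nonneg (mul_nonneg hαp.1 hηp.1)
        (mul_nonneg (mul_nonneg hαmono.deriv_nonneg zero_le_one) hηp.1)
    have weight := unitInterval.mul_mem (unitInterval.mul_mem hαp hηp) hαp
    rw [product_rule]
    nlinarith [weight.1, weight.2]
  · change |dirDeriv (0, Pi.single j 1) _ p| ≤ C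
    have hCp := hC p (0, Pi.single j 1) (by simp [Prod.norm_def, Pi.norm_single])
    rw [product_rule, mul_zero, zero_mul, zero_add, abs_mul, abs_of_nonneg (hα01 p.1).1]
    exact (mul_le_of_le_one_left (abs_nonneg _) (hα01 p.1).2).trans hCp

lemma integrableOn_and_setIntegral_le_of_forall_lt {X : Type*} [MeasurableSpace X] {μ : Measure X}
    {S : Set X} (hS : MeasurableSet S) {τ : X → ℝ} (hτ : Measurable τ) (hτS : ∀ x ∈ S, 0 < τ x)
    {f : X → ℝ} (hf : 0 ≤ f) {M : ℝ}
    (h : ∀ ε, 0 < ε → IntegrableOn f ({x | ε < τ x} ∩ S) μ ∧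
      ∫ x in {x | ε < τ x} ∩ S, f x ∂μ ≤ M) :
    IntegrableOn f S μ ∧ ∫ x in S, f x ∂μ ≤ M := by
  have measurable_level (n : ℕ) : MeasurableSet {x | 1 / ((n : ℝ) + 1) < τ x} :=
    measurableSet_lt measurable_const hτ
  have cover : AECover (μ.restrict S) atTop fun n : ℕ => {x | 1 / ((n : ℝ) + 1) < τ x} := by
    refine ⟨?_, measurable_level⟩
    filter_upwards [ae_restrict_mem hS] with x hx
    exact tendsto_one_div_add_atTop_nhds_zero_nat.eventually (gt_mem_nhds (hτS x hx))
  have on_level (n : ℕ) := h (1 / ((n : ℝ) + 1)) (by positivity)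
  simp only [IntegrableOn, ← Measure.restrict_restrict (measurable_level _)] at on_level
  have integrable : IntegrableOn f S μ :=
    cover.integrable_of_integral_bounded_of_nonneg_ae M (fun n => (on_level n).1)
      (Eventually.of_forall hf) (Eventually.of_forall fun n => (on_level n).2)
  exact ⟨integrable, le_of_tendsto' (cover.integral_tendsto_of_countably_generated integrable)
    fun n => (on_level n).2⟩

variable {ρ ρ' C ε : ℝ} {f g η : ℝ × (Fin d → ℝ) → ℝ}

lemma IsCutoff.integrable_sq_mul (hη : IsCutoff d ρ ρ' C ε η) (hf : ContinuousOn f (Qc d ρ')) :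
    Integrable (fun p => η p ^ 2 * f p) := by
  simp only [pow_two, mul_assoc]
  refine Continuous.integrable_of_hasCompactSupport (continuous_of_tsupport fun p hp => ?_)
    hη.hasCompactSupport.mul_right
  have hp' := hη.tsupport_subset (tsupport_mul_subset_left hp)
  exact hη.contDiff.continuous.continuousAt.mul
    (hη.contDiff.continuous.continuousAt.mul (hf.continuousAt (isOpen_Qc.mem_nhds hp')))

lemma IsCutoff.integrableOn_and_setIntegral_le (hρ : 0 < ρ) (hρ' : ρ < ρ')
    (hη : IsCutoff d ρ ρ' C ε η) (hf : ContinuousOn f (Qc d ρ')) (hf0 : 0 ≤ f) :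
    IntegrableOn f ({p | ε < p.1} ∩ Qc d ρ) ∧
      ∫ p in {p | ε < p.1} ∩ Qc d ρ, f p ≤ ∫ p in Qc d ρ', η p ^ 2 * f p := by
  have hmeas : MeasurableSet ({p | ε < p.1} ∩ Qc d ρ) :=
    (measurableSet_lt measurable_const measurable_fst).inter measurableSet_Qc
  have heq : EqOn (fun p => η p ^ 2 * f p) f ({p | ε < p.1} ∩ Qc d ρ) := fun p hp => by
    simp [hη.eq_one p hp.2 hp.1]
  have hint := hη.integrable_sq_mul hf
  refine ⟨hint.integrableOn.congr_fun heq hmeas, ?_⟩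
  rw [← setIntegral_congr_fun hmeas heq]
  exact setIntegral_mono_set hint.integrableOn
    (Eventually.of_forall fun p => mul_nonneg (sq_nonneg _) (hf0 p))
    (inter_subset_right.trans (Qc_subset_Qc hρ hρ'.le)).eventuallyLE

lemma integrableOn_and_integral_le_of_cutoff_estimate (hρ : 0 < ρ) (hρ' : ρ < ρ')
    (hC : ∀ ε, 0 < ε → ∃ η, IsCutoff d ρ ρ' C ε η) {A K : ℝ} (hA : 0 < A)
    (hf : ContinuousOn f (Qc d ρ')) (hf0 : 0 ≤ f) (hg : IntegrableOn g (Qc d ρ'))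
    (h : ∀ ε η, IsCutoff d ρ ρ' C ε η → ∃ T, HasZeroIntegral T (volume.restrict (Qc d ρ')) ∧
      ∀ p ∈ Qc d ρ', A * (η p ^ 2 * f p) ≤ T p + K * g p) :
    IntegrableOn f (Qc d ρ) ∧ ∫ p in Qc d ρ, f p ≤ K / A * ∫ p in Qc d ρ', g p := by
  refine integrableOn_and_setIntegral_le_of_forall_lt measurableSet_Qc measurable_fst
    (fun p hp => hp.1.1) hf0 fun ε hε => ?_
  obtain ⟨η, hη⟩ := hC ε hε
  obtain ⟨T, hT, hle⟩ := h ε η hη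
  obtain ⟨hint, hcut⟩ := hη.integrableOn_and_setIntegral_le hρ hρ' hf hf0
  refine ⟨hint, hcut.trans (hT.integral_le_of_mul_le_add hg
    (fun p => mul_nonneg (sq_nonneg _) (hf0 p)) hA ?_)⟩
  filter_upwards [ae_restrict_mem measurableSet_Qc] with p hp using hle p hp

end Cutoffs

section NormalizedEquation

/-- Real-valued functions of `(t, x) ∈ ℝ × ℝ^d`. -/
abbrev ScalarField (d : ℕ) : Type := ℝ × (Fin d → ℝ) → ℝ

/-- Coefficients of the equation `w u_t + ∑ c_{jk} u_{jk} = 0` obtained after dividing by the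
coefficient of `u_{oo}`; they are functions of the single variable `x^o`. All quantitative bounds
are expressed by one constant `κ`. -/
structure NormalizedCoeffs {d : ℕ} (o : Fin d) (κ : ℝ) (w : ℝ → ℝ)
    (c : ℝ → Fin d → Fin d → ℝ) : Prop where
  measurable_weight : Measurable w
  measurable_coeff : ∀ j k, Measurable fun s => c s j k
  coeff_self : ∀ s, c s o o = 1
  le_weight : ∀ s, κ ≤ w s
  weight_le : ∀ s, w s ≤ κ⁻¹
  abs_coeff_le : ∀ s j k, |c s j k| ≤ κ⁻¹
  elliptic : ∀ s (θ : Fin d → ℝ), κ * ∑ j, θ j ^ 2 ≤ ∑ j, ∑ k, c s j k * θ j * θ k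

/-- `u` is a smooth solution on `U` of `w u_t + ∑ c_{jk} u_{jk} = 0`, where `w` and `c` are
evaluated at the coordinate `x^o`. -/
structure IsSolution {d : ℕ} (o : Fin d) (w : ℝ → ℝ) (c : ℝ → Fin d → Fin d → ℝ)
    (U : Set (ℝ × (Fin d → ℝ))) (u : ScalarField d) : Prop where
  contDiffOn : ContDiffOn ℝ ∞ u U
  equation : ∀ p ∈ U,
    w (p.2 o) * pdt u p + ∑ j, ∑ k, c (p.2 o) j k * pdxx j k u p = 0

variable {d : ℕ} {o : Fin d} {κ : ℝ} {w : ℝ → ℝ} {c : ℝ → Fin d → Fin d → ℝ}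
  {U V : Set (ℝ × (Fin d → ℝ))} {u : ScalarField d}

lemma contDiffOn_pdt (hU : IsOpen U) (hu : ContDiffOn ℝ ∞ u U) : ContDiffOn ℝ ∞ (pdt u) U :=
  contDiffOn_dirDeriv hU hu _

lemma contDiffOn_pdx (hU : IsOpen U) (hu : ContDiffOn ℝ ∞ u U) (j : Fin d) :
    ContDiffOn ℝ ∞ (pdx j u) U :=
  contDiffOn_dirDeriv hU hu _

lemma contDiffOn_pdxx (hU : IsOpen U) (hu : ContDiffOn ℝ ∞ u U) (j k : Fin d) :
    ContDiffOn ℝ ∞ (pdxx j k u) U :=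
  contDiffOn_pdx hU (contDiffOn_pdx hU hu k) j

lemma pdxx_comm_eqOn (hU : IsOpen U) (hu : ContDiffOn ℝ ∞ u U) (j k : Fin d) :
    EqOn (pdxx j k u) (pdxx k j u) U :=
  dirDeriv_comm_eqOn hU hu _ _

lemma dirDeriv_pdxx_eqOn (hU : IsOpen U) (hu : ContDiffOn ℝ ∞ u U) (v : ℝ × (Fin d → ℝ))
    (j k : Fin d) : EqOn (dirDeriv v (pdxx j k u)) (pdxx j k (dirDeriv v u)) U :=
  (dirDeriv_comm_eqOn hU (contDiffOn_pdx hU hu k) _ _).trans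
    (dirDeriv_eqOn hU (dirDeriv_comm_eqOn hU hu _ _) _)

lemma IsSolution.mono (hu : IsSolution o w c U u) (hVU : V ⊆ U) : IsSolution o w c V u :=
  ⟨hu.contDiffOn.mono hVU, fun p hp => hu.equation p (hVU hp)⟩

lemma IsSolution.dirDeriv (hU : IsOpen U) (hu : IsSolution o w c U u) {v : ℝ × (Fin d → ℝ)}
    (hv : v.2 o = 0) : IsSolution o w c U (dirDeriv v u) := by
  refine ⟨contDiffOn_dirDeriv hU hu.contDiffOn v, fun p hp => ?_⟩
  have along_line {f : ScalarField d} (hf : ContDiffOn ℝ ∞ f U) (b : ℝ) :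
      HasDerivAt (fun t : ℝ => b * f (p + t • v)) (b * _root_.dirDeriv v f p) 0 :=
    ((differentiableAt_of_contDiffOn hU hf hp).hasFDerivAt.hasLineDerivAt v).const_mul b
  have deriv_equation := (along_line (contDiffOn_pdt hU hu.contDiffOn) (w (p.2 o))).fun_add
    (HasDerivAt.fun_sum (u := Finset.univ) fun j _ =>
      HasDerivAt.fun_sum (u := Finset.univ) fun k _ =>
        along_line (contDiffOn_pdxx hU hu.contDiffOn j k) (c (p.2 o) j k))
  have line_mem : ∀ᶠ t : ℝ in 𝓝 0, p + t • v ∈ U :=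
    (by fun_prop : ContinuousAt (fun t : ℝ => p + t • v) 0).eventually_mem
      (hU.mem_nhds (by simpa using hp))
  have equation_on_line : (fun _ => (0 : ℝ)) =ᶠ[𝓝 0] fun t : ℝ =>
      w (p.2 o) * pdt u (p + t • v) +
        ∑ j, ∑ k, c (p.2 o) j k * pdxx j k u (p + t • v) := by
    filter_upwards [line_mem] with t ht
    simpa [hv] using (hu.equation _ ht).symm
  have deriv_zero := (deriv_equation.congr_of_eventuallyEq equation_on_line).unique
    (hasDerivAt_const _ _)
  have hpdt : _root_.dirDeriv v (pdt u) p = pdt (_root_.dirDeriv v u) p :=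
    dirDeriv_comm_eqOn hU hu.contDiffOn _ _ hp
  simpa only [hpdt, dirDeriv_pdxx_eqOn hU hu.contDiffOn v _ _ hp] using deriv_zero

/-- On solutions of the normalized equation, the integral of the density `G u` over a cylinder is
controlled by the integral of the density `F u` over any larger cylinder, with a constant that
depends on the equation only through `κ`. -/
def InteriorControl (o : Fin d) (κ : ℝ) (F G : ScalarField d → ScalarField d) : Prop :=
  ∀ ρ ρ' : ℝ, 0 < ρ → ρ < ρ' → ∃ N : ℝ, 0 ≤ N ∧
    ∀ w c, NormalizedCoeffs o κ w c → ∀ u, IsSolution o w c (Qc d ρ') u →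
      IntegrableOn (F u) (Qc d ρ') →
      IntegrableOn (G u) (Qc d ρ) ∧ ∫ p in Qc d ρ, G u p ≤ N * ∫ p in Qc d ρ', F u p

namespace InteriorControl

variable {F G H : ScalarField d → ScalarField d}

lemma refl (hF : ∀ u, 0 ≤ F u) : InteriorControl o κ F F := by
  refine fun ρ ρ' hρ hρ' => ⟨1, zero_le_one, fun w c _ u _ hint => ?_⟩
  have hsub := Qc_subset_Qc (d := d) hρ hρ'.le
  refine ⟨hint.mono_set hsub, ?_⟩
  rw [one_mul]
  exact setIntegral_mono_set hint (Eventually.of_forall (hF u)) hsub.eventuallyLE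

lemma trans (hFG : InteriorControl o κ F G) (hGH : InteriorControl o κ G H) :
    InteriorControl o κ F H := by
  intro ρ ρ' hρ hρ'
  obtain ⟨σ, hρσ, hσρ'⟩ := exists_between hρ'
  obtain ⟨M, hM, hFG⟩ := hFG σ ρ' (hρ.trans hρσ) hσρ'
  obtain ⟨N, hN, hGH⟩ := hGH ρ σ hρ hρσ
  refine ⟨N * M, mul_nonneg hN hM, fun w c hc u hu hint => ?_⟩
  obtain ⟨hGint, hGle⟩ := hFG w c hc u hu hint
  obtain ⟨hHint, hHle⟩ :=
    hGH w c hc u (hu.mono (Qc_subset_Qc (hρ.trans hρσ) hσρ'.le)) hGint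
  refine ⟨hHint, hHle.trans ?_⟩
  rw [mul_assoc]
  gcongr

lemma zero : InteriorControl o κ F 0 :=
  fun _ _ _ _ => ⟨0, le_rfl, fun _ _ _ _ _ _ => ⟨integrableOn_zero, by simp⟩⟩

lemma add (hG : InteriorControl o κ F G) (hH : InteriorControl o κ F H) :
    InteriorControl o κ F (G + H) := by
  intro ρ ρ' hρ hρ'
  obtain ⟨M, hM, hG⟩ := hG ρ ρ' hρ hρ'
  obtain ⟨N, hN, hH⟩ := hH ρ ρ' hρ hρ'
  refine ⟨M + N, add_nonneg hM hN, fun w c hc u hu hint => ?_⟩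
  obtain ⟨hGint, hGle⟩ := hG w c hc u hu hint
  obtain ⟨hHint, hHle⟩ := hH w c hc u hu hint
  refine ⟨hGint.add hHint, ?_⟩
  simp only [Pi.add_apply]
  rw [integral_add hGint hHint, add_mul]
  exact add_le_add hGle hHle

lemma sum {ι : Type*} {s : Finset ι} {G : ι → ScalarField d → ScalarField d}
    (hG : ∀ i ∈ s, InteriorControl o κ F (G i)) : InteriorControl o κ F (∑ i ∈ s, G i) :=
  Finset.sum_induction G (InteriorControl o κ F) (fun _ _ => add) zero hG

lemma of_le (hG : InteriorControl o κ F G) {A : ℝ} (hA : 0 ≤ A) (hH0 : ∀ u, 0 ≤ H u)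
    (hHcont : ∀ {U u}, IsOpen U → ContDiffOn ℝ ∞ u U → ContinuousOn (H u) U)
    (hle : ∀ {w c U u}, NormalizedCoeffs o κ w c → IsSolution o w c U u →
      ∀ p ∈ U, H u p ≤ A * G u p) :
    InteriorControl o κ F H := by
  intro ρ ρ' hρ hρ'
  obtain ⟨N, hN, hG⟩ := hG ρ ρ' hρ hρ'
  refine ⟨A * N, mul_nonneg hA hN, fun w c hc u hu hint => ?_⟩
  obtain ⟨hGint, hGle⟩ := hG w c hc u hu hint
  have hu := hu.mono (Qc_subset_Qc hρ hρ'.le)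
  have hae : ∀ᵐ p ∂volume.restrict (Qc d ρ), H u p ≤ A * G u p := by
    filter_upwards [ae_restrict_mem measurableSet_Qc] with p hp using hle hc hu p hp
  constructor
  · refine (hGint.const_mul A).mono'
      ((hHcont isOpen_Qc hu.contDiffOn).aestronglyMeasurable measurableSet_Qc) ?_
    filter_upwards [hae] with p hp
    rwa [Real.norm_of_nonneg (hH0 u p)]
  · calc ∫ p in Qc d ρ, H u p ≤ ∫ p in Qc d ρ, A * G u p :=
          integral_mono_of_nonneg (Eventually.of_forall (hH0 u)) (hGint.const_mul A) hae
      _ = A * ∫ p in Qc d ρ, G u p := integral_const_mul A _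
      _ ≤ A * (N * ∫ p in Qc d ρ', F u p) := by gcongr
      _ = A * N * ∫ p in Qc d ρ', F u p := (mul_assoc _ _ _).symm

lemma congr (hG : InteriorControl o κ F G)
    (h : ∀ {U u}, IsOpen U → ContDiffOn ℝ ∞ u U → EqOn (G u) (H u) U) :
    InteriorControl o κ F H := by
  intro ρ ρ' hρ hρ'
  obtain ⟨N, hN, hG⟩ := hG ρ ρ' hρ hρ'
  refine ⟨N, hN, fun w c hc u hu hint => ?_⟩
  obtain ⟨hGint, hGle⟩ := hG w c hc u hu hint
  have heq := (h isOpen_Qc hu.contDiffOn).mono (Qc_subset_Qc hρ hρ'.le)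
  exact ⟨hGint.congr_fun heq measurableSet_Qc, by
    rwa [← setIntegral_congr_fun measurableSet_Qc heq]⟩

end InteriorControl

/-- The operator `T` maps solutions to solutions, and the `L²` norm of `T u` over a cylinder is
controlled by the `L²` norm of the solution `u` over any larger cylinder. Such operators can be
composed; the normal derivative `pdx o` is not one of them, as it destroys the equation. -/
structure IsInteriorBounded (o : Fin d) (κ : ℝ) (T : ScalarField d → ScalarField d) : Prop where
  isSolution : ∀ {w c U u}, IsOpen U → IsSolution o w c U u → IsSolution o w c U (T u)
  interiorControl : InteriorControl o κ (fun u => u ^ 2) (fun u => T u ^ 2)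

namespace IsInteriorBounded

variable {S T : ScalarField d → ScalarField d} {G : ScalarField d → ScalarField d}

lemma id : IsInteriorBounded o κ (id : ScalarField d → ScalarField d) :=
  ⟨fun _ hu => hu, .refl fun u p => sq_nonneg (u p)⟩

lemma interiorControl_comp (hT : IsInteriorBounded o κ T)
    (hG : InteriorControl o κ (fun u => u ^ 2) G) :
    InteriorControl o κ (fun u => u ^ 2) (fun u => G (T u)) := by
  have hGT : InteriorControl o κ (fun u => T u ^ 2) (fun u => G (T u)) := by
    intro ρ ρ' hρ hρ'
    obtain ⟨N, hN, hG⟩ := hG ρ ρ' hρ hρ'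
    exact ⟨N, hN, fun w c hc u hu hint => hG w c hc (T u) (hT.isSolution isOpen_Qc hu) hint⟩
  exact hT.interiorControl.trans hGT

lemma comp (hS : IsInteriorBounded o κ S) (hT : IsInteriorBounded o κ T) :
    IsInteriorBounded o κ (S ∘ T) :=
  ⟨fun hU hu => hS.isSolution hU (hT.isSolution hU hu),
    hT.interiorControl_comp hS.interiorControl⟩

lemma iterate (hT : IsInteriorBounded o κ T) (n : ℕ) : IsInteriorBounded o κ T^[n] := by
  induction n with
  | zero => exact id
  | succ n ih => exact ih.comp hT

lemma foldr {n : ℕ} {T : Fin n → ScalarField d → ScalarField d}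
    (hT : ∀ i, IsInteriorBounded o κ (T i)) : IsInteriorBounded o κ (Fin.foldr n T ·) := by
  induction n with
  | zero =>
    simp only [Fin.foldr_zero]
    exact id
  | succ n ih =>
    simp only [Fin.foldr_succ]
    exact (hT 0).comp (ih fun i => hT i.succ)

end IsInteriorBounded

end NormalizedEquation

section Estimates

variable {d : ℕ} {o : Fin d} {κ ρ ρ' B C ε : ℝ} {w : ℝ → ℝ} {c : ℝ → Fin d → Fin d → ℝ}
  {u f g η : ScalarField d}

lemma IsCutoff.hasZeroIntegral_dirDeriv (hη : IsCutoff d ρ ρ' C ε η) {b : ℝ → ℝ}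
    (hb : Measurable b) (hB : ∀ s, |b s| ≤ B) {v : ℝ × (Fin d → ℝ)}
    (hbv : ∀ s t, b (s + t * v.2 o) = b s) (hf : ContDiffOn ℝ ∞ f (Qc d ρ'))
    (hg : ContDiffOn ℝ ∞ g (Qc d ρ')) :
    HasZeroIntegral (fun p => b (p.2 o) * (2 * η p * dirDeriv v η p * (f p * g p) +
      η p ^ 2 * (dirDeriv v f p * g p + f p * dirDeriv v g p)))
      (volume.restrict (Qc d ρ')) := by
  have : (volume : Measure (ℝ × (Fin d → ℝ))).IsAddHaarMeasure :=
    Measure.prod.instIsAddHaarMeasure volume volume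
  exact hasZeroIntegral_mul_dirDeriv_cutoff (μ := volume) (c := fun p => b (p.2 o)) isOpen_Qc
    hη.contDiff hη.hasCompactSupport hη.tsupport_subset (by fun_prop) (fun p => hB _)
    (fun p t => hbv (p.2 o) t) hf hg

/-- The coefficient `c_{jk}` can be pulled through `∂_j` unless `j = o`, and through `∂_k` unless
`k = o`; the remaining one, `c_{oo} = 1`, is constant. -/
lemma NormalizedCoeffs.exists_hasZeroIntegral_flux (hc : NormalizedCoeffs o κ w c)
    (hη : IsCutoff d ρ ρ' C ε η) (hu : ContDiffOn ℝ ∞ u (Qc d ρ')) (j k : Fin d) :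
    ∃ i l, HasZeroIntegral (fun p => c (p.2 o) j k * (2 * η p * pdx i η p * (u p * pdx l u p) +
      η p ^ 2 * (pdx j u p * pdx k u p + u p * pdxx j k u p)))
      (volume.restrict (Qc d ρ')) := by
  have flux (i l : Fin d) (hi : i = o → ∀ s, c s j k = 1) :=
    hη.hasZeroIntegral_dirDeriv (o := o) (v := (0, Pi.single i 1)) (hc.measurable_coeff j k)
      (fun s => hc.abs_coeff_le s j k)
      (fun s t => by
        by_cases hio : i = o
        · simp only [hi hio]
        · simp [Pi.single_eq_of_ne' hio])
      hu (contDiffOn_pdx isOpen_Qc hu l)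
  by_cases hj : j = o → k = o
  · exact ⟨j, k, flux j k fun h s => by rw [h, hj h, hc.coeff_self]⟩
  · rw [Classical.not_imp] at hj
    refine ⟨k, j, (flux k j fun h => absurd h hj.2).congr_ae ?_⟩
    filter_upwards [ae_restrict_mem measurableSet_Qc] with p hp
    have hsymm : pdxx j k u p = pdxx k j u p := pdxx_comm_eqOn isOpen_Qc hu j k hp
    rw [hsymm, mul_comm (pdx j u p)]
    rfl

lemma neg_sum_cross_le {ι : Type*} [Fintype ι] {e u lam : ℝ} {c : ι → ι → ℝ} {g q : ι → ℝ}
    (hlam : 0 < lam) (hc : ∀ j k, |c j k| ≤ B) (hq : ∀ i, |q i| ≤ C) (i l : ι → ι → ι) :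
    -∑ j, ∑ k, c j k * (2 * e * q (i j k) * (u * g (l j k))) ≤
      Fintype.card ι ^ 2 * (lam * (e ^ 2 * ∑ j, g j ^ 2) + lam⁻¹ * (B * C) ^ 2 * u ^ 2) := by
  have term_le (j k : ι) : -(c j k * (2 * e * q (i j k) * (u * g (l j k)))) ≤
      lam * (e ^ 2 * ∑ j, g j ^ 2) + lam⁻¹ * (B * C) ^ 2 * u ^ 2 := by
    have young := two_mul_le_add_mul_sq (a := e * g (l j k)) (b := -(c j k * q (i j k) * u)) hlam
    have coeff_le : (c j k * q (i j k)) ^ 2 ≤ (B * C) ^ 2 := by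
      refine sq_le_sq' (neg_le_of_abs_le ?_) (le_of_abs_le ?_) <;>
      · rw [abs_mul]
        exact mul_le_mul (hc j k) (hq _) (abs_nonneg _) ((abs_nonneg _).trans (hc j k))
    have grad_le : g (l j k) ^ 2 ≤ ∑ j, g j ^ 2 :=
      Finset.single_le_sum (f := fun j => g j ^ 2) (fun j _ => sq_nonneg _) (Finset.mem_univ _)
    calc _ = 2 * (e * g (l j k)) * -(c j k * q (i j k) * u) := by ring
      _ ≤ _ := young
      _ = lam * (e ^ 2 * g (l j k) ^ 2) + lam⁻¹ * (c j k * q (i j k)) ^ 2 * u ^ 2 := by ring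
      _ ≤ _ := by gcongr
  simp only [← Finset.sum_neg_distrib]
  calc _ ≤ ∑ _j : ι, ∑ _k : ι,
        (lam * (e ^ 2 * ∑ j, g j ^ 2) + lam⁻¹ * (B * C) ^ 2 * u ^ 2) :=
        Finset.sum_le_sum fun j _ => Finset.sum_le_sum fun k _ => term_le j k
    _ = _ := by simp only [Finset.sum_const, Finset.card_univ, nsmul_eq_mul]; ring

lemma caccioppoli_pointwise {ι : Type*} [Fintype ι] [Nonempty ι] {v u ut e et : ℝ}
    {c H : ι → ι → ℝ} {g q : ι → ℝ} (hκ : 0 < κ) (hv0 : 0 ≤ v) (hv : v ≤ κ⁻¹)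
    (hc : ∀ j k, |c j k| ≤ κ⁻¹) (helliptic : κ * ∑ j, g j ^ 2 ≤ ∑ j, ∑ k, c j k * g j * g k)
    (heq : v * ut + ∑ j, ∑ k, c j k * H j k = 0) (hC : 0 ≤ C) (het : -C ≤ e * et)
    (hq : ∀ i, |q i| ≤ C) (i l : ι → ι → ι) :
    κ / 2 * (e ^ 2 * ∑ j, g j ^ 2) ≤
      2⁻¹ * (v * (2 * e * et * (u * u) + e ^ 2 * (ut * u + u * ut))) +
        ∑ j, ∑ k, c j k *
          (2 * e * q (i j k) * (u * g (l j k)) + e ^ 2 * (g j * g k + u * H j k)) +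
        (κ⁻¹ * C + 2 * Fintype.card ι ^ 4 * κ⁻¹ * (κ⁻¹ * C) ^ 2) * u ^ 2 := by
  have : (0 : ℝ) < Fintype.card ι := by exact_mod_cast Fintype.card_pos
  have cross := neg_sum_cross_le (e := e) (u := u) (g := g)
    (lam := κ / (2 * Fintype.card ι ^ 2)) (by positivity) hc hq i l
  have cross_const (S : ℝ) : Fintype.card ι ^ 2 * (κ / (2 * Fintype.card ι ^ 2) * S +
      (κ / (2 * Fintype.card ι ^ 2))⁻¹ * (κ⁻¹ * C) ^ 2 * u ^ 2) =
      κ / 2 * S + 2 * Fintype.card ι ^ 4 * κ⁻¹ * (κ⁻¹ * C) ^ 2 * u ^ 2 := by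
    field_simp
  have time_term : -(v * (e * et) * u ^ 2) ≤ κ⁻¹ * C * u ^ 2 := by
    have : -(v * (e * et)) ≤ κ⁻¹ * C := by
      nlinarith [mul_le_mul_of_nonneg_left het hv0, mul_le_mul_of_nonneg_right hv hC]
    nlinarith [sq_nonneg u]
  have flux_split : ∑ j, ∑ k, c j k *
      (2 * e * q (i j k) * (u * g (l j k)) + e ^ 2 * (g j * g k + u * H j k)) =
      ∑ j, ∑ k, c j k * (2 * e * q (i j k) * (u * g (l j k))) +
        e ^ 2 * ∑ j, ∑ k, c j k * g j * g k + e ^ 2 * u * ∑ j, ∑ k, c j k * H j k := by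
    simp only [Finset.mul_sum, ← Finset.sum_add_distrib]
    exact Finset.sum_congr rfl fun j _ => Finset.sum_congr rfl fun k _ => by ring
  rw [cross_const] at cross
  rw [flux_split, eq_neg_of_add_eq_zero_right heq]
  nlinarith [mul_le_mul_of_nonneg_left helliptic (sq_nonneg e)]

lemma interiorControl_sum_sq_pdx (hκ : 0 < κ) :
    InteriorControl o κ (fun u => u ^ 2) (fun u => ∑ j, pdx j u ^ 2) := by
  have : Nonempty (Fin d) := ⟨o⟩
  intro ρ ρ' hρ hρ'
  obtain ⟨C, hC0, hC⟩ := exists_isCutoff d hρ hρ'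
  refine ⟨(κ⁻¹ * C + 2 * Fintype.card (Fin d) ^ 4 * κ⁻¹ * (κ⁻¹ * C) ^ 2) / (κ / 2),
    by positivity, fun w c hc u hu hint => ?_⟩
  have hu' (j : Fin d) := contDiffOn_pdx isOpen_Qc hu.contDiffOn j
  refine integrableOn_and_integral_le_of_cutoff_estimate hρ hρ' hC (half_pos hκ)
    (by simpa only [Finset.sum_fn] using
      continuousOn_finsetSum _ fun j _ => (hu' j).continuousOn.pow 2)
    (Finset.sum_nonneg fun j _ p => sq_nonneg (pdx j u p)) hint fun ε η hη => ?_
  choose i l hflux using hc.exists_hasZeroIntegral_flux hη hu.contDiffOn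
  have weight_nonneg (s : ℝ) : 0 ≤ w s := hκ.le.trans (hc.le_weight s)
  have energy := hη.hasZeroIntegral_dirDeriv (o := o) (v := (1, 0)) hc.measurable_weight
    (fun s => (abs_of_nonneg (weight_nonneg s)).trans_le (hc.weight_le s)) (by simp)
    hu.contDiffOn hu.contDiffOn
  refine ⟨_, (energy.const_mul 2⁻¹).add (.sum fun j (_ : j ∈ Finset.univ) =>
    .sum fun k (_ : k ∈ Finset.univ) => hflux j k), fun p hp => ?_⟩
  simp only [Finset.sum_apply, Pi.pow_apply]
  exact caccioppoli_pointwise hκ (weight_nonneg _) (hc.weight_le _) (hc.abs_coeff_le _)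
    (hc.elliptic _ fun j => pdx j u p) (hu.equation p hp) hC0 (hη.neg_le_mul_pdt p)
    (hη.abs_pdx_le · p) i l

lemma interiorControl_pdx (hκ : 0 < κ) (j : Fin d) :
    InteriorControl o κ (fun u => u ^ 2) (fun u => pdx j u ^ 2) :=
  (interiorControl_sum_sq_pdx hκ).of_le zero_le_one (fun u p => sq_nonneg (pdx j u p))
    (fun hU hu => (contDiffOn_pdx hU hu j).continuousOn.pow 2) fun _ _ p _ => by
      simpa using Finset.single_le_sum (f := fun j => pdx j _ p ^ 2) (fun j _ => sq_nonneg _)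
        (Finset.mem_univ j)

lemma isInteriorBounded_pdx (hκ : 0 < κ) {j : Fin d} (hj : j ≠ o) :
    IsInteriorBounded o κ (pdx j) :=
  ⟨fun hU hu => hu.dirDeriv hU (Pi.single_eq_of_ne' hj 1), interiorControl_pdx hκ j⟩

lemma interiorControl_pdxx (hκ : 0 < κ) {j k : Fin d} (hjk : (j, k) ≠ (o, o)) :
    InteriorControl o κ (fun u => u ^ 2) (fun u => pdxx j k u ^ 2) := by
  by_cases hk : k = o
  · have hj : j ≠ o := fun hj => hjk (by rw [hj, hk])
    refine ((isInteriorBounded_pdx hκ hj).interiorControl_comp (interiorControl_pdx hκ k)).congr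
      fun hU hu p hp => ?_
    exact congrArg (· ^ 2) (pdxx_comm_eqOn hU hu k j hp)
  · exact (isInteriorBounded_pdx hκ hk).interiorControl_comp (interiorControl_pdx hκ j)

/-- The sum of the squares of all second spatial derivatives except the purely normal `u_{oo}`. -/
noncomputable def offNormalHessianSq (o : Fin d) (u : ScalarField d) : ScalarField d :=
  ∑ q ∈ Finset.univ.erase (o, o), pdxx q.1 q.2 u ^ 2

lemma offNormalHessianSq_apply (o : Fin d) (u : ScalarField d) (p : ℝ × (Fin d → ℝ)) :
    offNormalHessianSq o u p = ∑ q ∈ Finset.univ.erase (o, o), pdxx q.1 q.2 u p ^ 2 := by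
  simp [offNormalHessianSq]

lemma offNormalHessianSq_nonneg (o : Fin d) (u : ScalarField d) : 0 ≤ offNormalHessianSq o u :=
  Finset.sum_nonneg fun q _ p => sq_nonneg (pdxx q.1 q.2 u p)

lemma interiorControl_offNormalHessianSq (hκ : 0 < κ) :
    InteriorControl o κ (fun u => u ^ 2) (offNormalHessianSq o) := by
  have := InteriorControl.sum fun q (hq : q ∈ Finset.univ.erase (o, o)) =>
    interiorControl_pdxx hκ (Finset.ne_of_mem_erase hq)
  convert this using 1
  ext u p
  simp [offNormalHessianSq_apply]

lemma IsSolution.sq_pdxx_add_mul_pdt_le {U : Set (ℝ × (Fin d → ℝ))}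
    (hc : NormalizedCoeffs o κ w c) (hu : IsSolution o w c U u) {p : ℝ × (Fin d → ℝ)}
    (hp : p ∈ U) :
    (pdxx o o u p + w (p.2 o) * pdt u p) ^ 2 ≤ (d * κ⁻¹) ^ 2 * offNormalHessianSq o u p := by
  have equation := hu.equation p hp
  rw [← Fintype.sum_prod_type' fun j k => c (p.2 o) j k * pdxx j k u p,
    ← Finset.add_sum_erase _ _ (Finset.mem_univ (o, o)), hc.coeff_self, one_mul] at equation
  have normal_eq : pdxx o o u p + w (p.2 o) * pdt u p =
      -∑ q ∈ Finset.univ.erase (o, o), c (p.2 o) q.1 q.2 * pdxx q.1 q.2 u p := by linarith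
  have sum_coeff_sq_le : ∑ q ∈ Finset.univ.erase (o, o), c (p.2 o) q.1 q.2 ^ 2 ≤
      (d * κ⁻¹) ^ 2 := calc
    _ ≤ ∑ q : Fin d × Fin d, c (p.2 o) q.1 q.2 ^ 2 :=
      Finset.sum_le_sum_of_subset_of_nonneg (Finset.erase_subset _ _) fun _ _ _ => sq_nonneg _
    _ ≤ ∑ _q : Fin d × Fin d, κ⁻¹ ^ 2 := Finset.sum_le_sum fun q _ =>
      sq_le_sq' (neg_le_of_abs_le (hc.abs_coeff_le ..)) (le_of_abs_le (hc.abs_coeff_le ..))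
    _ = (d * κ⁻¹) ^ 2 := by
      simp only [Finset.sum_const, Finset.card_univ, Fintype.card_prod, Fintype.card_fin,
        nsmul_eq_mul, Nat.cast_mul]
      ring
  rw [normal_eq, neg_sq, offNormalHessianSq_apply]
  refine (Finset.sum_mul_sq_le_sq_mul_sq _ _ _).trans ?_
  gcongr

lemma time_derivative_pointwise {v M e et eo ut uo uto uoo : ℝ} (hκ : 0 < κ) (hv : κ ≤ v)
    (hM : (uoo + v * ut) ^ 2 ≤ M) (he : e ∈ Icc 0 1) (het : -C ≤ e * et) (heo : |eo| ≤ C) :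
    κ / 2 * (e ^ 2 * ut ^ 2) ≤
      2⁻¹ * (2 * e * et * (uo * uo) + e ^ 2 * (uto * uo + uo * uto)) -
        (2 * e * eo * (ut * uo) + e ^ 2 * (uto * uo + ut * uoo)) +
        (κ⁻¹ * M + (4 * κ⁻¹ * C ^ 2 + C) * uo ^ 2) := by
  have young (b : ℝ) : 2 * (e * ut) * b ≤ κ / 4 * (e ^ 2 * ut ^ 2) + 4 * κ⁻¹ * b ^ 2 := by
    have := two_mul_le_add_mul_sq (a := e * ut) (b := b) (by positivity : 0 < κ / 4)
    rwa [mul_pow, inv_div, div_eq_mul_inv] at this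
  have cutoff_term : 2 * (e * ut) * (eo * uo) ≤
      κ / 4 * (e ^ 2 * ut ^ 2) + 4 * κ⁻¹ * C ^ 2 * uo ^ 2 := by
    have heo_sq : eo ^ 2 ≤ C ^ 2 := sq_le_sq' (neg_le_of_abs_le heo) (le_of_abs_le heo)
    refine (young _).trans ?_
    rw [mul_pow, mul_assoc (4 * κ⁻¹)]
    gcongr
  have equation_term : e ^ 2 * ut * (uoo + v * ut) ≤
      κ / 4 * (e ^ 2 * ut ^ 2) + κ⁻¹ * M := by
    have he_sq : e ^ 2 ≤ 1 := pow_le_one₀ he.1 he.2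
    have : κ⁻¹ * (e ^ 2 * (uoo + v * ut) ^ 2) ≤ κ⁻¹ * (1 * M) := by gcongr
    linarith [young (e * (uoo + v * ut) / 2)]
  have weight_term : κ * (e ^ 2 * ut ^ 2) ≤ v * (e ^ 2 * ut ^ 2) := by gcongr
  have time_term : -C * uo ^ 2 ≤ e * et * uo ^ 2 := by gcongr
  linarith

/-- The test function is `η² u_t`: the equation reads `u_{oo} + w u_t = b` with `b` controlled by
`offNormalHessianSq`, and moving one `∂_o` turns `η² u_t u_{oo}` into `-η² ∂ₜ(u_o²) / 2` plus terms
with derivatives of `η`. -/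
lemma interiorControl_pdt_of_offNormalHessianSq (hκ : 0 < κ) :
    InteriorControl o κ (fun u => offNormalHessianSq o u + pdx o u ^ 2) (fun u => pdt u ^ 2) := by
  intro ρ ρ' hρ hρ'
  obtain ⟨C, hC0, hC⟩ := exists_isCutoff d hρ hρ'
  set K := κ⁻¹ * (d * κ⁻¹) ^ 2 + (4 * κ⁻¹ * C ^ 2 + C) with hK
  refine ⟨K / (κ / 2), by positivity, fun w c hc u hu hint => ?_⟩
  have hut := contDiffOn_pdt isOpen_Qc hu.contDiffOn
  have huo := contDiffOn_pdx isOpen_Qc hu.contDiffOn o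
  refine integrableOn_and_integral_le_of_cutoff_estimate hρ hρ' hC (half_pos hκ)
    (hut.continuousOn.pow 2) (fun p => sq_nonneg (pdt u p)) hint fun ε η hη => ?_
  have by_parts {v : ℝ × (Fin d → ℝ)} {f g : ScalarField d} (hf hg) :=
    hη.hasZeroIntegral_dirDeriv (o := o) (b := fun _ => 1) (B := 1) (v := v) (f := f) (g := g)
      measurable_const (by simp) (by simp) hf hg
  refine ⟨_, ((by_parts (v := (1, 0)) huo huo).const_mul 2⁻¹).sub
    (by_parts (v := (0, Pi.single o 1)) hut huo), fun p hp => ?_⟩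
  have mixed : dirDeriv (0, Pi.single o 1) (pdt u) p = dirDeriv (1, 0) (pdx o u) p :=
    dirDeriv_comm_eqOn isOpen_Qc hu.contDiffOn _ _ hp
  have pointwise := time_derivative_pointwise (uo := pdx o u p)
    (uto := dirDeriv (1, 0) (pdx o u) p) hκ (hc.le_weight _)
    (hu.sq_pdxx_add_mul_pdt_le hc hp) (hη.mem_Icc p) (hη.neg_le_mul_pdt p) (hη.abs_pdx_le o p)
  have remainder_le : κ⁻¹ * ((d * κ⁻¹) ^ 2 * offNormalHessianSq o u p) +
      (4 * κ⁻¹ * C ^ 2 + C) * pdx o u p ^ 2 ≤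
      K * (offNormalHessianSq o u p + pdx o u p ^ 2) := by
    have : 0 ≤ κ⁻¹ * (d * κ⁻¹) ^ 2 * pdx o u p ^ 2 := by positivity
    have : 0 ≤ (4 * κ⁻¹ * C ^ 2 + C) * offNormalHessianSq o u p :=
      mul_nonneg (by positivity) (offNormalHessianSq_nonneg o u p)
    rw [hK]
    linarith
  simp only [one_mul, mixed]
  exact pointwise.trans (add_le_add le_rfl remainder_le)

lemma isInteriorBounded_pdt (hκ : 0 < κ) : IsInteriorBounded o κ pdt :=
  ⟨fun hU hu => hu.dirDeriv hU rfl,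
    ((interiorControl_offNormalHessianSq hκ).add (interiorControl_pdx hκ o)).trans
      (interiorControl_pdt_of_offNormalHessianSq hκ)⟩

lemma interiorControl_pdxx_normal (hκ : 0 < κ) :
    InteriorControl o κ (fun u => u ^ 2) (fun u => pdxx o o u ^ 2) := by
  refine ((isInteriorBounded_pdt hκ).interiorControl.add
    (interiorControl_offNormalHessianSq hκ)).of_le
    (A := 2 * (κ⁻¹ ^ 2 + (d * κ⁻¹) ^ 2)) (by positivity) (fun u p => sq_nonneg (pdxx o o u p))
    (fun hU hu => (contDiffOn_pdxx hU hu o o).continuousOn.pow 2) fun {w c U u} hc hu p hp => ?_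
  have residual := hu.sq_pdxx_add_mul_pdt_le hc hp
  have weight_sq_le : w (p.2 o) ^ 2 ≤ κ⁻¹ ^ 2 :=
    pow_le_pow_left₀ (hκ.le.trans (hc.le_weight _)) (hc.weight_le _) 2
  have time_le : w (p.2 o) ^ 2 * pdt u p ^ 2 ≤ κ⁻¹ ^ 2 * pdt u p ^ 2 := by gcongr
  have hess_nonneg := offNormalHessianSq_nonneg o u p
  calc pdxx o o u p ^ 2
      = (pdxx o o u p + w (p.2 o) * pdt u p + -(w (p.2 o) * pdt u p)) ^ 2 := by ring
    _ ≤ 2 * ((pdxx o o u p + w (p.2 o) * pdt u p) ^ 2 + (-(w (p.2 o) * pdt u p)) ^ 2) :=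
      add_sq_le
    _ ≤ 2 * ((d * κ⁻¹) ^ 2 * offNormalHessianSq o u p + κ⁻¹ ^ 2 * pdt u p ^ 2) := by
      rw [neg_sq, mul_pow]
      gcongr
    _ ≤ 2 * (κ⁻¹ ^ 2 + (d * κ⁻¹) ^ 2) * (pdt u p ^ 2 + offNormalHessianSq o u p) := by
      have : 0 ≤ (d * κ⁻¹) ^ 2 * pdt u p ^ 2 := by positivity
      have : 0 ≤ κ⁻¹ ^ 2 * offNormalHessianSq o u p := mul_nonneg (by positivity) hess_nonneg
      linarith

lemma interiorControl_iterate_pdx_normal (hκ : 0 < κ) {n : ℕ} (hn : n ≤ 2) :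
    InteriorControl o κ (fun u => u ^ 2) (fun u => (pdx o)^[n] u ^ 2) := by
  interval_cases n
  · exact IsInteriorBounded.id.interiorControl
  · exact interiorControl_pdx hκ o
  · exact interiorControl_pdxx_normal hκ

lemma interiorControl_iterate_pdt_iterate_pdx_normal (hκ : 0 < κ) {n : ℕ} (hn : n ≤ 2) (m : ℕ) :
    InteriorControl o κ (fun u => u ^ 2) (fun u => pdt^[m] ((pdx o)^[n] u) ^ 2) :=
  (((isInteriorBounded_pdt hκ).iterate m).interiorControl_comp
    (interiorControl_iterate_pdx_normal hκ hn)).congr fun hU hu _ hp =>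
      congrArg (· ^ 2) (iterate_dirDeriv_comm_eqOn hU hu (0, Pi.single o 1) (1, 0) n m hp)

lemma interiorControl_iterate_pdt_pdxMulti {n : ℕ} (hκ : 0 < κ) {γ : Fin (n + 1) → ℕ}
    (hγ : γ 0 ≤ 2) (m : ℕ) :
    InteriorControl 0 κ (fun u => u ^ 2) (fun u => pdt^[m] (pdxMulti γ u) ^ 2) := by
  have tangential : IsInteriorBounded (0 : Fin (n + 1)) κ
      (Fin.foldr n (fun i => (pdx i.succ)^[γ i.succ]) ·) :=
    .foldr fun i => (isInteriorBounded_pdx hκ i.succ_ne_zero).iterate _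
  simp only [pdxMulti, Fin.foldr_succ]
  exact tangential.interiorControl_comp
    (interiorControl_iterate_pdt_iterate_pdx_normal hκ hγ m)

end Estimates

section Normalization

section QuadraticForm

variable {ι : Type*} [Fintype ι] {A : ι → ι → ℝ} {lam Lam : ℝ}

lemma mem_Icc_of_quadraticForm_mem_Icc (hA : ∀ θ : ι → ℝ,
      lam * ∑ j, θ j ^ 2 ≤ ∑ j, ∑ k, A j k * θ j * θ k ∧
        ∑ j, ∑ k, A j k * θ j * θ k ≤ Lam * ∑ j, θ j ^ 2) (j : ι) :
    A j j ∈ Icc lam Lam := by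
  classical
  simpa [Pi.single_apply, ite_pow] using hA (Pi.single j 1)

lemma quadraticForm_single_add_smul_single [DecidableEq ι] (hsymm : ∀ j k, A j k = A k j)
    (j k : ι) (x : ℝ) :
    ∑ i, ∑ l, A i l * (Pi.single j 1 + x • Pi.single k 1 : ι → ℝ) i *
      (Pi.single j 1 + x • Pi.single k 1 : ι → ℝ) l =
      A j j + 2 * x * A j k + x ^ 2 * A k k := by
  simp only [Pi.add_apply, Pi.smul_apply, Pi.single_apply, smul_eq_mul, mul_add, add_mul, mul_ite,
    ite_mul, mul_one, mul_zero, zero_mul, Finset.sum_add_distrib, Finset.sum_ite_eq',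
    Finset.mem_univ, if_true]
  rw [hsymm k j]
  ring

lemma abs_le_of_quadraticForm_nonneg (hsymm : ∀ j k, A j k = A k j)
    (hA : ∀ θ : ι → ℝ, 0 ≤ ∑ j, ∑ k, A j k * θ j * θ k) (hdiag : ∀ j, A j j ≤ Lam) (j k : ι) :
    |A j k| ≤ Lam := by
  classical
  have along (x : ℝ) := (hA (Pi.single j 1 + x • Pi.single k 1)).trans_eq
    (quadraticForm_single_add_smul_single hsymm j k x)
  rw [abs_le]
  constructor <;> linarith [along 1, along (-1), hdiag j, hdiag k]

end QuadraticForm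

variable {d : ℕ} {o : Fin d} {δ : ℝ} {a : ℝ → Fin d → Fin d → ℝ}

lemma normalizedCoeffs_of_elliptic (hδ : δ ∈ Ioo 0 1) (hmeas : ∀ j k, Measurable fun s => a s j k)
    (hsymm : ∀ s j k, a s j k = a s k j)
    (hell : ∀ (s : ℝ) (θ : Fin d → ℝ),
      δ * ∑ j, θ j ^ 2 ≤ ∑ j, ∑ k, a s j k * θ j * θ k ∧
        ∑ j, ∑ k, a s j k * θ j * θ k ≤ δ⁻¹ * ∑ j, θ j ^ 2) :
    NormalizedCoeffs o (δ ^ 2) (fun s => (a s o o)⁻¹) (fun s j k => (a s o o)⁻¹ * a s j k) := by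
  obtain ⟨hδ0, hδ1⟩ := hδ
  have diag (s : ℝ) := mem_Icc_of_quadraticForm_mem_Icc (hell s)
  have diag_pos (s : ℝ) : 0 < a s o o := hδ0.trans_le (diag s o).1
  have form_nonneg (s : ℝ) (θ : Fin d → ℝ) : 0 ≤ ∑ j, ∑ k, a s j k * θ j * θ k :=
    (by positivity : 0 ≤ δ * ∑ j, θ j ^ 2).trans (hell s θ).1
  have le_inv_diag (s : ℝ) : δ ≤ (a s o o)⁻¹ := (le_inv_comm₀ hδ0 (diag_pos s)).2 (diag s o).2
  have inv_diag_le (s : ℝ) : (a s o o)⁻¹ ≤ δ⁻¹ := inv_anti₀ hδ0 (diag s o).1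
  have sq_le : δ ^ 2 ≤ δ := pow_le_of_le_one hδ0.le hδ1.le two_ne_zero
  exact
    { measurable_weight := (hmeas o o).inv
      measurable_coeff := fun j k => (hmeas o o).inv.mul (hmeas j k)
      coeff_self := fun s => inv_mul_cancel₀ (diag_pos s).ne'
      le_weight := fun s => sq_le.trans (le_inv_diag s)
      weight_le := fun s => (inv_diag_le s).trans (inv_anti₀ (by positivity) sq_le)
      abs_coeff_le := fun s j k => by
        rw [abs_mul, abs_of_pos (inv_pos.2 (diag_pos s)), sq, mul_inv]
        exact mul_le_mul (inv_diag_le s)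
          (abs_le_of_quadraticForm_nonneg (hsymm s) (form_nonneg s) (fun i => (diag s i).2) j k)
          (abs_nonneg _) (by positivity)
      elliptic := fun s θ => by
        simp only [mul_assoc, ← Finset.mul_sum, sq δ]
        simp only [← mul_assoc (a s _ _)]
        exact mul_le_mul (le_inv_diag s) (hell s θ).1 (by positivity)
          (inv_pos.2 (diag_pos s)).le }

lemma isSolution_of_equation {U : Set (ℝ × (Fin d → ℝ))} {u : ScalarField d}
    (hu : ContDiffOn ℝ ∞ u U)
    (heq : ∀ p ∈ U, pdt u p + ∑ j, ∑ k, a (p.2 o) j k * pdxx j k u p = 0) :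
    IsSolution o (fun s => (a s o o)⁻¹) (fun s j k => (a s o o)⁻¹ * a s j k) U u := by
  refine ⟨hu, fun p hp => ?_⟩
  simp only [mul_assoc, ← Finset.mul_sum]
  rw [← mul_add, heq p hp, mul_zero]

end Normalization

theorem stmt8 (d : ℕ) (hd : 0 < d) (δ : ℝ) (hδ : δ ∈ Set.Ioo (0 : ℝ) 1)
    (r R : ℝ) (hr : 0 < r) (hrR : r < R)
    (γ : Fin d → ℕ) (hγ : γ ⟨0, hd⟩ ≤ 2) (m : ℕ) :
    ∃ N : ℝ, 0 < N ∧
      ∀ a : ℝ → Fin d → Fin d → ℝ,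
        (∀ j k, Measurable fun s => a s j k) →
        (∀ s j k, a s j k = a s k j) →
        (∀ (s : ℝ) (θ : Fin d → ℝ),
          δ * ∑ j, (θ j) ^ 2 ≤ ∑ j, ∑ k, a s j k * θ j * θ k ∧
          ∑ j, ∑ k, a s j k * θ j * θ k ≤ δ⁻¹ * ∑ j, (θ j) ^ 2) →
        ∀ h : ℝ × (Fin d → ℝ) → ℝ,
          ContDiffOn ℝ (⊤ : ℕ∞) h (Qc d R) →
          IntegrableOn (fun p => (h p) ^ 2) (Qc d R) →
          (∀ p ∈ Qc d R,
            pdt h p + ∑ j, ∑ k, a (p.2 ⟨0, hd⟩) j k * pdxx j k h p = 0) →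
          (∫ p in Qc d r, (pdt^[m] (pdxMulti γ h) p) ^ 2)
            ≤ N * ∫ p in Qc d R, (h p) ^ 2 := by
  obtain ⟨n, rfl⟩ : ∃ n, d = n + 1 := ⟨d - 1, by omega⟩
  obtain ⟨N, hN, control⟩ :=
    interiorControl_iterate_pdt_pdxMulti (pow_pos hδ.1 2) hγ m r R hr hrR
  refine ⟨N + 1, by positivity, fun a hmeas hsymm hell h hsmooth hint heq => ?_⟩
  have normalized := normalizedCoeffs_of_elliptic (o := 0) hδ hmeas hsymm hell
  have solution := isSolution_of_equation (o := 0) hsmooth heq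
  refine (control _ _ normalized h solution hint).2.trans ?_
  have norm_nonneg : 0 ≤ ∫ p in Qc (n + 1) R, h p ^ 2 := by positivity
  exact mul_le_mul_of_nonneg_right (by linarith) norm_nonneg
end

section
/- Fix an integer d ≥ 2 and δ ∈ (0,1). Let a^{jk} : ℝ → ℝ (1 ≤ j,k ≤ d) be measurable functions of x¹ only, with a^{jk} = a^{kj} and δ|θ|² ≤ Σ_{j,k=1}^d a^{jk}(x¹) θ^j θ^k ≤ δ⁻¹|θ|² for all x¹ and θ ∈ ℝ^d. Set L₀u = u_t + Σ_{j,k} a^{jk}(x¹) u_{x^j x^k}. If h is smooth on Q_4, h ∈ L²(Q_4), and L₀h = 0 in Q_4, then sup_{Q_1} |h_{tt}| + Σ_{j=1}^d sup_{Q_1} |h_{t x^j}| + Σ_{j=1}^d Σ_{k=2}^d sup_{Q_1} |h_{t x^j x^k}| + Σ_{i,j=1}^d Σ_{k=2}^d sup_{Q_1} |h_{x^i x^j x^k}| ≤ N (∫_{Q_3} |h|² dx dt)^{1/2}, where N = N(d,δ). -/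
open MeasureTheory

/-!
Dividing the equation by `a^{11}` makes the coefficient of `∂₁₁` equal to `1` and leaves
coefficients that depend on `x¹` only, so every derivative in `t` or in a tangential direction
`x^k`, `k ≥ 2`, of a solution is again a solution.

Testing the equation with `ζ² h` over a half-ball `t ≥ t₀` bounds `∇h`, and the trace of `h` on the
hyperplane `t = t₀`, in `L²`; testing it with `ζ² h_t` bounds `h_t` and the trace of `h_{x¹}`. In
both cases the boundary term at `t = t₀` has the favourable sign. Iterating with shrinking cutoffs
bounds, on the slice, all tangential and time derivatives of `h` and `h_{x¹}`. The one-dimensional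
Sobolev inequality in each coordinate in turn converts this into a bound at the centre, and the
remaining derivative in the direction `x¹ x¹` is recovered from the equation itself.
-/

namespace ParabolicInterior

open Filter Topology
open scoped ContDiff NNReal

section DirDeriv

variable {E : Type*} [NormedAddCommGroup E] [NormedSpace ℝ E] {f g ψ : E → ℝ}

/-- The directional derivative `∂_v f`; `pdt` and `pdx j` are the cases `v = (1, 0)` and
`v = (0, e_j)`, definitionally. -/
noncomputable def dirDeriv (v : E) (f : E → ℝ) : E → ℝ := fun p => fderiv ℝ f p v

theorem contDiff_dirDeriv (hf : ContDiff ℝ ∞ f) (v : E) : ContDiff ℝ ∞ (dirDeriv v f) :=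
  (hf.fderiv_right le_rfl).clm_apply contDiff_const

theorem hasCompactSupport_dirDeriv (hf : HasCompactSupport f) (v : E) :
    HasCompactSupport (dirDeriv v f) :=
  hf.fderiv_apply (𝕜 := ℝ) v

theorem dirDeriv_comm (hf : ContDiff ℝ ∞ f) (u v : E) :
    dirDeriv u (dirDeriv v f) = dirDeriv v (dirDeriv u f) := by
  have hf' : Differentiable ℝ (fderiv ℝ f) :=
    (hf.fderiv_right (m := ∞) le_rfl).differentiable (by simp)
  have second_deriv (a b p : E) :
      dirDeriv a (dirDeriv b f) p = fderiv ℝ (fderiv ℝ f) p a b := by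
    have h := (hf' p).hasFDerivAt.clm_apply (hasFDerivAt_const b p)
    exact (DFunLike.congr_fun h.fderiv a).trans (by simp)
  ext p
  rw [second_deriv, second_deriv]
  refine (hf.contDiffAt.isSymmSndFDerivAt ?_) u v
  rw [minSmoothness_of_isRCLikeNormedField]
  exact WithTop.coe_le_coe.2 le_top

theorem dirDeriv_mul_mul_sq (hf : Differentiable ℝ f) (hg : Differentiable ℝ g)
    (hψ : Differentiable ℝ ψ) (v p : E) :
    dirDeriv v (fun q => f q * g q * ψ q ^ 2) p =
      (dirDeriv v f p * g p + f p * dirDeriv v g p) * ψ p ^ 2 +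
        2 * (f p * g p) * ψ p * dirDeriv v ψ p := by
  have h := ((hf p).hasFDerivAt.mul (hg p).hasFDerivAt).mul ((hψ p).hasFDerivAt.pow 2)
  refine (DFunLike.congr_fun h.fderiv v).trans ?_
  simp only [dirDeriv, add_apply, smul_apply, Pi.mul_apply, smul_eq_mul, nsmul_eq_mul,
    Nat.cast_ofNat]
  ring

theorem hasDerivAt_comp_line (hf : Differentiable ℝ f) (v p : E) (s : ℝ) :
    HasDerivAt (fun s : ℝ => f (p + s • v)) (dirDeriv v f (p + s • v)) s := by
  have hline : HasDerivAt (fun s : ℝ => p + s • v) v s := by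
    simpa using ((hasDerivAt_id s).smul_const v).const_add p
  exact (hf (p + s • v)).hasFDerivAt.comp_hasDerivAt s hline

theorem dirDeriv_eventuallyEq {p : E} (h : f =ᶠ[𝓝 p] g) (v : E) :
    dirDeriv v f =ᶠ[𝓝 p] dirDeriv v g := by
  filter_upwards [h.fderiv (𝕜 := ℝ)] with q hq
  rw [dirDeriv, dirDeriv, hq]

theorem dirDeriv_comp_add_right (f : E → ℝ) (v a : E) :
    dirDeriv v (fun p => f (p + a)) = fun p => dirDeriv v f (p + a) := by
  ext p
  rw [dirDeriv, dirDeriv, fderiv_comp_add_right]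

end DirDeriv

/-- Space-time points `(t, x)`, with the supremum norm. -/
abbrev SpaceTime (d : ℕ) := ℝ × (Fin d → ℝ)

variable {d : ℕ}

section IntegrationByParts

/-- Lebesgue measure on the half-space `t > 0`. -/
noncomputable def halfMeasure (d : ℕ) : Measure (SpaceTime d) :=
  volume.restrict (Set.Ioi 0 ×ˢ Set.univ)

/-- Lebesgue measure on the hyperplane `t = 0`, as a measure on space-time. -/
noncomputable def sliceMeasure (d : ℕ) : Measure (SpaceTime d) :=
  (Measure.dirac 0).prod volume

instance : IsFiniteMeasureOnCompacts (halfMeasure d) := by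
  unfold halfMeasure; infer_instance

instance : IsFiniteMeasureOnCompacts (sliceMeasure d) := by
  unfold sliceMeasure; infer_instance

theorem integral_sliceMeasure (f : SpaceTime d → ℝ) :
    ∫ p, f p ∂sliceMeasure d = ∫ x, f (0, x) := by
  rw [sliceMeasure, Measure.dirac_prod, (measurableEmbedding_prodMk_left 0).integral_map]

theorem lintegral_sliceMeasure (f : SpaceTime d → ENNReal) :
    ∫⁻ p, f p ∂sliceMeasure d = ∫⁻ x, f (0, x) := by
  rw [sliceMeasure, Measure.dirac_prod, (measurableEmbedding_prodMk_left 0).lintegral_map]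

theorem ae_sliceMeasure_fst_eq_zero : ∀ᵐ p ∂sliceMeasure d, p.1 = 0 :=
  Measure.quasiMeasurePreserving_fst.ae (p := (· = 0)) (by simp [ae_dirac_eq])

theorem ae_halfMeasure_fst_pos : ∀ᵐ p ∂halfMeasure d, 0 < p.1 :=
  (ae_restrict_mem (measurableSet_Ioi.prod MeasurableSet.univ)).mono fun _ hp => hp.1

theorem integrable_mul_of_hasCompactSupport {X : Type*} [TopologicalSpace X]
    [MeasurableSpace X] [OpensMeasurableSpace X] {μ : Measure X} [IsFiniteMeasureOnCompacts μ]
    {f G : X → ℝ} {C : ℝ}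
    (hf : Measurable f) (hC : ∀ p, |f p| ≤ C) (hG : Continuous G) (hc : HasCompactSupport G) :
    Integrable (fun p => f p * G p) μ :=
  (hG.integrable_of_hasCompactSupport hc).bdd_mul (c := C) hf.aestronglyMeasurable
    (Eventually.of_forall hC)

theorem integral_mul_dirDeriv_eq_zero {E : Type*} [NormedAddCommGroup E] [NormedSpace ℝ E]
    [FiniteDimensional ℝ E] [MeasurableSpace E] [BorelSpace E] {μ : Measure E}
    [μ.IsAddHaarMeasure] {f G : E → ℝ} {C : ℝ} {v : E} (hf : Measurable f)
    (hC : ∀ p, |f p| ≤ C) (hinv : ∀ p (s : ℝ), f (p + s • v) = f p)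
    (hG : ContDiff ℝ ∞ G) (hc : HasCompactSupport G) :
    ∫ p, f p * dirDeriv v G p ∂μ = 0 := by
  have hf' (p : E) : HasLineDerivAt ℝ f 0 p v := by
    simpa only [HasLineDerivAt, hinv] using hasDerivAt_const (0 : ℝ) (f p)
  have hG' (p : E) : HasLineDerivAt ℝ G (dirDeriv v G p) p v :=
    (hG.differentiable (by simp) p).hasFDerivAt.hasLineDerivAt v
  simpa using integral_bilinear_hasLineDerivAt_right_eq_neg_left_of_integrable (μ := μ)
    (f' := fun _ => 0) (B := ContinuousLinearMap.mul ℝ ℝ) (by simp)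
    (integrable_mul_of_hasCompactSupport hf hC (contDiff_dirDeriv hG v).continuous
      (hasCompactSupport_dirDeriv hc v))
    (integrable_mul_of_hasCompactSupport hf hC hG.continuous hc)
    (fun p _ => hf' p) (fun p _ => hG' p)

theorem integral_halfMeasure_mul_dirDeriv_eq_zero {f G : SpaceTime d → ℝ} {C : ℝ}
    {v : SpaceTime d} (hv : v.1 = 0) (hf : Measurable f) (hC : ∀ p, |f p| ≤ C)
    (hinv : ∀ p (s : ℝ), f (p + s • v) = f p)
    (hG : ContDiff ℝ ∞ G) (hc : HasCompactSupport G) :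
    ∫ p, f p * dirDeriv v G p ∂halfMeasure d = 0 := by
  have hmeas : MeasurableSet (Set.Ioi (0 : ℝ) ×ˢ (Set.univ : Set (Fin d → ℝ))) :=
    measurableSet_Ioi.prod MeasurableSet.univ
  have : (volume : Measure (SpaceTime d)).IsAddHaarMeasure := by
    rw [Measure.volume_eq_prod]; infer_instance
  rw [halfMeasure, ← integral_indicator hmeas]
  simp only [Set.indicator_mul_left]
  refine integral_mul_dirDeriv_eq_zero (hf.indicator hmeas) (C := C) (fun p => ?_)
    (fun p s => ?_) hG hc
  · exact (norm_indicator_le_norm_self f p).trans (hC p)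
  · simp [Set.indicator, hv, hinv]

theorem integral_halfMeasure_mul_pdt {f : (Fin d → ℝ) → ℝ} {G : SpaceTime d → ℝ} {C : ℝ}
    (hf : Measurable f) (hC : ∀ x, |f x| ≤ C) (hG : ContDiff ℝ ∞ G)
    (hc : HasCompactSupport G) :
    ∫ p, f p.2 * pdt G p ∂halfMeasure d = -∫ p, f p.2 * G p ∂sliceMeasure d := by
  have hint : Integrable (fun p => f p.2 * pdt G p) (halfMeasure d) :=
    integrable_mul_of_hasCompactSupport (hf.comp measurable_snd) (fun p => hC p.2)
      (contDiff_dirDeriv hG _).continuous (hasCompactSupport_dirDeriv hc _)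
  have hline (x : Fin d → ℝ) : ∫ t in Set.Ioi 0, pdt G (t, x) = -G (0, x) := by
    have hderiv : deriv (fun t : ℝ => G (t, x)) = fun t => pdt G (t, x) := by
      ext t
      simpa using! (hasDerivAt_comp_line (hG.differentiable (by simp)) (1, 0) (0, x) t).deriv
    have hsmooth : ContDiff ℝ 1 (fun t : ℝ => G (t, x)) :=
      (hG.comp (contDiff_id.prodMk contDiff_const)).of_le (by simp)
    have hsupp : HasCompactSupport (fun t : ℝ => G (t, x)) :=
      .intro (hc.image continuous_fst) fun t ht =>
        image_eq_zero_of_notMem_tsupport fun hmem => ht ⟨(t, x), hmem, rfl⟩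
    rw [← hderiv]
    exact hsupp.integral_Ioi_deriv_eq hsmooth 0
  rw [halfMeasure, Measure.volume_eq_prod, ← Measure.prod_restrict, Measure.restrict_univ]
    at hint ⊢
  rw [integral_prod_symm _ hint, integral_sliceMeasure, ← integral_neg]
  simp only [integral_const_mul, hline, mul_neg]

end IntegrationByParts

section Energy

variable {X : Type*} [MeasurableSpace X] {μ : Measure X} {φ ψ w : X → ℝ}

/-- The squared `L²(μ)` norm of `φ w`, for a cutoff function `φ`. -/
noncomputable def energy (μ : Measure X) (φ w : X → ℝ) : ℝ := ∫ p, (φ p * w p) ^ 2 ∂μ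

theorem energy_nonneg : 0 ≤ energy μ φ w := integral_nonneg fun _ => sq_nonneg _

variable [TopologicalSpace X] [OpensMeasurableSpace X] [IsFiniteMeasureOnCompacts μ]

theorem integrable_mul_sq (hφ : Continuous φ) (hc : HasCompactSupport φ) (hw : Continuous w) :
    Integrable (fun p => (φ p * w p) ^ 2) μ := by
  refine Continuous.integrable_of_hasCompactSupport (by fun_prop) (hc.mono' fun p hp => ?_)
  refine subset_tsupport φ fun hφp => hp ?_
  simp [hφp]

theorem energy_le_energy_of_le (hφ : Continuous φ) (hφc : HasCompactSupport φ)
    (hψ : Continuous ψ) (hψc : HasCompactSupport ψ) (hw : Continuous w)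
    (hψ0 : ∀ p, 0 ≤ ψ p) (hle : ∀ p, ψ p ≤ φ p) : energy μ ψ w ≤ energy μ φ w := by
  refine integral_mono (integrable_mul_sq hψ hψc hw) (integrable_mul_sq hφ hφc hw) fun p => ?_
  simp only [mul_pow]
  gcongr
  exacts [hψ0 p, hle p]

end Energy

section Cutoff

variable {E : Type*} [NormedAddCommGroup E] [NormedSpace ℝ E]

/-- A decreasing sequence of smooth cutoff functions between the balls of radius `r / 2` and `r`
in which each function dominates the gradient of the next one, so that an energy estimate for
derivatives costs one step of the sequence. -/
structure IsCutoffSeq (r : ℝ) (A : ℕ → ℝ≥0) (η : ℕ → E → ℝ) : Prop where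
  contDiff : ∀ n, ContDiff ℝ ∞ (η n)
  hasCompactSupport : ∀ n, HasCompactSupport (η n)
  nonneg : ∀ n p, 0 ≤ η n p
  le_one : ∀ n p, η n p ≤ 1
  succ_le : ∀ n p, η (n + 1) p ≤ η n p
  norm_le_of_ne_zero : ∀ n p, η n p ≠ 0 → ‖p‖ ≤ r
  eq_one_of_norm_le : ∀ n p, ‖p‖ ≤ r / 2 → η n p = 1
  norm_fderiv_succ_le : ∀ n p, ‖fderiv ℝ (η (n + 1)) p‖ ≤ A n * η n p

theorem exists_isCutoffSeq [FiniteDimensional ℝ E] {r : ℝ} (hr : 0 < r) :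
    ∃ (A : ℕ → ℝ≥0) (η : ℕ → E → ℝ), IsCutoffSeq r A η := by
  let ζ : ContDiffBump (0 : E) := ⟨r / 2, r, by positivity, by linarith⟩
  have hζ : ContDiff ℝ ∞ (ζ : E → ℝ) := ζ.contDiff
  obtain ⟨M, hM⟩ : ∃ M, ∀ p, ‖fderiv ℝ ζ p‖ ≤ M :=
    (hζ.continuous_fderiv (by simp)).bounded_above_of_compact_support
      (ζ.hasCompactSupport.fderiv (𝕜 := ℝ))
  lift M to ℝ≥0 using (norm_nonneg _).trans (hM 0)
  refine ⟨fun n => (n + 2) * M, fun n p => ζ p ^ (n + 1), fun n => hζ.pow _,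
    fun n => ζ.hasCompactSupport.comp_left (g := (· ^ (n + 1))) (by simp),
    fun n p => pow_nonneg ζ.nonneg _, fun n p => pow_le_one₀ ζ.nonneg ζ.le_one,
    fun n p => pow_le_pow_of_le_one ζ.nonneg ζ.le_one (Nat.le_succ _),
    fun n p hp => ?_, fun n p hp => ?_, fun n p => ?_⟩
  · have hsupp : p ∈ Function.support ζ := (pow_ne_zero_iff n.succ_ne_zero).1 hp
    rw [ζ.support_eq] at hsupp
    exact (mem_ball_zero_iff.1 hsupp).le
  · simp [ζ.one_of_mem_closedBall (mem_closedBall_zero_iff.2 hp)]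
  · have hderiv : fderiv ℝ (fun q => ζ q ^ (n + 2)) p =
        ((n + 2) * ζ p ^ (n + 1)) • fderiv ℝ ζ p := by
      simpa using ((hζ.differentiable (by simp) p).hasFDerivAt.pow (n + 2)).fderiv
    have hpow : 0 ≤ ζ p ^ (n + 1) := pow_nonneg ζ.nonneg _
    calc ‖fderiv ℝ (fun q => ζ q ^ (n + 2)) p‖
        = (n + 2) * ζ p ^ (n + 1) * ‖fderiv ℝ ζ p‖ := by
          rw [hderiv, norm_smul, Real.norm_of_nonneg (by positivity)]
      _ ≤ (n + 2) * ζ p ^ (n + 1) * M := by gcongr; exact hM p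
      _ = _ := by push_cast; ring

variable {r : ℝ} {A : ℕ → ℝ≥0} {η : ℕ → E → ℝ} (hη : IsCutoffSeq r A η)

include hη

theorem IsCutoffSeq.antitone : Antitone η := antitone_nat_of_succ_le hη.succ_le

theorem IsCutoffSeq.abs_dirDeriv_succ_le {v : E} (hv : ‖v‖ ≤ 1) (n : ℕ) (p : E) :
    |dirDeriv v (η (n + 1)) p| ≤ A n * η n p :=
  ((fderiv ℝ (η (n + 1)) p).le_of_opNorm_le_of_le (hη.norm_fderiv_succ_le n p) hv).trans_eq
    (mul_one _)

theorem IsCutoffSeq.integrable_energy [MeasurableSpace E] [BorelSpace E] {μ : Measure E}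
    [IsFiniteMeasureOnCompacts μ] {w : E → ℝ} (hw : Continuous w) (n : ℕ) :
    Integrable (fun p => (η n p * w p) ^ 2) μ :=
  integrable_mul_sq (hη.contDiff n).continuous (hη.hasCompactSupport n) hw

theorem IsCutoffSeq.energy_antitone [MeasurableSpace E] [BorelSpace E] {μ : Measure E}
    [IsFiniteMeasureOnCompacts μ] {w : E → ℝ} (hw : Continuous w) :
    Antitone fun n => energy μ (η n) w := fun m n hmn =>
  energy_le_energy_of_le (hη.contDiff m).continuous (hη.hasCompactSupport m)
    (hη.contDiff n).continuous (hη.hasCompactSupport n) hw (hη.nonneg n) (hη.antitone hmn)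

end Cutoff

section NormalizedSolutions

variable {z : Fin d} {K r : ℝ} {b : ℝ → ℝ} {c : ℝ → Fin d → Fin d → ℝ} {w : SpaceTime d → ℝ}

/-- Coefficients of the operator `b ∂_t + ∑ c_{jk} ∂_j ∂_k`, functions of the coordinate `z`
alone, bounded and elliptic with constant `K` and normalised so that `c_{zz} = 1`. -/
structure NormalizedCoeff (z : Fin d) (K : ℝ) (b : ℝ → ℝ) (c : ℝ → Fin d → Fin d → ℝ) :
    Prop where
  measurable_b : Measurable b
  measurable_c : ∀ j k, Measurable fun s => c s j k
  c_self : ∀ s, c s z z = 1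
  c_symm : ∀ s j k, c s j k = c s k j
  abs_c_le : ∀ s j k, |c s j k| ≤ K
  b_le : ∀ s, b s ≤ K
  le_b : ∀ s, K⁻¹ ≤ b s
  elliptic : ∀ s (θ : Fin d → ℝ), K⁻¹ * ∑ j, θ j ^ 2 ≤ ∑ j, ∑ k, c s j k * θ j * θ k

theorem NormalizedCoeff.one_le (hbc : NormalizedCoeff z K b c) : 1 ≤ K := by
  simpa [hbc.c_self] using hbc.abs_c_le 0 z z

theorem NormalizedCoeff.pos (hbc : NormalizedCoeff z K b c) : 0 < K :=
  one_pos.trans_le hbc.one_le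

theorem NormalizedCoeff.b_nonneg (hbc : NormalizedCoeff z K b c) (s : ℝ) : 0 ≤ b s :=
  (inv_nonneg.2 hbc.pos.le).trans (hbc.le_b s)

theorem NormalizedCoeff.abs_b_le (hbc : NormalizedCoeff z K b c) (s : ℝ) : |b s| ≤ K :=
  (abs_of_nonneg (hbc.b_nonneg s)).trans_le (hbc.b_le s)

/-- The operator `b ∂_t + ∑ c_{jk} ∂_j ∂_k`, its coefficients evaluated at the coordinate `z`. -/
noncomputable def parabolicOp (z : Fin d) (b : ℝ → ℝ) (c : ℝ → Fin d → Fin d → ℝ)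
    (w : SpaceTime d → ℝ) (p : SpaceTime d) : ℝ :=
  b (p.2 z) * pdt w p + ∑ j, ∑ k, c (p.2 z) j k * pdxx j k w p

/-- The closed upper half `t ≥ 0` of the ball of radius `r`. -/
def halfBall (d : ℕ) (r : ℝ) : Set (SpaceTime d) := {p | 0 ≤ p.1 ∧ ‖p‖ ≤ r}

/-- `w` is smooth and, near the half-ball of radius `r`, solves some equation with normalised
coefficients of constant `K`. The coefficients are existentially quantified so that estimates
uniform in them are estimates on this class of functions. -/
structure IsNormalizedSolution (z : Fin d) (K r : ℝ) (w : SpaceTime d → ℝ) : Prop where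
  contDiff : ContDiff ℝ ∞ w
  exists_coeff : ∃ b c, NormalizedCoeff z K b c ∧
    ∀ᶠ p in 𝓝ˢ (halfBall d r), parabolicOp z b c w p = 0

theorem contDiff_pdt (hw : ContDiff ℝ ∞ w) : ContDiff ℝ ∞ (pdt w) := contDiff_dirDeriv hw _

theorem contDiff_pdx (hw : ContDiff ℝ ∞ w) (j : Fin d) : ContDiff ℝ ∞ (pdx j w) :=
  contDiff_dirDeriv hw _

theorem parabolicOp_dirDeriv (hw : ContDiff ℝ ∞ w) (v : SpaceTime d) (p : SpaceTime d) :
    parabolicOp z b c (dirDeriv v w) p = b (p.2 z) * dirDeriv v (pdt w) p +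
      ∑ j, ∑ k, c (p.2 z) j k * dirDeriv v (pdxx j k w) p := by
  have hpdt : pdt (dirDeriv v w) = dirDeriv v (pdt w) := dirDeriv_comm hw _ _
  have hpdxx (j k : Fin d) : pdxx j k (dirDeriv v w) = dirDeriv v (pdxx j k w) :=
    (congrArg (pdx j) (dirDeriv_comm hw _ _)).trans (dirDeriv_comm (contDiff_pdx hw k) _ _)
  simp only [parabolicOp, hpdt, hpdxx]

theorem hasDerivAt_parabolicOp_comp_line (hw : ContDiff ℝ ∞ w) {v : SpaceTime d}
    (hv : v.2 z = 0) (p : SpaceTime d) :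
    HasDerivAt (fun s : ℝ => parabolicOp z b c w (p + s • v))
      (parabolicOp z b c (dirDeriv v w) p) 0 := by
  have hline {f : SpaceTime d → ℝ} (hf : ContDiff ℝ ∞ f) :
      HasDerivAt (fun s : ℝ => f (p + s • v)) (dirDeriv v f p) 0 := by
    simpa using hasDerivAt_comp_line (hf.differentiable (by simp)) v p 0
  have hcoord (s : ℝ) : (p + s • v).2 z = p.2 z := by simp [hv]
  rw [parabolicOp_dirDeriv hw]
  simp only [parabolicOp, hcoord]
  exact ((hline (contDiff_pdt hw)).const_mul _).add <| HasDerivAt.fun_sum fun j _ =>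
    HasDerivAt.fun_sum fun k _ => (hline (contDiff_pdx (contDiff_pdx hw k) j)).const_mul _

protected theorem IsNormalizedSolution.dirDeriv (hw : IsNormalizedSolution z K r w)
    {v : SpaceTime d} (hv : v.2 z = 0) : IsNormalizedSolution z K r (dirDeriv v w) := by
  obtain ⟨b, c, hbc, heq⟩ := hw.exists_coeff
  refine ⟨contDiff_dirDeriv hw.contDiff v, b, c, hbc, ?_⟩
  obtain ⟨U, hU, hsub, hzero⟩ := eventually_nhdsSet_iff_exists.1 heq
  refine eventually_nhdsSet_iff_exists.2 ⟨U, hU, hsub, fun p hp => ?_⟩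
  have hline : ContinuousAt (fun s : ℝ => p + s • v) 0 := by fun_prop
  have hlineU : ∀ᶠ s : ℝ in 𝓝 0, p + s • v ∈ U :=
    hline.eventually_mem (by simpa using hU.mem_nhds hp)
  have hconst : (fun s : ℝ => parabolicOp z b c w (p + s • v)) =ᶠ[𝓝 0] fun _ => 0 :=
    hlineU.mono fun s hs => hzero _ hs
  exact ((hasDerivAt_parabolicOp_comp_line hw.contDiff hv p).congr_of_eventuallyEq
    hconst.symm).unique (hasDerivAt_const 0 0)

protected theorem IsNormalizedSolution.pdt (hw : IsNormalizedSolution z K r w) :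
    IsNormalizedSolution z K r (pdt w) := hw.dirDeriv (v := (1, 0)) rfl

protected theorem IsNormalizedSolution.pdx (hw : IsNormalizedSolution z K r w) {k : Fin d}
    (hk : k ≠ z) : IsNormalizedSolution z K r (pdx k w) :=
  hw.dirDeriv (v := (0, Pi.single k 1)) (Pi.single_eq_of_ne hk.symm _)

end NormalizedSolutions

section EnergyEstimates

variable {z : Fin d} {K r : ℝ} {b : ℝ → ℝ} {c : ℝ → Fin d → Fin d → ℝ} {w ψ : SpaceTime d → ℝ}

theorem contDiff_mul_mul_sq {f g : SpaceTime d → ℝ} (hf : ContDiff ℝ ∞ f) (hg : ContDiff ℝ ∞ g)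
    (hψ : ContDiff ℝ ∞ ψ) : ContDiff ℝ ∞ fun p => f p * g p * ψ p ^ 2 :=
  (hf.mul hg).mul (hψ.pow 2)

theorem hasCompactSupport_mul_mul_sq (f g : SpaceTime d → ℝ) (hψ : HasCompactSupport ψ) :
    HasCompactSupport fun p => f p * g p * ψ p ^ 2 :=
  (hψ.comp_left (g := (· ^ 2)) (by simp)).mul_left

/-- The direction in which the term `c_{jk} ∂_j ∂_k w` is integrated by parts. It differs from
`z` unless `j = k = z`, so that `c_{jk}` is constant along it. -/
def fluxIndex (z j k : Fin d) : Fin d := if k = z then j else k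

/-- The direction of the first derivative left after integrating `c_{jk} ∂_j ∂_k w` by parts
along `fluxIndex z j k`. -/
def gradIndex (z j k : Fin d) : Fin d := if k = z then k else j

theorem measurable_apply_snd {f : ℝ → ℝ} (hf : Measurable f) (z : Fin d) :
    Measurable fun p : SpaceTime d => f (p.2 z) :=
  hf.comp ((measurable_pi_apply z).comp measurable_snd)

theorem NormalizedCoeff.integrable_c_mul_pdx (hbc : NormalizedCoeff z K b c)
    {G : SpaceTime d → ℝ} (hG : ContDiff ℝ ∞ G) (hc : HasCompactSupport G) (i j k : Fin d) :
    Integrable (fun p => c (p.2 z) j k * pdx i G p) (halfMeasure d) :=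
  integrable_mul_of_hasCompactSupport (measurable_apply_snd (hbc.measurable_c j k) z)
    (fun _ => hbc.abs_c_le _ j k) (contDiff_pdx hG i).continuous (hasCompactSupport_dirDeriv hc _)

theorem NormalizedCoeff.integrable_b_mul_pdt (hbc : NormalizedCoeff z K b c)
    {G : SpaceTime d → ℝ} (hG : ContDiff ℝ ∞ G) (hc : HasCompactSupport G) :
    Integrable (fun p => b (p.2 z) * pdt G p) (halfMeasure d) :=
  integrable_mul_of_hasCompactSupport (measurable_apply_snd hbc.measurable_b z)
    (fun _ => hbc.abs_b_le _) (contDiff_pdt hG).continuous (hasCompactSupport_dirDeriv hc _)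

theorem NormalizedCoeff.integral_c_mul_pdx_eq_zero (hbc : NormalizedCoeff z K b c)
    {G : SpaceTime d → ℝ} (hG : ContDiff ℝ ∞ G) (hc : HasCompactSupport G) (j k : Fin d) :
    ∫ p, c (p.2 z) j k * pdx (fluxIndex z j k) G p ∂halfMeasure d = 0 := by
  refine integral_halfMeasure_mul_dirDeriv_eq_zero rfl
    (measurable_apply_snd (hbc.measurable_c j k) z) (fun p => hbc.abs_c_le _ j k)
    (fun p s => ?_) hG hc
  by_cases hflux : fluxIndex z j k = z
  · obtain ⟨rfl, rfl⟩ : j = z ∧ k = z := by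
      unfold fluxIndex at hflux
      split_ifs at hflux with hk
      exacts [⟨hflux, hk⟩, absurd hflux hk]
    simp only [hbc.c_self]
  · simp [Pi.single_eq_of_ne' hflux]

theorem NormalizedCoeff.integrable_divergence_and_integral_eq_zero
    (hbc : NormalizedCoeff z K b c) {G : Fin d → Fin d → SpaceTime d → ℝ}
    (hG : ∀ j k, ContDiff ℝ ∞ (G j k)) (hc : ∀ j k, HasCompactSupport (G j k)) :
    Integrable (fun p => ∑ j, ∑ k, c (p.2 z) j k * pdx (fluxIndex z j k) (G j k) p)
        (halfMeasure d) ∧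
      ∫ p, ∑ j, ∑ k, c (p.2 z) j k * pdx (fluxIndex z j k) (G j k) p ∂halfMeasure d = 0 := by
  have hterm (j k : Fin d) := hbc.integrable_c_mul_pdx (hG j k) (hc j k) (fluxIndex z j k) j k
  have hrow (j : Fin d) := integrable_finsetSum Finset.univ fun k _ => hterm j k
  refine ⟨integrable_finsetSum _ fun j _ => hrow j, ?_⟩
  rw [integral_finsetSum _ fun j _ => hrow j]
  refine Finset.sum_eq_zero fun j _ => ?_
  rw [integral_finsetSum _ fun k _ => hterm j k]
  exact Finset.sum_eq_zero fun k _ => hbc.integral_c_mul_pdx_eq_zero (hG j k) (hc j k) j k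

theorem NormalizedCoeff.integral_b_mul_pdt_le (hbc : NormalizedCoeff z K b c)
    {G : SpaceTime d → ℝ} (hG : ContDiff ℝ ∞ G) (hc : HasCompactSupport G) (hG0 : ∀ p, 0 ≤ G p) :
    ∫ p, b (p.2 z) * pdt G p ∂halfMeasure d ≤ -(K⁻¹ * ∫ p, G p ∂sliceMeasure d) := by
  have hb : Measurable fun x : Fin d → ℝ => b (x z) :=
    hbc.measurable_b.comp (measurable_pi_apply z)
  have hint : Integrable (fun p => b (p.2 z) * G p) (sliceMeasure d) :=
    integrable_mul_of_hasCompactSupport (hb.comp measurable_snd) (fun p => hbc.abs_b_le _)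
      hG.continuous hc
  rw [integral_halfMeasure_mul_pdt hb (fun x => hbc.abs_b_le _) hG hc, ← integral_const_mul]
  refine neg_le_neg (integral_mono
    ((hG.continuous.integrable_of_hasCompactSupport hc).const_mul _) hint fun p => ?_)
  exact mul_le_mul_of_nonneg_right (hbc.le_b _) (hG0 p)

theorem integral_le_of_ae_le_add {X : Type*} [MeasurableSpace X] {μ : Measure X}
    {F D T G : X → ℝ} (hF : Integrable F μ) (hD : Integrable D μ) (hT : Integrable T μ)
    (hG : Integrable G μ) (hD0 : ∫ p, D p ∂μ = 0)
    (hle : ∀ᵐ p ∂μ, F p ≤ D p + T p / 2 + G p) :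
    ∫ p, F p ∂μ ≤ (∫ p, T p ∂μ) / 2 + ∫ p, G p ∂μ := by
  have hDT : Integrable (fun p => D p + T p / 2) μ := hD.add (hT.div_const 2)
  calc ∫ p, F p ∂μ ≤ ∫ p, (D p + T p / 2 + G p) ∂μ := integral_mono_ae hF (hDT.add hG) hle
    _ = (∫ p, T p ∂μ) / 2 + ∫ p, G p ∂μ := by
        rw [integral_add hDT hG, integral_add hD (hT.div_const 2), hD0, zero_add, integral_div]

theorem neg_mul_le_mul_two_mul {K ε c x y X Y : ℝ} (hε : 0 < ε) (hc : |c| ≤ K) (hx : x ^ 2 ≤ X)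
    (hy : y ^ 2 ≤ Y) : -(K * (ε * X + ε⁻¹ * Y)) ≤ c * (2 * x * y) := by
  have hyoung : |2 * x * y| ≤ ε * X + ε⁻¹ * Y := by
    calc |2 * x * y| = 2 * |x| * |y| := by simp [abs_mul]
      _ ≤ ε * |x| ^ 2 + ε⁻¹ * |y| ^ 2 := two_mul_le_add_mul_sq hε
      _ ≤ ε * X + ε⁻¹ * Y := by simp only [sq_abs]; gcongr
  refine neg_le_of_abs_le ?_
  rw [abs_mul]
  exact mul_le_mul hc hyoung (abs_nonneg _) ((abs_nonneg c).trans hc)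

theorem pdx_fluxIndex_mul_gradIndex (hw : ContDiff ℝ ∞ w) (hψ : ContDiff ℝ ∞ ψ)
    (j k : Fin d) (p : SpaceTime d) :
    pdx (fluxIndex z j k) (fun q => w q * pdx (gradIndex z j k) w q * ψ q ^ 2) p =
      ψ p ^ 2 * (pdx j w p * pdx k w p) + w p * ψ p ^ 2 * pdxx j k w p +
        2 * (ψ p * pdx (gradIndex z j k) w p) * (w p * pdx (fluxIndex z j k) ψ p) := by
  have hsecond : pdx (fluxIndex z j k) (pdx (gradIndex z j k) w) = pdxx j k w := by
    unfold fluxIndex gradIndex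
    split_ifs
    exacts [rfl, dirDeriv_comm hw _ _]
  have hfirst : pdx (fluxIndex z j k) w p * pdx (gradIndex z j k) w p =
      pdx j w p * pdx k w p := by
    unfold fluxIndex gradIndex
    split_ifs
    exacts [rfl, mul_comm _ _]
  rw [← hsecond, ← hfirst]
  exact (dirDeriv_mul_mul_sq (hw.differentiable (by simp))
    ((contDiff_pdx hw _).differentiable (by simp)) (hψ.differentiable (by simp)) _ p).trans
    (by simp only [pdx, dirDeriv]; ring)

theorem pdt_mul_self_mul_sq (hw : ContDiff ℝ ∞ w) (hψ : ContDiff ℝ ∞ ψ) (p : SpaceTime d) :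
    pdt (fun q => w q * w q * ψ q ^ 2) p =
      2 * (w p * ψ p ^ 2 * pdt w p + w p ^ 2 * ψ p * pdt ψ p) :=
  (dirDeriv_mul_mul_sq (hw.differentiable (by simp)) (hw.differentiable (by simp))
    (hψ.differentiable (by simp)) _ p).trans (by simp only [pdt, dirDeriv]; ring)

theorem caccioppoli_identity (hw : ContDiff ℝ ∞ w) (hψ : ContDiff ℝ ∞ ψ) (p : SpaceTime d) :
    ∑ j, ∑ k, c (p.2 z) j k *
        pdx (fluxIndex z j k) (fun q => w q * pdx (gradIndex z j k) w q * ψ q ^ 2) p +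
      b (p.2 z) * pdt (fun q => w q * w q * ψ q ^ 2) p / 2 =
    ψ p ^ 2 * ∑ j, ∑ k, c (p.2 z) j k * pdx j w p * pdx k w p +
      w p * ψ p ^ 2 * parabolicOp z b c w p +
      (∑ j, ∑ k, c (p.2 z) j k *
        (2 * (ψ p * pdx (gradIndex z j k) w p) * (w p * pdx (fluxIndex z j k) ψ p)) +
      b (p.2 z) * (w p ^ 2 * ψ p * pdt ψ p)) := by
  have hterm (j k : Fin d) : c (p.2 z) j k *
      pdx (fluxIndex z j k) (fun q => w q * pdx (gradIndex z j k) w q * ψ q ^ 2) p =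
        ψ p ^ 2 * (c (p.2 z) j k * pdx j w p * pdx k w p) +
          w p * ψ p ^ 2 * (c (p.2 z) j k * pdxx j k w p) + c (p.2 z) j k *
          (2 * (ψ p * pdx (gradIndex z j k) w p) * (w p * pdx (fluxIndex z j k) ψ p)) := by
    rw [pdx_fluxIndex_mul_gradIndex hw hψ]
    ring
  simp only [hterm, Finset.sum_add_distrib, ← Finset.mul_sum, pdt_mul_self_mul_sq hw hψ,
    parabolicOp]
  ring

variable {A : ℕ → ℝ≥0} {η : ℕ → SpaceTime d → ℝ}

theorem norm_pdt_direction_le : ‖((1, 0) : SpaceTime d)‖ ≤ 1 := by simp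

theorem norm_pdx_direction_le (j : Fin d) : ‖((0, Pi.single j 1) : SpaceTime d)‖ ≤ 1 := by
  simp [Prod.norm_def, Pi.norm_single]

theorem IsCutoffSeq.sq_mul_pdx_succ_le (hη : IsCutoffSeq r A η) (n : ℕ) (p : SpaceTime d)
    (j : Fin d) (x : ℝ) : (x * pdx j (η (n + 1)) p) ^ 2 ≤ A n ^ 2 * (η n p * x) ^ 2 := by
  have h := hη.abs_dirDeriv_succ_le (norm_pdx_direction_le j) n p
  calc (x * pdx j (η (n + 1)) p) ^ 2 = x ^ 2 * |pdx j (η (n + 1)) p| ^ 2 := by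
        rw [sq_abs]; ring
    _ ≤ x ^ 2 * (A n * η n p) ^ 2 := by gcongr; exact h
    _ = A n ^ 2 * (η n p * x) ^ 2 := by ring

theorem IsCutoffSeq.abs_mul_pdt_succ_le (hη : IsCutoffSeq r A η) (n : ℕ) (p : SpaceTime d)
    (x : ℝ) : |x ^ 2 * η (n + 1) p * pdt (η (n + 1)) p| ≤ A n * (η n p * x) ^ 2 := by
  have h := hη.abs_dirDeriv_succ_le norm_pdt_direction_le n p
  rw [abs_mul, abs_of_nonneg (mul_nonneg (sq_nonneg x) (hη.nonneg (n + 1) p))]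
  calc x ^ 2 * η (n + 1) p * |pdt (η (n + 1)) p| ≤ x ^ 2 * η n p * (A n * η n p) := by
        gcongr
        exacts [mul_nonneg (sq_nonneg x) (hη.nonneg n p), hη.succ_le n p, h]
    _ = A n * (η n p * x) ^ 2 := by ring

theorem IsCutoffSeq.mul_eq_zero_of_pos (hη : IsCutoffSeq r A η) {f : SpaceTime d → ℝ}
    (hf : ∀ᶠ p in 𝓝ˢ (halfBall d r), f p = 0) (n : ℕ) {p : SpaceTime d} (hp : 0 < p.1) :
    η n p * f p = 0 := by
  by_cases hηp : η n p = 0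
  · rw [hηp, zero_mul]
  · rw [hf.self_of_nhdsSet p ⟨hp.le, hη.norm_le_of_ne_zero n p hηp⟩, mul_zero]

theorem NormalizedCoeff.neg_le_caccioppoli_flux (hbc : NormalizedCoeff z K b c)
    (hη : IsCutoffSeq r A η) (n : ℕ) (p : SpaceTime d) :
    -(K⁻¹ / 2 * ∑ i, (η (n + 1) p * pdx i w p) ^ 2 +
        2 * K ^ 3 * d ^ 4 * A n ^ 2 * (η n p * w p) ^ 2) ≤
      ∑ j, ∑ k, c (p.2 z) j k * (2 * (η (n + 1) p * pdx (gradIndex z j k) w p) *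
        (w p * pdx (fluxIndex z j k) (η (n + 1)) p)) := by
  have hK := hbc.pos
  have hd : (0 : ℝ) < d := Nat.cast_pos.2 z.pos
  have hε : 0 < (2 * K ^ 2 * (d : ℝ) ^ 2)⁻¹ := by positivity
  calc _ = ∑ _j : Fin d, ∑ _k : Fin d, -(K * ((2 * K ^ 2 * (d : ℝ) ^ 2)⁻¹ *
          ∑ i, (η (n + 1) p * pdx i w p) ^ 2 +
            ((2 * K ^ 2 * (d : ℝ) ^ 2)⁻¹)⁻¹ * (A n ^ 2 * (η n p * w p) ^ 2))) := by
        simp only [Finset.sum_const, Finset.card_univ, Fintype.card_fin, nsmul_eq_mul]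
        field_simp
    _ ≤ _ := Finset.sum_le_sum fun j _ => Finset.sum_le_sum fun k _ =>
        neg_mul_le_mul_two_mul hε (hbc.abs_c_le _ j k)
          (Finset.single_le_sum (f := fun i => (η (n + 1) p * pdx i w p) ^ 2)
            (fun i _ => sq_nonneg _) (Finset.mem_univ (gradIndex z j k)))
          (hη.sq_mul_pdx_succ_le n p _ _)

theorem NormalizedCoeff.caccioppoli_pointwise (hbc : NormalizedCoeff z K b c)
    (hη : IsCutoffSeq r A η) (hw : ContDiff ℝ ∞ w) (n : ℕ) {p : SpaceTime d}
    (hp : η (n + 1) p * parabolicOp z b c w p = 0) :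
    K⁻¹ / 2 * ∑ j, (η (n + 1) p * pdx j w p) ^ 2 ≤
      ∑ j, ∑ k, c (p.2 z) j k * pdx (fluxIndex z j k)
          (fun q => w q * pdx (gradIndex z j k) w q * η (n + 1) q ^ 2) p +
        b (p.2 z) * pdt (fun q => w q * w q * η (n + 1) q ^ 2) p / 2 +
        (2 * K ^ 3 * d ^ 4 * A n ^ 2 + K * A n) * (η n p * w p) ^ 2 := by
  have hK := hbc.pos
  have hop : w p * η (n + 1) p ^ 2 * parabolicOp z b c w p = 0 := by
    rw [sq, mul_assoc, mul_assoc, hp, mul_zero, mul_zero]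
  have hell : K⁻¹ * ∑ j, (η (n + 1) p * pdx j w p) ^ 2 ≤
      η (n + 1) p ^ 2 * ∑ j, ∑ k, c (p.2 z) j k * pdx j w p * pdx k w p := by
    simp only [mul_pow, ← Finset.mul_sum]
    rw [mul_left_comm]
    gcongr
    exact hbc.elliptic _ _
  have hflux := hbc.neg_le_caccioppoli_flux hη n p (w := w)
  have htime : -(K * (A n * (η n p * w p) ^ 2)) ≤
      b (p.2 z) * (w p ^ 2 * η (n + 1) p * pdt (η (n + 1)) p) := by
    refine neg_le_of_abs_le ?_
    rw [abs_mul]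
    exact mul_le_mul (hbc.abs_b_le _) (hη.abs_mul_pdt_succ_le n p _) (abs_nonneg _) hK.le
  rw [caccioppoli_identity hw (hη.contDiff _), hop]
  linarith

theorem IsNormalizedSolution.caccioppoli (hη : IsCutoffSeq r A η)
    (hw : IsNormalizedSolution z K r w) (n : ℕ) :
    K⁻¹ / 2 * (∑ j, energy (halfMeasure d) (η (n + 1)) (pdx j w) +
        energy (sliceMeasure d) (η (n + 1)) w) ≤
      (2 * K ^ 3 * d ^ 4 * A n ^ 2 + K * A n) * energy (halfMeasure d) (η n) w := by
  obtain ⟨b, c, hbc, heq⟩ := hw.exists_coeff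
  have hws := hw.contDiff
  have htest {f : SpaceTime d → ℝ} (hf : ContDiff ℝ ∞ f) :=
    contDiff_mul_mul_sq hws hf (hη.contDiff (n + 1))
  have hsupp (f : SpaceTime d → ℝ) :=
    hasCompactSupport_mul_mul_sq w f (hη.hasCompactSupport (n + 1))
  obtain ⟨hdiv, hdiv_zero⟩ := hbc.integrable_divergence_and_integral_eq_zero
    (fun j k => htest (contDiff_pdx hws (gradIndex z j k))) (fun j k => hsupp _)
  have hgrad (j : Fin d) : Integrable (fun p => (η (n + 1) p * pdx j w p) ^ 2) (halfMeasure d) :=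
    hη.integrable_energy (contDiff_pdx hws j).continuous _
  have hslice : ∫ p, b (p.2 z) * pdt (fun q => w q * w q * η (n + 1) q ^ 2) p ∂halfMeasure d ≤
      -(K⁻¹ * energy (sliceMeasure d) (η (n + 1)) w) := by
    refine (hbc.integral_b_mul_pdt_le (htest hws) (hsupp w) fun p => ?_).trans_eq ?_
    · exact mul_nonneg (mul_self_nonneg _) (sq_nonneg _)
    · simp only [energy, mul_pow, ← sq, mul_comm]
  have hbalance := integral_le_of_ae_le_add
    ((integrable_finsetSum Finset.univ fun j _ => hgrad j).const_mul (K⁻¹ / 2)) hdiv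
    (hbc.integrable_b_mul_pdt (htest hws) (hsupp w))
    ((hη.integrable_energy hws.continuous n).const_mul _) hdiv_zero
    (ae_halfMeasure_fst_pos.mono fun p hp =>
      hbc.caccioppoli_pointwise hη hws n (hη.mul_eq_zero_of_pos heq (n + 1) hp))
  rw [integral_const_mul, integral_const_mul, integral_finsetSum _ fun j _ => hgrad j]
    at hbalance
  simp only [energy] at hslice ⊢
  linarith

theorem NormalizedCoeff.abs_normal_add_time_le (hbc : NormalizedCoeff z K b c)
    {S : Fin d → Fin d → ℝ} (hS : ∀ j k, S j k = S k j) {s x : ℝ}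
    (heq : b s * x + ∑ j, ∑ k, c s j k * S j k = 0) :
    |S z z + b s * x| ≤ 2 * K * ∑ j, ∑ k with k ≠ z, |S j k| := by
  have hK := hbc.pos
  have hcol {f : Fin d → ℝ} : ∑ k, f k = f z + ∑ k with k ≠ z, f k := by
    rw [Finset.filter_ne' Finset.univ z, Finset.add_sum_erase _ _ (Finset.mem_univ z)]
  have hterm (j k : Fin d) : |c s j k * S j k| ≤ K * |S j k| := by
    rw [abs_mul]
    exact mul_le_mul_of_nonneg_right (hbc.abs_c_le s j k) (abs_nonneg _)
  have hsplit : S z z + b s * x =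
      -(∑ j with j ≠ z, c s z j * S z j + ∑ j, ∑ k with k ≠ z, c s j k * S j k) := by
    have hswap : ∑ j with j ≠ z, c s j z * S j z = ∑ j with j ≠ z, c s z j * S z j :=
      Finset.sum_congr rfl fun j _ => by rw [hbc.c_symm, hS]
    have hrow (j : Fin d) : ∑ k, c s j k * S j k =
        c s j z * S j z + ∑ k with k ≠ z, c s j k * S j k := hcol
    simp only [hrow, Finset.sum_add_distrib] at heq
    rw [hcol (f := fun j => c s j z * S j z), hbc.c_self, hswap] at heq
    linarith
  have hcross : |∑ j with j ≠ z, c s z j * S z j| ≤ K * ∑ j, ∑ k with k ≠ z, |S j k| := by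
    refine (Finset.abs_sum_le_sum_abs _ _).trans ((Finset.sum_le_sum fun j _ => hterm z j).trans ?_)
    rw [← Finset.mul_sum]
    gcongr
    exact Finset.single_le_sum (f := fun j => ∑ k with k ≠ z, |S j k|)
      (fun j _ => Finset.sum_nonneg fun k _ => abs_nonneg _) (Finset.mem_univ z)
  have htangential : |∑ j, ∑ k with k ≠ z, c s j k * S j k| ≤
      K * ∑ j, ∑ k with k ≠ z, |S j k| := by
    simp only [Finset.mul_sum]
    exact (Finset.abs_sum_le_sum_abs _ _).trans <| Finset.sum_le_sum fun j _ =>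
      (Finset.abs_sum_le_sum_abs _ _).trans <| Finset.sum_le_sum fun k _ => hterm j k
  rw [hsplit, abs_neg]
  linarith [abs_add_le (∑ j with j ≠ z, c s z j * S z j)
    (∑ j, ∑ k with k ≠ z, c s j k * S j k)]

theorem NormalizedCoeff.normal_add_time_sq_le (hbc : NormalizedCoeff z K b c)
    {S : Fin d → Fin d → ℝ} (hS : ∀ j k, S j k = S k j) {s x : ℝ}
    (heq : b s * x + ∑ j, ∑ k, c s j k * S j k = 0) :
    (S z z + b s * x) ^ 2 ≤ 4 * K ^ 2 * d ^ 2 * ∑ j, ∑ k with k ≠ z, S j k ^ 2 := by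
  set T : Finset (Fin d × Fin d) := Finset.univ ×ˢ ({k | k ≠ z} : Finset (Fin d))
  have hcard : (T.card : ℝ) ≤ (d : ℝ) ^ 2 := by
    have h := Finset.card_le_univ T
    rw [Fintype.card_prod, Fintype.card_fin, ← sq] at h
    exact_mod_cast h
  have hcauchy : (∑ j, ∑ k with k ≠ z, |S j k|) ^ 2 ≤
      (d : ℝ) ^ 2 * ∑ j, ∑ k with k ≠ z, S j k ^ 2 := by
    have h := sq_sum_le_card_mul_sum_sq (s := T) (f := fun jk => |S jk.1 jk.2|)
    simp only [sq_abs, T, Finset.sum_product] at h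
    exact h.trans (mul_le_mul_of_nonneg_right hcard <| Finset.sum_nonneg fun j _ =>
      Finset.sum_nonneg fun k _ => sq_nonneg _)
  calc (S z z + b s * x) ^ 2 ≤ (2 * K * ∑ j, ∑ k with k ≠ z, |S j k|) ^ 2 :=
        sq_le_sq.2 ((hbc.abs_normal_add_time_le hS heq).trans (le_abs_self _))
    _ = 4 * K ^ 2 * (∑ j, ∑ k with k ≠ z, |S j k|) ^ 2 := by ring
    _ ≤ 4 * K ^ 2 * (d ^ 2 * ∑ j, ∑ k with k ≠ z, S j k ^ 2) := by gcongr
    _ = _ := by ring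

theorem time_derivative_identity (hw : ContDiff ℝ ∞ w) (hψ : ContDiff ℝ ∞ ψ) (p : SpaceTime d) :
    -1 * pdx z (fun q => pdx z w q * pdt w q * ψ q ^ 2) p +
        1 * pdt (fun q => pdx z w q * pdx z w q * ψ q ^ 2) p / 2 =
      -(ψ p ^ 2 * pdxx z z w p * pdt w p) - 2 * (ψ p * pdt w p) * (pdx z w p * pdx z ψ p) +
        pdx z w p ^ 2 * ψ p * pdt ψ p := by
  have hflux : pdx z (fun q => pdx z w q * pdt w q * ψ q ^ 2) p =
      (pdxx z z w p * pdt w p + pdx z w p * pdx z (pdt w) p) * ψ p ^ 2 +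
        2 * (pdx z w p * pdt w p) * ψ p * pdx z ψ p :=
    dirDeriv_mul_mul_sq ((contDiff_pdx hw z).differentiable (by simp))
      ((contDiff_pdt hw).differentiable (by simp)) (hψ.differentiable (by simp)) _ p
  have hmixed : pdx z (pdt w) = pdt (pdx z w) := dirDeriv_comm hw _ _
  rw [hflux, hmixed, pdt_mul_self_mul_sq (contDiff_pdx hw z) hψ]
  ring

theorem NormalizedCoeff.time_derivative_pointwise (hbc : NormalizedCoeff z K b c)
    (hη : IsCutoffSeq r A η) (hw : ContDiff ℝ ∞ w) (n : ℕ) {p : SpaceTime d}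
    (hp : η (n + 1) p * parabolicOp z b c w p = 0) :
    K⁻¹ / 2 * (η (n + 1) p * pdt w p) ^ 2 ≤
      -1 * pdx z (fun q => pdx z w q * pdt w q * η (n + 1) q ^ 2) p +
        1 * pdt (fun q => pdx z w q * pdx z w q * η (n + 1) q ^ 2) p / 2 +
        ((4 * K * A n ^ 2 + A n) * (η n p * pdx z w p) ^ 2 +
          4 * K ^ 3 * d ^ 2 * ∑ j, ∑ k with k ≠ z, (η (n + 1) p * pdxx j k w p) ^ 2) := by
  have hK := hbc.pos
  set ψ := η (n + 1) p
  have hrest := hbc.normal_add_time_sq_le (S := fun j k => ψ * pdxx j k w p) (s := p.2 z)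
    (x := ψ * pdt w p)
    (fun j k => congrArg (ψ * · p) (dirDeriv_comm hw _ _)) (by
      rw [← hp, parabolicOp, mul_add, Finset.mul_sum]
      simp only [Finset.mul_sum, mul_left_comm])
  have htransport : K⁻¹ * (ψ * pdt w p) ^ 2 ≤ b (p.2 z) * (ψ * pdt w p) ^ 2 :=
    mul_le_mul_of_nonneg_right (hbc.le_b _) (sq_nonneg _)
  have hyoung_rest := neg_mul_le_mul_two_mul (K := 1 / 2) (c := -(1 / 2)) (ε := K⁻¹ / 2)
    (by positivity) (by norm_num) (le_refl ((ψ * pdt w p) ^ 2)) hrest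
  have hyoung_cutoff := neg_mul_le_mul_two_mul (K := 1) (c := -1) (ε := K⁻¹ / 4)
    (by positivity) (by norm_num) (le_refl ((ψ * pdt w p) ^ 2))
    (hη.sq_mul_pdx_succ_le n p z (pdx z w p))
  have hcutoff_time := neg_le_of_abs_le (hη.abs_mul_pdt_succ_le n p (pdx z w p))
  rw [time_derivative_identity hw (hη.contDiff _)]
  have hinv2 : (K⁻¹ / 2)⁻¹ = 2 * K := by field_simp
  have hinv4 : (K⁻¹ / 4)⁻¹ = 4 * K := by field_simp
  rw [hinv2] at hyoung_rest
  rw [hinv4] at hyoung_cutoff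
  linarith

theorem integral_pdt_mul_self_mul_sq {f : SpaceTime d → ℝ} (hf : ContDiff ℝ ∞ f)
    (hψ : ContDiff ℝ ∞ ψ) (hc : HasCompactSupport ψ) :
    ∫ p, 1 * pdt (fun q => f q * f q * ψ q ^ 2) p ∂halfMeasure d =
      -energy (sliceMeasure d) ψ f := by
  refine (integral_halfMeasure_mul_pdt (f := fun _ => (1 : ℝ)) measurable_const
    (fun _ => le_rfl) (contDiff_mul_mul_sq hf hf hψ)
    (hasCompactSupport_mul_mul_sq f f hc)).trans ?_
  simp only [one_mul]
  simp only [energy, mul_pow, ← sq, mul_comm]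

theorem IsNormalizedSolution.time_derivative_estimate (hη : IsCutoffSeq r A η)
    (hw : IsNormalizedSolution z K r w) (n : ℕ) :
    K⁻¹ / 2 * energy (halfMeasure d) (η (n + 1)) (pdt w) +
        energy (sliceMeasure d) (η (n + 1)) (pdx z w) / 2 ≤
      (4 * K * A n ^ 2 + A n) * energy (halfMeasure d) (η n) (pdx z w) +
        4 * K ^ 3 * d ^ 2 *
          ∑ j, ∑ k with k ≠ z, energy (halfMeasure d) (η (n + 1)) (pdxx j k w) := by
  obtain ⟨b, c, hbc, heq⟩ := hw.exists_coeff
  have hwz := contDiff_pdx hw.contDiff z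
  have hwt := contDiff_pdt hw.contDiff
  have htest {f : SpaceTime d → ℝ} (hf : ContDiff ℝ ∞ f) :=
    contDiff_mul_mul_sq hwz hf (hη.contDiff (n + 1))
  have hsupp (f : SpaceTime d → ℝ) :=
    hasCompactSupport_mul_mul_sq (pdx z w) f (hη.hasCompactSupport (n + 1))
  have hhess (jk : Fin d × Fin d) := hη.integrable_energy (μ := halfMeasure d)
    (contDiff_pdx (contDiff_pdx hw.contDiff jk.2) jk.1).continuous (n + 1)
  let T : Finset (Fin d × Fin d) := Finset.univ ×ˢ ({k | k ≠ z} : Finset (Fin d))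
  have hhess_sum := integrable_finsetSum T fun jk _ => hhess jk
  have hhess_integral := integral_finsetSum T fun jk _ => hhess jk
  simp only [T, Finset.sum_product] at hhess_sum hhess_integral
  have hflux (v : SpaceTime d) (a : ℝ) {f : SpaceTime d → ℝ} (hf : ContDiff ℝ ∞ f) :
      Integrable (fun p => a * dirDeriv v (fun q => pdx z w q * f q * η (n + 1) q ^ 2) p)
        (halfMeasure d) :=
    integrable_mul_of_hasCompactSupport measurable_const (fun _ => le_rfl)
      (contDiff_dirDeriv (htest hf) v).continuous (hasCompactSupport_dirDeriv (hsupp f) v)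
  have htime : Integrable (fun p => 1 * pdt (fun q => pdx z w q * pdx z w q * η (n + 1) q ^ 2) p)
    (halfMeasure d) := hflux (1, 0) 1 hwz
  have hbalance := integral_le_of_ae_le_add
    ((hη.integrable_energy hwt.continuous (n + 1)).const_mul (K⁻¹ / 2))
    (hflux (0, Pi.single z 1) (-1) hwt) htime
    (((hη.integrable_energy hwz.continuous n).const_mul _).add (hhess_sum.const_mul _))
    (integral_halfMeasure_mul_dirDeriv_eq_zero rfl measurable_const (fun _ => le_rfl)
      (fun _ _ => rfl) (htest hwt) (hsupp _))
    (ae_halfMeasure_fst_pos.mono fun p hp =>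
      hbc.time_derivative_pointwise hη hw.contDiff n (hη.mul_eq_zero_of_pos heq (n + 1) hp))
  rw [integral_pdt_mul_self_mul_sq hwz (hη.contDiff _) (hη.hasCompactSupport _),
    integral_add' ((hη.integrable_energy hwz.continuous n).const_mul _)
      (hhess_sum.const_mul _), integral_const_mul, integral_const_mul, integral_const_mul,
    hhess_integral] at hbalance
  simp only [energy, pdxx] at hbalance ⊢
  linarith

end EnergyEstimates

section EnergyControlled

variable {z : Fin d} {K r : ℝ} {φ ψ : SpaceTime d → ℝ} {Φ Ψ : (SpaceTime d → ℝ) → ENNReal}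

/-- The functional `Φ` is bounded, on normalised solutions, by a constant multiple of the energy
in the upper half-space with cutoff `φ`. -/
def EnergyControlled (z : Fin d) (K r : ℝ) (φ : SpaceTime d → ℝ)
    (Φ : (SpaceTime d → ℝ) → ENNReal) : Prop :=
  ∃ C : ℝ≥0, ∀ w, IsNormalizedSolution z K r w →
    Φ w ≤ C * ENNReal.ofReal (energy (halfMeasure d) φ w)

theorem energyControlled_ofReal {f : (SpaceTime d → ℝ) → ℝ} {C : ℝ}
    (h : ∀ w, IsNormalizedSolution z K r w → f w ≤ C * energy (halfMeasure d) φ w) :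
    EnergyControlled z K r φ fun w => ENNReal.ofReal (f w) :=
  ⟨C.toNNReal, fun w hw =>
    (ENNReal.ofReal_le_ofReal (h w hw)).trans_eq (ENNReal.ofReal_mul' energy_nonneg)⟩

namespace EnergyControlled

theorem mono (hΨ : EnergyControlled z K r φ Ψ)
    (h : ∀ w, IsNormalizedSolution z K r w → Φ w ≤ Ψ w) : EnergyControlled z K r φ Φ :=
  hΨ.imp fun _ hC w hw => (h w hw).trans (hC w hw)

theorem add (hΦ : EnergyControlled z K r φ Φ) (hΨ : EnergyControlled z K r φ Ψ) :
    EnergyControlled z K r φ fun w => Φ w + Ψ w := by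
  obtain ⟨C, hC⟩ := hΦ
  obtain ⟨D, hD⟩ := hΨ
  refine ⟨C + D, fun w hw => (add_le_add (hC w hw) (hD w hw)).trans_eq ?_⟩
  rw [ENNReal.coe_add, add_mul]

theorem const_mul (hΦ : EnergyControlled z K r φ Φ) (c : ℝ≥0) :
    EnergyControlled z K r φ fun w => c * Φ w := by
  obtain ⟨C, hC⟩ := hΦ
  refine ⟨c * C, fun w hw => (mul_le_mul_right (hC w hw) c).trans_eq ?_⟩
  rw [ENNReal.coe_mul, mul_assoc]

theorem sum {ι : Type*} {s : Finset ι} {Φ : ι → (SpaceTime d → ℝ) → ENNReal}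
    (hΦ : ∀ i ∈ s, EnergyControlled z K r φ (Φ i)) :
    EnergyControlled z K r φ fun w => ∑ i ∈ s, Φ i w := by
  choose! C hC using hΦ
  refine ⟨∑ i ∈ s, C i, fun w hw => (Finset.sum_le_sum fun i hi => hC i hi w hw).trans_eq ?_⟩
  rw [← Finset.sum_mul, ENNReal.ofNNReal_finsetSum]

theorem comp (hΦ : EnergyControlled z K r φ Φ) {D : (SpaceTime d → ℝ) → SpaceTime d → ℝ}
    (hD : ∀ w, IsNormalizedSolution z K r w → IsNormalizedSolution z K r (D w))
    (h : EnergyControlled z K r ψ fun w => ENNReal.ofReal (energy (halfMeasure d) φ (D w))) :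
    EnergyControlled z K r ψ fun w => Φ (D w) := by
  obtain ⟨C, hC⟩ := hΦ
  exact (h.const_mul C).mono fun w hw => hC (D w) (hD w hw)

end EnergyControlled

namespace IsCutoffSeq

variable {A : ℕ → ℝ≥0} {η : ℕ → SpaceTime d → ℝ} (hη : IsCutoffSeq r A η)

include hη

theorem energyControlled_of_le {m n : ℕ} (hnm : n ≤ m) (hΦ : EnergyControlled z K r (η m) Φ) :
    EnergyControlled z K r (η n) Φ :=
  hΦ.comp (D := id) (fun _ hw => hw) <| energyControlled_ofReal (C := 1) fun w hw => by
    simpa using hη.energy_antitone hw.contDiff.continuous hnm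

theorem energyControlled_gradient_add_slice (n : ℕ) :
    EnergyControlled z K r (η n) fun w => ENNReal.ofReal
      (∑ j, energy (halfMeasure d) (η (n + 1)) (pdx j w) +
        energy (sliceMeasure d) (η (n + 1)) w) := by
  refine energyControlled_ofReal
    (C := 2 * K * (2 * K ^ 3 * d ^ 4 * A n ^ 2 + K * A n)) fun w hw => ?_
  obtain ⟨b, c, hbc, -⟩ := hw.exists_coeff
  have hK := hbc.pos
  have h := mul_le_mul_of_nonneg_left (hw.caccioppoli hη n) (by positivity : 0 ≤ 2 * K)
  rwa [← mul_assoc, ← mul_assoc, show 2 * K * (K⁻¹ / 2) = 1 by field_simp, one_mul] at h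

theorem energyControlled_pdx (j : Fin d) (n : ℕ) :
    EnergyControlled z K r (η n) fun w =>
      ENNReal.ofReal (energy (halfMeasure d) (η (n + 1)) (pdx j w)) :=
  (hη.energyControlled_gradient_add_slice n).mono fun w _ => ENNReal.ofReal_le_ofReal <|
    (Finset.single_le_sum (f := fun j => energy (halfMeasure d) (η (n + 1)) (pdx j w))
      (fun _ _ => energy_nonneg) (Finset.mem_univ j)).trans (le_add_of_nonneg_right energy_nonneg)

theorem energyControlled_slice (n : ℕ) :
    EnergyControlled z K r (η n) fun w =>
      ENNReal.ofReal (energy (sliceMeasure d) (η (n + 1)) w) :=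
  (hη.energyControlled_gradient_add_slice n).mono fun _ _ => ENNReal.ofReal_le_ofReal <|
    le_add_of_nonneg_left (Finset.sum_nonneg fun _ _ => energy_nonneg)

theorem energyControlled_pdxx (j : Fin d) {k : Fin d} (hk : k ≠ z) (n : ℕ) :
    EnergyControlled z K r (η n) fun w =>
      ENNReal.ofReal (energy (halfMeasure d) (η (n + 2)) (pdxx j k w)) :=
  (hη.energyControlled_pdx j (n + 1)).comp (fun _ hw => hw.pdx hk) (hη.energyControlled_pdx k n)

theorem energyControlled_pdt_add_slice_pdx (n : ℕ) :
    EnergyControlled z K r (η n) fun w => ENNReal.ofReal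
      (energy (halfMeasure d) (η (n + 3)) (pdt w) +
        energy (sliceMeasure d) (η (n + 3)) (pdx z w)) := by
  have hgrad : EnergyControlled z K r (η n) fun w =>
      ENNReal.ofReal (energy (halfMeasure d) (η (n + 2)) (pdx z w)) :=
    hη.energyControlled_of_le n.le_succ (hη.energyControlled_pdx z (n + 1))
  have hhess : EnergyControlled z K r (η n) fun w => ∑ j, ∑ k with k ≠ z,
      ENNReal.ofReal (energy (halfMeasure d) (η (n + 3)) (pdxx j k w)) :=
    hη.energyControlled_of_le n.le_succ <| EnergyControlled.sum fun j _ =>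
      EnergyControlled.sum fun k hk =>
        hη.energyControlled_pdxx j (Finset.mem_filter.1 hk).2 (n + 1)
  refine ((hgrad.const_mul (2 * K * (4 * K * A (n + 2) ^ 2 + A (n + 2))).toNNReal).add
    (hhess.const_mul (2 * K * (4 * K ^ 3 * d ^ 2)).toNNReal)).mono fun w hw => ?_
  obtain ⟨b, c, hbc, -⟩ := hw.exists_coeff
  have hK := hbc.pos
  have hestimate := mul_le_mul_of_nonneg_left (hw.time_derivative_estimate hη (n + 2))
    (by positivity : 0 ≤ 2 * K)
  have hslice : energy (sliceMeasure d) (η (n + 3)) (pdx z w) ≤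
      K * energy (sliceMeasure d) (η (n + 3)) (pdx z w) :=
    le_mul_of_one_le_left energy_nonneg hbc.one_le
  simp only [← ENNReal.ofReal_sum_of_nonneg (fun _ _ => energy_nonneg),
    ← ENNReal.ofReal_sum_of_nonneg (fun _ _ => Finset.sum_nonneg fun _ _ => energy_nonneg)]
  rw [← ENNReal.ofReal, ← ENNReal.ofReal, ← ENNReal.ofReal_mul' energy_nonneg,
    ← ENNReal.ofReal_mul (by positivity), ← ENNReal.ofReal_add
      (mul_nonneg (by positivity) energy_nonneg) (mul_nonneg (by positivity)
        (Finset.sum_nonneg fun _ _ => Finset.sum_nonneg fun _ _ => energy_nonneg))]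
  refine ENNReal.ofReal_le_ofReal ?_
  have hinv : 2 * K * (K⁻¹ / 2) = 1 := by field_simp
  rw [mul_add, ← mul_assoc, hinv] at hestimate
  linarith

theorem energyControlled_pdt (n : ℕ) :
    EnergyControlled z K r (η n) fun w =>
      ENNReal.ofReal (energy (halfMeasure d) (η (n + 3)) (pdt w)) :=
  (hη.energyControlled_pdt_add_slice_pdx n).mono fun _ _ =>
    ENNReal.ofReal_le_ofReal (le_add_of_nonneg_right energy_nonneg)

theorem energyControlled_slice_pdx (n : ℕ) :
    EnergyControlled z K r (η n) fun w =>
      ENNReal.ofReal (energy (sliceMeasure d) (η (n + 3)) (pdx z w)) :=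
  (hη.energyControlled_pdt_add_slice_pdx n).mono fun _ _ =>
    ENNReal.ofReal_le_ofReal (le_add_of_nonneg_left energy_nonneg)

theorem energyControlled_comp_pdt (hΦ : ∀ n, EnergyControlled z K r (η n) Φ) (n : ℕ) :
    EnergyControlled z K r (η n) fun w => Φ (pdt w) :=
  (hΦ (n + 3)).comp (fun _ hw => hw.pdt) (hη.energyControlled_pdt n)

theorem energyControlled_comp_pdx (hΦ : ∀ n, EnergyControlled z K r (η n) Φ) {k : Fin d}
    (hk : k ≠ z) (n : ℕ) : EnergyControlled z K r (η n) fun w => Φ (pdx k w) :=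
  (hΦ (n + 1)).comp (fun _ hw => hw.pdx hk) (hη.energyControlled_pdx k n)

theorem energyControlled_pdx_of_pdx_self (hΦ : ∀ n, EnergyControlled z K r (η n) Φ)
    (hΦz : ∀ n, EnergyControlled z K r (η n) fun w => Φ (pdx z w)) (j : Fin d) (n : ℕ) :
    EnergyControlled z K r (η n) fun w => Φ (pdx j w) := by
  rcases eq_or_ne j z with rfl | hj
  · exact hΦz n
  · exact hη.energyControlled_comp_pdx hΦ hj n

end IsCutoffSeq

end EnergyControlled

section Sobolev

section Interval

variable {g g' : ℝ → ℝ} {a b s₀ : ℝ}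

theorem sq_le_sq_add_setIntegral (hg : ∀ s, HasDerivAt g (g' s) s) (hg' : Continuous g') {s : ℝ}
    (hs₀ : s₀ ∈ Set.Icc a b) (hs : s ∈ Set.Icc a b) :
    g s₀ ^ 2 ≤ g s ^ 2 + ∫ x in Set.Icc a b, (g x ^ 2 + g' x ^ 2) := by
  have hgc : Continuous g := continuous_iff_continuousAt.2 fun s => (hg s).continuousAt
  have hint : IntegrableOn (fun x => g x ^ 2 + g' x ^ 2) (Set.Icc a b) :=
    (by fun_prop : Continuous fun x => g x ^ 2 + g' x ^ 2).integrableOn_Icc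
  have hsub : Set.uIoc s s₀ ⊆ Set.Icc a b :=
    Set.uIoc_subset_uIcc.trans (Set.uIcc_subset_Icc hs hs₀)
  have hderiv (x : ℝ) : HasDerivAt (fun x => g x ^ 2) (2 * g x * g' x) x := by
    simpa using (hg x).fun_pow 2
  have hftc : ∫ x in s..s₀, 2 * g x * g' x = g s₀ ^ 2 - g s ^ 2 :=
    intervalIntegral.integral_eq_sub_of_hasDerivAt (fun x _ => hderiv x)
      (Continuous.intervalIntegrable (by fun_prop) _ _)
  have hbound : ‖∫ x in s..s₀, 2 * g x * g' x‖ ≤ ∫ x in Set.Icc a b, (g x ^ 2 + g' x ^ 2) :=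
    calc ‖∫ x in s..s₀, 2 * g x * g' x‖
        ≤ ∫ x in Set.uIoc s s₀, ‖2 * g x * g' x‖ :=
          intervalIntegral.norm_integral_le_integral_norm_uIoc
      _ ≤ ∫ x in Set.uIoc s s₀, (g x ^ 2 + g' x ^ 2) := by
          refine integral_mono_of_nonneg (.of_forall fun _ => norm_nonneg _)
            (hint.mono_set hsub) (.of_forall fun x => ?_)
          exact abs_le.2 ⟨by nlinarith [sq_nonneg (g x + g' x)], two_mul_le_add_sq _ _⟩
      _ ≤ ∫ x in Set.Icc a b, (g x ^ 2 + g' x ^ 2) :=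
          setIntegral_mono_set hint (.of_forall fun _ => by positivity) hsub.eventuallyLE
  linarith [le_of_abs_le (hftc ▸ hbound)]

theorem sq_le_mul_setIntegral (hg : ∀ s, HasDerivAt g (g' s) s) (hg' : Continuous g')
    (hab : a < b) (hs₀ : s₀ ∈ Set.Icc a b) :
    g s₀ ^ 2 ≤ (1 + (b - a)⁻¹) * ∫ x in Set.Icc a b, (g x ^ 2 + g' x ^ 2) := by
  have hgc : Continuous g := continuous_iff_continuousAt.2 fun s => (hg s).continuousAt
  have hint : IntegrableOn (fun x => g x ^ 2 + g' x ^ 2) (Set.Icc a b) :=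
    (by fun_prop : Continuous fun x => g x ^ 2 + g' x ^ 2).integrableOn_Icc
  set I := ∫ x in Set.Icc a b, (g x ^ 2 + g' x ^ 2)
  have hmean : ∫ _ in Set.Icc a b, g s₀ ^ 2 ≤ ∫ x in Set.Icc a b, (g x ^ 2 + g' x ^ 2 + I) := by
    refine setIntegral_mono_on (integrableOn_const (by simp))
      (hint.add (integrableOn_const (by simp))) measurableSet_Icc fun s hs => ?_
    linarith [sq_le_sq_add_setIntegral hg hg' hs₀ hs, sq_nonneg (g' s)]
  rw [integral_add hint (integrableOn_const (by simp)), setIntegral_const, setIntegral_const,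
    smul_eq_mul, smul_eq_mul, Real.volume_real_Icc_of_le hab.le] at hmean
  have hpos : 0 < b - a := sub_pos.2 hab
  refine le_of_mul_le_mul_left (hmean.trans_eq ?_) hpos
  field_simp
  ring

end Interval

variable {ι : Type*} [Fintype ι] {f : (ι → ℝ) → ℝ} {ρ : ℝ}

/-- The density `f ²` restricted to the cube `[-ρ, ρ]^ι`. -/
noncomputable def cubeDensity (ρ : ℝ) (f : (ι → ℝ) → ℝ) : (ι → ℝ) → ENNReal :=
  (Metric.closedBall 0 ρ).indicator fun x => ENNReal.ofReal (f x ^ 2)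

theorem measurable_cubeDensity (hf : Continuous f) : Measurable (cubeDensity ρ f) :=
  (hf.pow 2).measurable.ennreal_ofReal.indicator Metric.isClosed_closedBall.measurableSet

variable [DecidableEq ι]

theorem update_mem_closedBall_iff {y : ι → ℝ} (hρ : 0 ≤ ρ) (hy : y ∈ Metric.closedBall 0 ρ)
    (i : ι) (s : ℝ) :
    Function.update y i s ∈ Metric.closedBall (0 : ι → ℝ) ρ ↔ s ∈ Set.Icc (-ρ) ρ := by
  rw [mem_closedBall_zero_iff, pi_norm_le_iff_of_nonneg hρ] at hy ⊢
  rw [Function.forall_update_iff y fun _ x => ‖x‖ ≤ ρ, Real.norm_eq_abs, abs_le, Set.mem_Icc]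
  exact and_iff_left fun j _ => hy j

theorem hasDerivAt_comp_update (hf : Differentiable ℝ f) (y : ι → ℝ) (i : ι) (s : ℝ) :
    HasDerivAt (fun s => f (Function.update y i s))
      (dirDeriv (Pi.single i 1) f (Function.update y i s)) s :=
  (hf (Function.update y i s)).hasFDerivAt.comp_hasDerivAt s (hasDerivAt_update y i s)

theorem cubeDensity_le_lintegral_update (hρ : 0 < ρ) (hf : ContDiff ℝ 1 f) (i : ι)
    (y : ι → ℝ) :
    cubeDensity ρ f y ≤ ∫⁻ s, ENNReal.ofReal (1 + (2 * ρ)⁻¹) *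
      (cubeDensity ρ f (Function.update y i s) +
        cubeDensity ρ (dirDeriv (Pi.single i 1) f) (Function.update y i s)) := by
  by_cases hy : y ∈ Metric.closedBall 0 ρ
  swap
  · simp [cubeDensity, hy]
  set f' := dirDeriv (Pi.single i 1) f
  have hf' : Continuous f' := (hf.continuous_fderiv one_ne_zero).clm_apply continuous_const
  have hfc := hf.continuous
  have hmem := update_mem_closedBall_iff hρ.le hy i
  have hyi : y i ∈ Set.Icc (-ρ) ρ := (hmem (y i)).1 (by rwa [Function.update_eq_self])
  have hsobolev := sq_le_mul_setIntegral
    (hasDerivAt_comp_update (hf.differentiable one_ne_zero) y i)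
    (hf'.comp (continuous_const.update i continuous_id)) (neg_lt_self hρ) hyi
  have hdensity (s : ℝ) : cubeDensity ρ f (Function.update y i s) +
      cubeDensity ρ f' (Function.update y i s) = (Set.Icc (-ρ) ρ).indicator (fun s =>
        ENNReal.ofReal (f (Function.update y i s) ^ 2 + f' (Function.update y i s) ^ 2)) s := by
    simp only [cubeDensity, Set.indicator, hmem]
    split_ifs
    · rw [ENNReal.ofReal_add (sq_nonneg _) (sq_nonneg _)]
    · rw [add_zero]
  simp only [hdensity]
  rw [lintegral_const_mul' _ _ ENNReal.ofReal_ne_top, lintegral_indicator measurableSet_Icc,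
    ← ofReal_integral_eq_lintegral_ofReal _ (.of_forall fun _ => by positivity),
    ← ENNReal.ofReal_mul (by positivity), cubeDensity, Set.indicator_of_mem hy]
  · rw [Function.update_eq_self, sub_neg_eq_add, ← two_mul] at hsobolev
    exact ENNReal.ofReal_le_ofReal hsobolev
  · exact Continuous.integrableOn_Icc (by fun_prop)

/-- The integral of `f ²` over the face `[-ρ, ρ]^S` of the cube through the origin, on which the
coordinates outside `S` vanish. -/
noncomputable def cubeMarginal (ρ : ℝ) (S : Finset ι) (f : (ι → ℝ) → ℝ) : ENNReal :=
  (∫⋯∫⁻_S, cubeDensity ρ f ∂fun _ => volume) 0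

theorem cubeMarginal_univ :
    cubeMarginal ρ Finset.univ f = ∫⁻ x in Metric.closedBall 0 ρ, ENNReal.ofReal (f x ^ 2) := by
  rw [cubeMarginal, lmarginal_univ, cubeDensity,
    lintegral_indicator Metric.isClosed_closedBall.measurableSet]
  rfl

theorem cubeMarginal_empty (hρ : 0 ≤ ρ) : cubeMarginal ρ ∅ f = ENNReal.ofReal (f 0 ^ 2) := by
  rw [cubeMarginal, lmarginal_empty, cubeDensity,
    Set.indicator_of_mem (Metric.mem_closedBall_self hρ)]

theorem cubeMarginal_le_insert (hρ : 0 < ρ) (hf : ContDiff ℝ 1 f) {i : ι} {S : Finset ι}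
    (hi : i ∉ S) :
    cubeMarginal ρ S f ≤ ENNReal.ofReal (1 + (2 * ρ)⁻¹) *
      (cubeMarginal ρ (insert i S) f +
        cubeMarginal ρ (insert i S) (dirDeriv (Pi.single i 1) f)) := by
  have hmeas := measurable_cubeDensity (ρ := ρ) hf.continuous
  have hmeas' := measurable_cubeDensity (ρ := ρ)
    (f := dirDeriv (Pi.single i 1) f)
    ((hf.continuous_fderiv one_ne_zero).clm_apply continuous_const)
  have hle : cubeMarginal ρ S f ≤ (∫⋯∫⁻_insert i S, (fun x => ENNReal.ofReal (1 + (2 * ρ)⁻¹) *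
      (cubeDensity ρ f x + cubeDensity ρ (dirDeriv (Pi.single i 1) f) x))
        ∂fun _ => volume) 0 := by
    rw [lmarginal_insert' _ (by fun_prop) hi]
    exact lmarginal_mono (cubeDensity_le_lintegral_update hρ hf i) 0
  refine hle.trans_eq ?_
  rw [lmarginal, lintegral_const_mul' _ _ ENNReal.ofReal_ne_top]
  exact congrArg _ (lintegral_add_left (hmeas.comp measurable_updateFinset) _)

end Sobolev

section PointwiseEstimates

variable {z : Fin d} {K r ρ : ℝ} {w : SpaceTime d → ℝ} {A : ℕ → ℝ≥0} {η : ℕ → SpaceTime d → ℝ}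
  {μ : Measure (SpaceTime d)}

theorem IsNormalizedSolution.pdxx_self_sq_le (hw : IsNormalizedSolution z K r w)
    {p : SpaceTime d} (hp : p ∈ halfBall d r) :
    pdxx z z w p ^ 2 ≤ 2 * K ^ 2 * pdt w p ^ 2 +
      8 * K ^ 2 * d ^ 2 * ∑ j, ∑ k with k ≠ z, pdxx j k w p ^ 2 := by
  obtain ⟨b, c, hbc, heq⟩ := hw.exists_coeff
  have hrest := hbc.normal_add_time_sq_le (S := fun j k => pdxx j k w p)
    (fun j k => congrFun (dirDeriv_comm hw.contDiff _ _) p) (heq.self_of_nhdsSet p hp)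
  have htime : (b (p.2 z) * pdt w p) ^ 2 ≤ K ^ 2 * pdt w p ^ 2 := by
    rw [mul_pow]
    exact mul_le_mul_of_nonneg_right
      (pow_le_pow_left₀ (hbc.b_nonneg _) (hbc.b_le _) 2) (sq_nonneg _)
  have hyoung := add_sq_le (a := pdxx z z w p + b (p.2 z) * pdt w p) (b := -(b (p.2 z) * pdt w p))
  rw [add_neg_cancel_right, neg_sq] at hyoung
  linarith

theorem IsNormalizedSolution.lintegral_pdxx_self_sq_le (hw : IsNormalizedSolution z K r w)
    (hμ : ∀ᵐ p ∂μ, p ∈ halfBall d r) :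
    ∫⁻ p, ENNReal.ofReal (pdxx z z w p ^ 2) ∂μ ≤
      ENNReal.ofReal (2 * K ^ 2) * ∫⁻ p, ENNReal.ofReal (pdt w p ^ 2) ∂μ +
        ENNReal.ofReal (8 * K ^ 2 * d ^ 2) *
          ∑ j, ∑ k with k ≠ z, ∫⁻ p, ENNReal.ofReal (pdxx j k w p ^ 2) ∂μ := by
  have hmeas {f : SpaceTime d → ℝ} (hf : ContDiff ℝ ∞ f) :
      Measurable fun p => ENNReal.ofReal (f p ^ 2) :=
    (hf.continuous.pow 2).measurable.ennreal_ofReal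
  have hmeas_t := hmeas (contDiff_pdt hw.contDiff)
  have hmeas_xx (j k : Fin d) : Measurable fun p => ENNReal.ofReal (pdxx j k w p ^ 2) :=
    hmeas (contDiff_pdx (contDiff_pdx hw.contDiff k) j)
  calc ∫⁻ p, ENNReal.ofReal (pdxx z z w p ^ 2) ∂μ
      ≤ ∫⁻ p, (ENNReal.ofReal (2 * K ^ 2) * ENNReal.ofReal (pdt w p ^ 2) +
          ENNReal.ofReal (8 * K ^ 2 * d ^ 2) *
            ∑ j, ∑ k with k ≠ z, ENNReal.ofReal (pdxx j k w p ^ 2)) ∂μ := by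
        refine lintegral_mono_ae (hμ.mono fun p hp => ?_)
        simp only [← ENNReal.ofReal_sum_of_nonneg (fun _ _ => sq_nonneg _),
          ← ENNReal.ofReal_sum_of_nonneg (fun _ _ => Finset.sum_nonneg fun _ _ => sq_nonneg _)]
        rw [← ENNReal.ofReal_mul (by positivity), ← ENNReal.ofReal_mul (by positivity),
          ← ENNReal.ofReal_add (by positivity) (by positivity)]
        exact ENNReal.ofReal_le_ofReal (hw.pdxx_self_sq_le hp)
    _ = _ := by
        rw [lintegral_add_left (hmeas_t.const_mul _), lintegral_const_mul _ hmeas_t,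
          lintegral_const_mul' _ _ ENNReal.ofReal_ne_top,
          lintegral_finsetSum _ fun j _ => Finset.measurable_fun_sum _ fun k _ => hmeas_xx j k]
        simp only [lintegral_finsetSum _ fun k _ => hmeas_xx _ k]

/-- The integral of `w ²` over the face `[-ρ, ρ]^S` of the cube in the slice `t = 0`. -/
noncomputable def sliceMarginal (ρ : ℝ) (S : Finset (Fin d)) (w : SpaceTime d → ℝ) : ENNReal :=
  cubeMarginal ρ S fun x => w (0, x)

theorem sliceMarginal_univ (w : SpaceTime d → ℝ) :
    sliceMarginal ρ Finset.univ w =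
      ∫⁻ p in Metric.closedBall 0 ρ, ENNReal.ofReal (w p ^ 2) ∂sliceMeasure d := by
  rw [sliceMarginal, cubeMarginal_univ,
    ← lintegral_indicator Metric.isClosed_closedBall.measurableSet,
    ← lintegral_indicator Metric.isClosed_closedBall.measurableSet, lintegral_sliceMeasure]
  simp [Set.indicator]

theorem sliceMarginal_empty (hρ : 0 ≤ ρ) (w : SpaceTime d → ℝ) :
    sliceMarginal ρ ∅ w = ENNReal.ofReal (w 0 ^ 2) :=
  cubeMarginal_empty hρ

theorem dirDeriv_comp_prodMk_zero (hw : Differentiable ℝ w) (i : Fin d) :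
    dirDeriv (Pi.single i 1) (fun x => w (0, x)) = fun x => pdx i w (0, x) := by
  ext x
  have h := (hw (0, x)).hasFDerivAt.comp x (hasFDerivAt_prodMk_right (𝕜 := ℝ) 0 x)
  exact DFunLike.congr_fun h.fderiv (Pi.single i 1)

theorem sliceMarginal_le_insert (hρ : 0 < ρ) (hw : ContDiff ℝ ∞ w) {i : Fin d}
    {S : Finset (Fin d)} (hi : i ∉ S) :
    sliceMarginal ρ S w ≤ ENNReal.ofReal (1 + (2 * ρ)⁻¹) *
      (sliceMarginal ρ (insert i S) w + sliceMarginal ρ (insert i S) (pdx i w)) := by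
  have h := cubeMarginal_le_insert hρ (f := fun x => w (0, x))
    ((hw.comp (contDiff_const.prodMk contDiff_id)).of_le (by simp)) hi
  rwa [dirDeriv_comp_prodMk_zero (hw.differentiable (by simp))] at h

namespace IsCutoffSeq

variable (hη : IsCutoffSeq r A η)

include hη

theorem setLIntegral_sq_le_energy [IsFiniteMeasureOnCompacts μ] (hw : Continuous w) (n : ℕ) :
    ∫⁻ p in Metric.closedBall 0 (r / 2), ENNReal.ofReal (w p ^ 2) ∂μ ≤
      ENNReal.ofReal (energy μ (η n) w) := by
  rw [energy, ofReal_integral_eq_lintegral_ofReal (hη.integrable_energy hw n)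
    (.of_forall fun _ => sq_nonneg _)]
  refine (setLIntegral_congr_fun Metric.isClosed_closedBall.measurableSet fun p hp => ?_).trans_le
    (setLIntegral_le_lintegral _ _)
  rw [hη.eq_one_of_norm_le n p (mem_closedBall_zero_iff.1 hp), one_mul]

theorem energyControlled_lintegral_pdxx_self (hμ : ∀ᵐ p ∂μ, p ∈ halfBall d r)
    (hμw : ∀ n, EnergyControlled z K r (η n) fun w => ∫⁻ p, ENNReal.ofReal (w p ^ 2) ∂μ)
    (hμz : ∀ n, EnergyControlled z K r (η n) fun w => ∫⁻ p, ENNReal.ofReal (pdx z w p ^ 2) ∂μ)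
    (n : ℕ) :
    EnergyControlled z K r (η n) fun w => ∫⁻ p, ENNReal.ofReal (pdxx z z w p ^ 2) ∂μ := by
  have htangential (j : Fin d) {k : Fin d} (hk : k ≠ z) :
      EnergyControlled z K r (η n) fun w => ∫⁻ p, ENNReal.ofReal (pdxx j k w p ^ 2) ∂μ :=
    hη.energyControlled_comp_pdx
      (Φ := fun w => ∫⁻ p, ENNReal.ofReal (pdx j w p ^ 2) ∂μ)
      (hη.energyControlled_pdx_of_pdx_self
        (Φ := fun w => ∫⁻ p, ENNReal.ofReal (w p ^ 2) ∂μ) hμw hμz j) hk n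
  exact (((hη.energyControlled_comp_pdt hμw n).const_mul _).add
    ((EnergyControlled.sum fun j _ => EnergyControlled.sum fun k hk =>
      htangential j (Finset.mem_filter.1 hk).2).const_mul _)).mono
    fun w hw => hw.lintegral_pdxx_self_sq_le hμ

theorem energyControlled_sliceMarginal_univ (n : ℕ) :
    EnergyControlled z K r (η n) (sliceMarginal (r / 2) Finset.univ) :=
  (hη.energyControlled_slice n).mono fun w hw => (sliceMarginal_univ w).trans_le
    (hη.setLIntegral_sq_le_energy hw.contDiff.continuous _)

theorem energyControlled_sliceMarginal_univ_pdx (n : ℕ) :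
    EnergyControlled z K r (η n) fun w => sliceMarginal (r / 2) Finset.univ (pdx z w) :=
  (hη.energyControlled_slice_pdx n).mono fun _ hw => (sliceMarginal_univ _).trans_le
    (hη.setLIntegral_sq_le_energy (contDiff_pdx hw.contDiff z).continuous _)

theorem energyControlled_sliceMarginal_univ_pdxx (hr : 0 ≤ r) (n : ℕ) :
    EnergyControlled z K r (η n) fun w => sliceMarginal (r / 2) Finset.univ (pdxx z z w) := by
  have hmem : ∀ᵐ p ∂(sliceMeasure d).restrict (Metric.closedBall 0 (r / 2)),
      p ∈ halfBall d r := by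
    filter_upwards [ae_restrict_of_ae ae_sliceMeasure_fst_eq_zero,
      ae_restrict_mem Metric.isClosed_closedBall.measurableSet] with p hp hball
    exact ⟨hp.ge, (mem_closedBall_zero_iff.1 hball).trans (by linarith)⟩
  have hw := hη.energyControlled_sliceMarginal_univ (z := z) (K := K)
  have hwz := hη.energyControlled_sliceMarginal_univ_pdx (z := z) (K := K)
  simp only [EnergyControlled, sliceMarginal_univ] at hw hwz ⊢
  exact hη.energyControlled_lintegral_pdxx_self hmem hw hwz n

theorem energyControlled_sliceMarginal_compl_insert (hr : 0 < r) (R : Finset (Fin d)) :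
    (∀ n, EnergyControlled z K r (η n) (sliceMarginal (r / 2) (insert z R)ᶜ)) ∧
      ∀ n, EnergyControlled z K r (η n) fun w =>
        sliceMarginal (r / 2) (insert z R)ᶜ (pdx z w) := by
  have hstep {S T : Finset (Fin d)} {i : Fin d} (hi : i ∉ S) (hT : insert i S = T) {n : ℕ}
      {D : (SpaceTime d → ℝ) → SpaceTime d → ℝ}
      (hD : ∀ w, IsNormalizedSolution z K r w → ContDiff ℝ ∞ (D w))
      (hw : EnergyControlled z K r (η n) fun w => sliceMarginal (r / 2) T (D w))
      (hwi : EnergyControlled z K r (η n) fun w => sliceMarginal (r / 2) T (pdx i (D w))) :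
      EnergyControlled z K r (η n) fun w => sliceMarginal (r / 2) S (D w) := by
    subst hT
    exact ((hw.add hwi).const_mul _).mono fun w hw =>
      sliceMarginal_le_insert (half_pos hr) (hD w hw) hi
  induction R using Finset.induction_on with
  | empty =>
    have hz : insert z (insert z ∅ : Finset (Fin d))ᶜ = Finset.univ := by simp
    exact ⟨fun n => hstep (D := id) (by simp) hz (fun _ hw => hw.contDiff)
        (hη.energyControlled_sliceMarginal_univ n) (hη.energyControlled_sliceMarginal_univ_pdx n),
      fun n => hstep (by simp) hz (fun _ hw => contDiff_pdx hw.contDiff z)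
        (hη.energyControlled_sliceMarginal_univ_pdx n)
        (hη.energyControlled_sliceMarginal_univ_pdxx hr.le n)⟩
  | insert k R hkR ih =>
    rcases eq_or_ne k z with rfl | hk
    · simpa using ih
    have hkS : insert k (insert z (insert k R))ᶜ = (insert z R)ᶜ := by
      ext j; simp only [Finset.mem_insert, Finset.mem_compl]; grind
    refine ⟨fun n => hstep (D := id) (by simp) hkS (fun _ hw => hw.contDiff) (ih.1 n)
        (hη.energyControlled_comp_pdx ih.1 hk n),
      fun n => hstep (by simp) hkS (fun _ hw => contDiff_pdx hw.contDiff z) (ih.2 n) ?_⟩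
    refine (hη.energyControlled_comp_pdx ih.2 hk n).mono fun w hw => le_of_eq ?_
    exact congrArg _ (dirDeriv_comm hw.contDiff _ _)

theorem energyControlled_apply_zero (hr : 0 < r) (n : ℕ) :
    EnergyControlled z K r (η n) fun w => ENNReal.ofReal (w 0 ^ 2) := by
  simpa [sliceMarginal_empty (half_pos hr).le, EnergyControlled] using
    (hη.energyControlled_sliceMarginal_compl_insert hr Finset.univ).1 n

theorem energyControlled_pdx_apply_zero (hr : 0 < r) (j : Fin d) (n : ℕ) :
    EnergyControlled z K r (η n) fun w => ENNReal.ofReal (pdx j w 0 ^ 2) := by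
  refine hη.energyControlled_pdx_of_pdx_self (Φ := fun w => ENNReal.ofReal (w 0 ^ 2))
    (hη.energyControlled_apply_zero hr) (fun n => ?_) j n
  simpa [sliceMarginal_empty (half_pos hr).le, EnergyControlled] using
    (hη.energyControlled_sliceMarginal_compl_insert hr Finset.univ).2 n

theorem energyControlled_pdxx_apply_zero (hr : 0 < r) (i j : Fin d) (n : ℕ) :
    EnergyControlled z K r (η n) fun w => ENNReal.ofReal (pdxx i j w 0 ^ 2) := by
  have hzz (n : ℕ) : EnergyControlled z K r (η n) fun w =>
      ENNReal.ofReal (pdxx z z w 0 ^ 2) := by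
    have hmem : ∀ᵐ p ∂Measure.dirac (0 : SpaceTime d), p ∈ halfBall d r := by
      rw [ae_dirac_eq]
      exact ⟨le_rfl, norm_zero.trans_le hr.le⟩
    simpa using hη.energyControlled_lintegral_pdxx_self hmem
      (by simpa using hη.energyControlled_apply_zero hr)
      (by simpa using hη.energyControlled_pdx_apply_zero hr z) n
  have hz (j : Fin d) (n : ℕ) : EnergyControlled z K r (η n) fun w =>
      ENNReal.ofReal (pdxx z j w 0 ^ 2) :=
    hη.energyControlled_pdx_of_pdx_self (Φ := fun w => ENNReal.ofReal (pdx z w 0 ^ 2))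
      (hη.energyControlled_pdx_apply_zero hr z) hzz j n
  rcases eq_or_ne i z with rfl | hi
  · exact hz j n
  · refine (hη.energyControlled_comp_pdx (hη.energyControlled_pdx_apply_zero hr j) hi n).mono
      fun w hw => le_of_eq ?_
    rw [pdxx, show pdx i (pdx j w) = pdx j (pdx i w) from dirDeriv_comm hw.contDiff _ _]

end IsCutoffSeq

end PointwiseEstimates

section Coefficients

variable {δ : ℝ} {a : ℝ → Fin d → Fin d → ℝ}

/-- The conditions on the coefficients `a^{jk}`, functions of one real variable. -/
structure UniformlyElliptic (δ : ℝ) (a : ℝ → Fin d → Fin d → ℝ) : Prop where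
  measurable : ∀ j k, Measurable fun s => a s j k
  symm : ∀ s j k, a s j k = a s k j
  bounds : ∀ (s : ℝ) (θ : Fin d → ℝ),
    δ * ∑ j, θ j ^ 2 ≤ ∑ j, ∑ k, a s j k * θ j * θ k ∧
      ∑ j, ∑ k, a s j k * θ j * θ k ≤ δ⁻¹ * ∑ j, θ j ^ 2

namespace UniformlyElliptic

theorem comp_add_right (ha : UniformlyElliptic δ a) (σ : ℝ) :
    UniformlyElliptic δ fun s => a (s + σ) where
  measurable j k := (ha.measurable j k).comp (measurable_id.add_const σ)
  symm s := ha.symm (s + σ)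
  bounds s := ha.bounds (s + σ)

theorem diag_mem_Icc (ha : UniformlyElliptic δ a) (s : ℝ) (j : Fin d) :
    a s j j ∈ Set.Icc δ δ⁻¹ := by
  simpa [Pi.single_apply, ite_pow] using ha.bounds s (Pi.single j 1)

theorem abs_le (ha : UniformlyElliptic δ a) (hδ : 0 < δ) (s : ℝ) (j k : Fin d) :
    |a s j k| ≤ δ⁻¹ := by
  have hform (t : ℝ) (ht : t ^ 2 = 1) :
      a s j j + a s k k + 2 * t * a s j k ∈ Set.Icc 0 (4 * δ⁻¹) := by
    set θ : Fin d → ℝ := Pi.single j 1 + t • Pi.single k 1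
    have hquad : ∑ i, ∑ l, a s i l * θ i * θ l = a s j j + a s k k + 2 * t * a s j k := by
      simp only [θ, Pi.add_apply, Pi.smul_apply, smul_eq_mul, mul_add, add_mul,
        Finset.sum_add_distrib, Pi.single_apply, mul_ite, ite_mul, mul_one, mul_zero, zero_mul,
        Finset.sum_ite_eq', Finset.mem_univ, if_true]
      rw [ha.symm s k j]
      linear_combination a s k k * ht
    have hnorm : ∑ i, θ i ^ 2 ≤ 4 :=
      calc ∑ i, θ i ^ 2 ≤ ∑ i, 2 * ((Pi.single j 1 : Fin d → ℝ) i ^ 2 +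
            (t * (Pi.single k 1 : Fin d → ℝ) i) ^ 2) := Finset.sum_le_sum fun i _ => add_sq_le
        _ = 4 := by
          simp only [mul_pow, ht, one_mul, ← Finset.mul_sum, Finset.sum_add_distrib,
            Pi.single_apply, ite_pow, one_pow, zero_pow two_ne_zero, Finset.sum_ite_eq',
            Finset.mem_univ, if_true]
          norm_num
    obtain ⟨hlower, hupper⟩ := ha.bounds s θ
    rw [hquad] at hlower hupper
    refine ⟨(by positivity : (0 : ℝ) ≤ δ * ∑ i, θ i ^ 2).trans hlower, hupper.trans ?_⟩
    rw [mul_comm 4]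
    gcongr
  have hplus := hform 1 (by norm_num)
  have hminus := hform (-1) (by norm_num)
  rw [Set.mem_Icc] at hplus hminus
  exact _root_.abs_le.2 ⟨by linarith, by linarith⟩

theorem normalizedCoeff (ha : UniformlyElliptic δ a) (hδ : 0 < δ) (z : Fin d) :
    NormalizedCoeff z (δ⁻¹ ^ 2) (fun s => (a s z z)⁻¹) fun s j k => (a s z z)⁻¹ * a s j k := by
  have hpos (s : ℝ) : 0 < a s z z := hδ.trans_le (ha.diag_mem_Icc s z).1
  have hinv_le (s : ℝ) : (a s z z)⁻¹ ≤ δ⁻¹ := inv_anti₀ hδ (ha.diag_mem_Icc s z).1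
  have hle_inv (s : ℝ) : δ ≤ (a s z z)⁻¹ :=
    (le_inv_comm₀ hδ (hpos s)).2 (ha.diag_mem_Icc s z).2
  have hone : 1 ≤ δ⁻¹ := by
    have h := (hle_inv 0).trans (hinv_le 0)
    rwa [le_inv_comm₀ hδ hδ, ← one_div, le_div_iff₀ hδ, ← sq, sq_le_one_iff₀ hδ.le,
      ← one_le_inv₀ hδ] at h
  have hK : (δ⁻¹ ^ 2)⁻¹ = δ ^ 2 := by rw [inv_pow, inv_inv]
  refine ⟨(ha.measurable z z).inv, fun j k => (ha.measurable z z).inv.mul (ha.measurable j k),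
    fun s => inv_mul_cancel₀ (hpos s).ne', fun s j k => by rw [ha.symm s j k],
    fun s j k => ?_, fun s => ?_, fun s => ?_, fun s θ => ?_⟩
  · rw [abs_mul, abs_of_pos (inv_pos.2 (hpos s)), sq]
    exact mul_le_mul (hinv_le s) (ha.abs_le hδ s j k) (abs_nonneg _) (by positivity)
  · exact (hinv_le s).trans (le_self_pow₀ hone two_ne_zero)
  · rw [hK]
    exact (pow_le_of_le_one hδ.le ((one_le_inv₀ hδ).1 hone) two_ne_zero).trans (hle_inv s)
  · calc (δ⁻¹ ^ 2)⁻¹ * ∑ j, θ j ^ 2 = δ * (δ * ∑ j, θ j ^ 2) := by rw [hK]; ring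
      _ ≤ (a s z z)⁻¹ * ∑ j, ∑ k, a s j k * θ j * θ k :=
          mul_le_mul (hle_inv s) (ha.bounds s θ).1 (by positivity) (inv_pos.2 (hpos s)).le
      _ = _ := by simp only [Finset.mul_sum, mul_assoc]

end UniformlyElliptic

end Coefficients

section Cylinders

variable {ρ R : ℝ}

theorem isOpen_Qc (d : ℕ) (ρ : ℝ) : IsOpen (Qc d ρ) :=
  isOpen_Ioo.prod (isOpen_lt (by fun_prop) continuous_const)

theorem mem_ballE_iff (hρ : 0 ≤ ρ) {x : Fin d → ℝ} : x ∈ ballE d ρ ↔ ‖WithLp.toLp 2 x‖ < ρ := by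
  rw [← sq_lt_sq₀ (norm_nonneg _) hρ, EuclideanSpace.real_norm_sq_eq]
  rfl

theorem Qc_subset_Qc (hρ : 0 ≤ ρ) (hρR : ρ ≤ R) : Qc d ρ ⊆ Qc d R := by
  have hsq : ρ ^ 2 ≤ R ^ 2 := pow_le_pow_left₀ hρ hρR 2
  exact Set.prod_mono (Set.Ioo_subset_Ioo_right hsq) fun _ hx => hx.trans_le hsq

theorem exists_halfBall_add_mem_Qc (hρ : 0 ≤ ρ) (hρR : ρ < R) :
    ∃ r > 0, ∀ p₀ ∈ Qc d ρ, ∀ p ∈ halfBall d r, p + p₀ ∈ Qc d R := by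
  have hnear : ∀ᶠ p : SpaceTime d in 𝓝 0,
      p.1 < R ^ 2 - ρ ^ 2 ∧ ‖WithLp.toLp 2 p.2‖ < R - ρ := by
    have hsq : ρ ^ 2 < R ^ 2 := pow_lt_pow_left₀ hρR hρ two_ne_zero
    have hnorm : Continuous fun p : SpaceTime d => ‖WithLp.toLp 2 p.2‖ := by fun_prop
    exact (continuous_fst.continuousAt.eventually_lt_const (by simpa using hsq)).and
      (hnorm.continuousAt.eventually_lt_const (by simpa using hρR))
  obtain ⟨r, hr, hball⟩ := Metric.nhds_basis_closedBall.eventually_iff.1 hnear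
  refine ⟨r, hr, fun p₀ ⟨ht₀, hx₀⟩ p ⟨ht, hp⟩ => ?_⟩
  obtain ⟨ht', hx⟩ := hball (mem_closedBall_zero_iff.2 hp)
  refine ⟨⟨add_pos_of_nonneg_of_pos ht ht₀.1, ?_⟩, ?_⟩
  · rw [Prod.fst_add]
    linarith [ht₀.2]
  · rw [mem_ballE_iff hρ] at hx₀
    rw [mem_ballE_iff (hρ.trans hρR.le), Prod.snd_add, WithLp.toLp_add]
    linarith [norm_add_le (WithLp.toLp 2 p.2) (WithLp.toLp 2 p₀.2)]

theorem isCompact_halfBall (d : ℕ) (r : ℝ) : IsCompact (halfBall d r) := by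
  have hsub : halfBall d r = {p | 0 ≤ p.1} ∩ Metric.closedBall 0 r := by
    ext p
    simp [halfBall]
  rw [hsub]
  exact (isCompact_closedBall _ _).inter_left (isClosed_le continuous_const continuous_fst)

end Cylinders

section Localization

theorem exists_contDiff_eventuallyEq {E : Type*} [NormedAddCommGroup E] [NormedSpace ℝ E]
    [FiniteDimensional ℝ E] {h : E → ℝ} {S U : Set E} (hS : IsCompact S) (hU : IsOpen U)
    (hSU : S ⊆ U) (hh : ContDiffOn ℝ ∞ h U) : ∃ H, ContDiff ℝ ∞ H ∧ H =ᶠ[𝓝ˢ S] h := by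
  obtain ⟨T, hT, hST, hTU⟩ := exists_compact_between hS hU hSU
  obtain ⟨χ, hone, hzero, -⟩ := exists_contMDiffMap_one_nhds_of_subset_interior (n := ⊤)
    (modelWithCornersSelf ℝ E) hS.isClosed hST
  refine ⟨fun p => χ p * h p, contDiff_iff_contDiffAt.2 fun p => ?_, ?_⟩
  · by_cases hp : p ∈ T
    · exact χ.contMDiff.contDiff.contDiffAt.mul (hh.contDiffAt (hU.mem_nhds (hTU hp)))
    · refine (contDiffAt_const (c := 0)).congr_of_eventuallyEq ?_
      filter_upwards [hT.isClosed.isOpen_compl.mem_nhds hp] with q hq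
      rw [hzero q hq, zero_mul]
  · filter_upwards [hone] with p hp
    rw [hp, one_mul]

/-- Iterated directional derivatives, the head of the list being taken last. -/
noncomputable def iterDirDeriv {E : Type*} [NormedAddCommGroup E] [NormedSpace ℝ E] (l : List E)
    (f : E → ℝ) : E → ℝ :=
  l.foldr dirDeriv f

theorem iterDirDeriv_eventuallyEq_comp_add {E : Type*} [NormedAddCommGroup E] [NormedSpace ℝ E]
    {f g : E → ℝ} {a p : E} (h : f =ᶠ[𝓝 p] fun q => g (q + a)) (l : List E) :
    iterDirDeriv l f =ᶠ[𝓝 p] fun q => iterDirDeriv l g (q + a) := by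
  induction l with
  | nil => exact h
  | cons v l ih =>
    exact (dirDeriv_eventuallyEq ih v).trans
      (dirDeriv_comp_add_right (iterDirDeriv l g) v a).eventuallyEq

variable {z : Fin d} {δ ρ R r : ℝ} {a : ℝ → Fin d → Fin d → ℝ} {h H : SpaceTime d → ℝ}
  {p₀ : SpaceTime d}

/-- `h` is smooth and square integrable on `Q_R` and solves `h_t + ∑ a^{jk} h_{x^j x^k} = 0`
there, the coefficients being evaluated at the coordinate `z`. -/
structure IsL2Solution (z : Fin d) (a : ℝ → Fin d → Fin d → ℝ) (R : ℝ) (h : SpaceTime d → ℝ) :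
    Prop where
  contDiffOn : ContDiffOn ℝ ∞ h (Qc d R)
  integrableOn : IntegrableOn (fun p => h p ^ 2) (Qc d R)
  eq_zero : ∀ p ∈ Qc d R, pdt h p + ∑ j, ∑ k, a (p.2 z) j k * pdxx j k h p = 0

theorem IsL2Solution.mono (hh : IsL2Solution z a R h) (hρ : 0 ≤ ρ) (hρR : ρ ≤ R) :
    IsL2Solution z a ρ h :=
  have hsub : Qc d ρ ⊆ Qc d R := Qc_subset_Qc hρ hρR
  ⟨hh.contDiffOn.mono hsub, hh.integrableOn.mono_set hsub, fun p hp => hh.eq_zero p (hsub hp)⟩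

theorem IsL2Solution.parabolicOp_eq_zero (hh : IsL2Solution z a R h) {p : SpaceTime d}
    (hp : p + p₀ ∈ Qc d R) (heq : H =ᶠ[𝓝 p] fun q => h (q + p₀)) :
    parabolicOp z (fun s => (a (s + p₀.2 z) z z)⁻¹)
      (fun s j k => (a (s + p₀.2 z) z z)⁻¹ * a (s + p₀.2 z) j k) H p = 0 := by
  have hpdt : pdt H p = pdt h (p + p₀) :=
    (iterDirDeriv_eventuallyEq_comp_add heq [(1, 0)]).eq_of_nhds
  have hpdxx (j k : Fin d) : pdxx j k H p = pdxx j k h (p + p₀) :=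
    (iterDirDeriv_eventuallyEq_comp_add heq
      [(0, Pi.single j 1), (0, Pi.single k 1)]).eq_of_nhds
  have hzero := hh.eq_zero _ hp
  simp only [Prod.snd_add, Pi.add_apply] at hzero
  simp only [parabolicOp, hpdt, hpdxx, mul_assoc, ← Finset.mul_sum, ← mul_add, hzero, mul_zero]

theorem IsL2Solution.exists_isNormalizedSolution (hh : IsL2Solution z a R h)
    (ha : UniformlyElliptic δ a) (hδ : 0 < δ) (hr : ∀ p ∈ halfBall d r, p + p₀ ∈ Qc d R) :
    ∃ H, IsNormalizedSolution z (δ⁻¹ ^ 2) r H ∧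
      H =ᶠ[𝓝ˢ (halfBall d r)] fun p => h (p + p₀) := by
  have hopen : IsOpen {p : SpaceTime d | p + p₀ ∈ Qc d R} :=
    (isOpen_Qc d R).preimage (continuous_add_const p₀)
  have hsmooth : ContDiffOn ℝ ∞ (fun p => h (p + p₀)) {p | p + p₀ ∈ Qc d R} :=
    hh.contDiffOn.comp (contDiff_id.add contDiff_const).contDiffOn fun _ hp => hp
  obtain ⟨H, hH, heq⟩ := exists_contDiff_eventuallyEq (isCompact_halfBall d r) hopen hr hsmooth
  refine ⟨H, ⟨hH, _, _, (ha.comp_add_right (p₀.2 z)).normalizedCoeff hδ z, ?_⟩, heq⟩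
  filter_upwards [heq.eventually_nhdsSet, hopen.mem_nhdsSet.2 hr] with p hp hmem
  exact hh.parabolicOp_eq_zero hmem hp

theorem energy_halfMeasure_le_integral {η : SpaceTime d → ℝ} {S : Set (SpaceTime d)}
    (hS : MeasurableSet S)
    (hint : Integrable (fun p => (η p * H p) ^ 2) (halfMeasure d)) (hη : ∀ p, |η p| ≤ 1)
    (hsupp : ∀ p, 0 < p.1 → η p ≠ 0 → p + p₀ ∈ S ∧ H p = h (p + p₀))
    (hh : IntegrableOn (fun p => h p ^ 2) S) :
    energy (halfMeasure d) η H ≤ ∫ p in S, h p ^ 2 := by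
  have : (volume : Measure (SpaceTime d)).IsAddHaarMeasure := by
    rw [Measure.volume_eq_prod]; infer_instance
  set F : SpaceTime d → ℝ := S.indicator fun p => h p ^ 2
  have hF0 (p : SpaceTime d) : 0 ≤ F p := Set.indicator_nonneg (fun _ _ => sq_nonneg _) p
  have hF : Integrable fun p => F (p + p₀) :=
    ((integrable_indicator_iff hS).2 hh).comp_add_right p₀
  have hle : ∀ᵐ p ∂halfMeasure d, (η p * H p) ^ 2 ≤ F (p + p₀) := by
    filter_upwards [ae_halfMeasure_fst_pos] with p hp
    rcases eq_or_ne (η p) 0 with hηp | hηp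
    · simpa [hηp] using hF0 (p + p₀)
    · obtain ⟨hmem, heq⟩ := hsupp p hp hηp
      have hFp : F (p + p₀) = h (p + p₀) ^ 2 := Set.indicator_of_mem hmem _
      rw [hFp, ← heq, mul_pow]
      exact mul_le_of_le_one_left (sq_nonneg _) ((sq_le_one_iff_abs_le_one _).2 (hη p))
  calc energy (halfMeasure d) η H ≤ ∫ p, F (p + p₀) ∂halfMeasure d :=
        integral_mono_ae hint hF.restrict hle
    _ ≤ ∫ p, F (p + p₀) := setIntegral_le_integral hF (.of_forall fun p => hF0 (p + p₀))
    _ = ∫ p in S, h p ^ 2 := by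
        rw [integral_add_right_eq_self, integral_indicator hS]

end Localization

section InteriorBounds

variable {z : Fin d} {δ ρ R r : ℝ} {Φ Ψ : (SpaceTime d → ℝ) → ℝ}

theorem IsL2Solution.energy_le_integral {a : ℝ → Fin d → Fin d → ℝ} {h H : SpaceTime d → ℝ}
    {p₀ : SpaceTime d} {A : ℕ → ℝ≥0} {η : ℕ → SpaceTime d → ℝ} (hh : IsL2Solution z a R h)
    (hη : IsCutoffSeq r A η) (hr : ∀ p ∈ halfBall d r, p + p₀ ∈ Qc d R) (hH : Continuous H)
    (heq : Set.EqOn H (fun p => h (p + p₀)) (halfBall d r)) (n : ℕ) :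
    energy (halfMeasure d) (η n) H ≤ ∫ p in Qc d R, h p ^ 2 := by
  refine energy_halfMeasure_le_integral (p₀ := p₀) (isOpen_Qc d R).measurableSet
    (hη.integrable_energy hH n) (fun p => ?_) (fun p hp hηp => ?_) hh.integrableOn
  · exact (abs_of_nonneg (hη.nonneg n p)).trans_le (hη.le_one n p)
  · have hmem : p ∈ halfBall d r := ⟨hp.le, hη.norm_le_of_ne_zero n p hηp⟩
    exact ⟨hr p hmem, heq hmem⟩

/-- The functional `Φ` is bounded by a constant multiple of the `L²(Q_R)` norm, uniformly over
all solutions of all equations with ellipticity constant `δ`. -/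
def InteriorBound (z : Fin d) (δ R : ℝ) (Φ : (SpaceTime d → ℝ) → ℝ) : Prop :=
  ∃ N : ℝ≥0, ∀ a, UniformlyElliptic δ a → ∀ h, IsL2Solution z a R h →
    Φ h ≤ N * √(∫ p in Qc d R, h p ^ 2)

theorem InteriorBound.add (hΦ : InteriorBound z δ R Φ) (hΨ : InteriorBound z δ R Ψ) :
    InteriorBound z δ R fun h => Φ h + Ψ h := by
  obtain ⟨M, hM⟩ := hΦ
  obtain ⟨N, hN⟩ := hΨ
  refine ⟨M + N, fun a ha h hh => (add_le_add (hM a ha h hh) (hN a ha h hh)).trans_eq ?_⟩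
  rw [NNReal.coe_add, add_mul]

theorem InteriorBound.sum {ι : Type*} {s : Finset ι} {Φ : ι → (SpaceTime d → ℝ) → ℝ}
    (hΦ : ∀ i ∈ s, InteriorBound z δ R (Φ i)) :
    InteriorBound z δ R fun h => ∑ i ∈ s, Φ i h := by
  choose! N hN using hΦ
  refine ⟨∑ i ∈ s, N i, fun a ha h hh =>
    (Finset.sum_le_sum fun i hi => hN i hi a ha h hh).trans_eq ?_⟩
  rw [← Finset.sum_mul, NNReal.coe_sum]

theorem interiorBound_iSup (hδ : 0 < δ) (hρ : 0 ≤ ρ) (hρR : ρ < R) (l : List (SpaceTime d))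
    (hl : ∀ (r : ℝ) (A : ℕ → ℝ≥0) (η : ℕ → SpaceTime d → ℝ), 0 < r → IsCutoffSeq r A η →
      ∀ n, EnergyControlled z (δ⁻¹ ^ 2) r (η n) fun w =>
        ENNReal.ofReal (iterDirDeriv l w 0 ^ 2)) :
    InteriorBound z δ R fun h => ⨆ p ∈ Qc d ρ, |iterDirDeriv l h p| := by
  obtain ⟨r, hr, hQ⟩ := exists_halfBall_add_mem_Qc (d := d) hρ hρR
  obtain ⟨A, η, hη⟩ := exists_isCutoffSeq (E := SpaceTime d) hr
  obtain ⟨C, hC⟩ := hl r A η hr hη 0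
  refine ⟨NNReal.sqrt C, fun a ha h hh => ?_⟩
  have hbound (p₀) (hp₀ : p₀ ∈ Qc d ρ) :
      |iterDirDeriv l h p₀| ≤ NNReal.sqrt C * √(∫ p in Qc d R, h p ^ 2) := by
    obtain ⟨H, hH, heq⟩ := hh.exists_isNormalizedSolution ha hδ (hQ p₀ hp₀)
    have hderiv : iterDirDeriv l H 0 = iterDirDeriv l h p₀ := by
      have hzero : (0 : SpaceTime d) ∈ halfBall d r := ⟨le_rfl, by simpa using hr.le⟩
      simpa using (iterDirDeriv_eventuallyEq_comp_add
        (heq.filter_mono (nhds_le_nhdsSet hzero)) l).eq_of_nhds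
    have henergy := hh.energy_le_integral hη (hQ p₀ hp₀) hH.contDiff.continuous
      heq.self_of_nhdsSet 0
    have hsq : iterDirDeriv l H 0 ^ 2 ≤ C * energy (halfMeasure d) (η 0) H := by
      have hle := hC H hH
      rwa [← ENNReal.ofReal_coe_nnreal, ← ENNReal.ofReal_mul C.coe_nonneg,
        ENNReal.ofReal_le_ofReal_iff (mul_nonneg C.coe_nonneg energy_nonneg)] at hle
    rw [Real.coe_sqrt, ← Real.sqrt_mul C.coe_nonneg, ← hderiv]
    exact Real.abs_le_sqrt (hsq.trans (mul_le_mul_of_nonneg_left henergy C.coe_nonneg))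
  have hnonneg : 0 ≤ NNReal.sqrt C * √(∫ p in Qc d R, h p ^ 2) := by positivity
  exact Real.iSup_le (fun p => Real.iSup_le (hbound p) hnonneg) hnonneg

theorem interiorBound_pdt_pdt (z : Fin d) (hδ : 0 < δ) (hρ : 0 ≤ ρ) (hρR : ρ < R) :
    InteriorBound z δ R fun h => ⨆ p ∈ Qc d ρ, |pdt (pdt h) p| :=
  interiorBound_iSup hδ hρ hρR [(1, 0), (1, 0)] fun _ _ _ hr hη =>
    hη.energyControlled_comp_pdt (hη.energyControlled_comp_pdt (hη.energyControlled_apply_zero hr))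

theorem interiorBound_pdx_pdt (z : Fin d) (hδ : 0 < δ) (hρ : 0 ≤ ρ) (hρR : ρ < R) (j : Fin d) :
    InteriorBound z δ R fun h => ⨆ p ∈ Qc d ρ, |pdx j (pdt h) p| :=
  interiorBound_iSup hδ hρ hρR [(0, Pi.single j 1), (1, 0)] fun _ _ _ hr hη =>
    hη.energyControlled_comp_pdt (hη.energyControlled_pdx_apply_zero hr j)

theorem interiorBound_pdxx_pdt (z : Fin d) (hδ : 0 < δ) (hρ : 0 ≤ ρ) (hρR : ρ < R)
    (j k : Fin d) : InteriorBound z δ R fun h => ⨆ p ∈ Qc d ρ, |pdxx j k (pdt h) p| :=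
  interiorBound_iSup hδ hρ hρR [(0, Pi.single j 1), (0, Pi.single k 1), (1, 0)]
    fun _ _ _ hr hη => hη.energyControlled_comp_pdt (hη.energyControlled_pdxx_apply_zero hr j k)

theorem interiorBound_pdx_pdxx (hδ : 0 < δ) (hρ : 0 ≤ ρ) (hρR : ρ < R) (i j : Fin d)
    {k : Fin d} (hk : k ≠ z) :
    InteriorBound z δ R fun h => ⨆ p ∈ Qc d ρ, |pdx i (pdxx j k h) p| :=
  interiorBound_iSup hδ hρ hρR [(0, Pi.single i 1), (0, Pi.single j 1), (0, Pi.single k 1)]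
    fun _ _ _ hr hη => hη.energyControlled_comp_pdx (hη.energyControlled_pdxx_apply_zero hr i j) hk

end InteriorBounds

end ParabolicInterior

open ParabolicInterior in
theorem stmt9_general {d : ℕ} (z : Fin d) {δ ρ R : ℝ} (hδ : 0 < δ) (hρ : 0 ≤ ρ) (hρR : ρ < R) :
    ∃ N : ℝ, 0 < N ∧
      ∀ a, UniformlyElliptic δ a → ∀ h : ℝ × (Fin d → ℝ) → ℝ, IsL2Solution z a R h →
        (⨆ p ∈ Qc d ρ, |pdt (pdt h) p|) + (∑ j, ⨆ p ∈ Qc d ρ, |pdx j (pdt h) p|)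
            + (∑ j, ∑ k, ⨆ p ∈ Qc d ρ, |pdxx j k (pdt h) p|)
            + (∑ i, ∑ j, ∑ k with k ≠ z, ⨆ p ∈ Qc d ρ, |pdx i (pdxx j k h) p|)
          ≤ N * √(∫ p in Qc d R, h p ^ 2) := by
  obtain ⟨N, hN⟩ := (((interiorBound_pdt_pdt z hδ hρ hρR).add <|
    .sum fun j _ => interiorBound_pdx_pdt z hδ hρ hρR j).add <|
    .sum fun j _ => .sum fun k _ => interiorBound_pdxx_pdt z hδ hρ hρR j k).add <|
    .sum fun i _ => .sum fun j _ => .sum fun k hk =>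
      interiorBound_pdx_pdxx hδ hρ hρR i j (Finset.mem_filter.1 hk).2
  refine ⟨N + 1, by positivity, fun a ha h hh => (hN a ha h hh).trans ?_⟩
  gcongr
  exact le_add_of_nonneg_right zero_le_one

theorem stmt9 (d : ℕ) (hd : 2 ≤ d) (δ : ℝ) (hδ : δ ∈ Set.Ioo (0 : ℝ) 1) :
    ∃ N : ℝ, 0 < N ∧
      ∀ a : ℝ → Fin d → Fin d → ℝ,
        (∀ j k, Measurable fun s => a s j k) →
        (∀ s j k, a s j k = a s k j) →
        (∀ (s : ℝ) (θ : Fin d → ℝ),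
          δ * ∑ j, (θ j) ^ 2 ≤ ∑ j, ∑ k, a s j k * θ j * θ k ∧
          ∑ j, ∑ k, a s j k * θ j * θ k ≤ δ⁻¹ * ∑ j, (θ j) ^ 2) →
        ∀ h : ℝ × (Fin d → ℝ) → ℝ,
          ContDiffOn ℝ (⊤ : ℕ∞) h (Qc d 4) →
          IntegrableOn (fun p => (h p) ^ 2) (Qc d 4) →
          (∀ p ∈ Qc d 4,
            pdt h p + ∑ j, ∑ k, a (p.2 ⟨0, by omega⟩) j k * pdxx j k h p = 0) →
          (⨆ p ∈ Qc d 1, |pdt (pdt h) p|)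
              + (∑ j, ⨆ p ∈ Qc d 1, |pdx j (pdt h) p|)
              + (∑ j, ∑ k ∈ Finset.univ.filter (fun k : Fin d => k.val ≠ 0),
                  ⨆ p ∈ Qc d 1, |pdxx j k (pdt h) p|)
              + (∑ i, ∑ j, ∑ k ∈ Finset.univ.filter (fun k : Fin d => k.val ≠ 0),
                  ⨆ p ∈ Qc d 1, |pdx i (pdxx j k h) p|)
            ≤ N * Real.sqrt (∫ p in Qc d 3, (h p) ^ 2) := by
  obtain ⟨N, hN, hbound⟩ := stmt9_general (⟨0, by omega⟩ : Fin d) hδ.1 zero_le_one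
    (by norm_num : (1 : ℝ) < 3)
  refine ⟨N, hN, fun a hmeas hsymm hbounds h hsmooth hint heq => le_trans ?_ <|
    hbound a ⟨hmeas, hsymm, hbounds⟩ h <|
      ParabolicInterior.IsL2Solution.mono ⟨hsmooth, hint, heq⟩ (by norm_num) (by norm_num)⟩
  simp only [ne_eq, Fin.ext_iff]
  gcongr with j
  · exact fun k _ _ => Real.iSup_nonneg fun p => Real.iSup_nonneg fun _ => abs_nonneg _
  · exact Finset.filter_subset _ _
end
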